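/- arXiv:1507.00681 — 3 statements merged into one kernel-verified Lean document; each statement's English description precedes it below -/
import Mathlib

section
/- For every integer n ≥ 2 there exist R* > 0 and t₁ ∈ (0, T_{R*}) such that the shooting solution satisfies x_{R*}(t₁) = y_{R*}(t₁), θ_{R*}(t₁) = −5π/4, x_{R*}(t) > y_{R*}(t) > 0 for all t ∈ (0, t₁), and t ↦ (x_{R*}(t), y_{R*}(t)) is injective on [0, t₁]; that is, the geodesic segment starts and ends on the diagonal {x = y}, meets the diagonal orthogonally at both endpoints, and lies strictly below the diagonal in between. -/
/-- The shooting solution of the self-shrinker profile system (with `m = n`) on `[0, T)`: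
`x' = cos θ`, `y' = sin θ`, `θ' = (x/2 − (n−1)/x)·sin θ + ((n−1)/y − y/2)·cos θ`,
with `x, y > 0`, and initial conditions `x 0 = y 0 = R/√2`, `θ 0 = −π/4`. -/
def ShootingSol (n : ℕ) (R T : ℝ) (x y θ : ℝ → ℝ) : Prop :=
  0 < T ∧ x 0 = R / Real.sqrt 2 ∧ y 0 = R / Real.sqrt 2 ∧ θ 0 = -(Real.pi / 4) ∧
  ∀ t ∈ Set.Ico 0 T, 0 < x t ∧ 0 < y t ∧
    HasDerivAt x (Real.cos (θ t)) t ∧ HasDerivAt y (Real.sin (θ t)) t ∧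
    HasDerivAt θ ((x t / 2 - ((n : ℝ) - 1) / x t) * Real.sin (θ t)
      + (((n : ℝ) - 1) / y t - y t / 2) * Real.cos (θ t)) t

set_option linter.unusedSimpArgs false
open Set Filter Topology

noncomputable def Kf (a d s φ : ℝ) : ℝ :=
  Real.sin φ * d * (1/2 + 2*a/(s^2-d^2)) + Real.cos φ * s * (2*a/(s^2-d^2) - 1/2)

noncomputable def clipM (M u : ℝ) : ℝ := max (-M) (min u M)

noncomputable def Kcut (a M η d s φ : ℝ) : ℝ :=
  Real.sin φ * clipM M d * (1/2 + 2*a*(max η (clipM M s^2-clipM M d^2))⁻¹)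
    + Real.cos φ * clipM M s * (2*a*(max η (clipM M s^2-clipM M d^2))⁻¹ - 1/2)

lemma clipM_abs {M u : ℝ} (hM : 0 ≤ M) : |clipM M u| ≤ M := by
  unfold clipM
  rw [abs_le]
  exact ⟨le_max_left _ _, max_le (by linarith) (min_le_right _ _)⟩

lemma clipM_eq {M u : ℝ} (h : |u| ≤ M) : clipM M u = u := by
  unfold clipM
  rw [abs_le] at h
  rw [min_eq_left h.2, max_eq_right h.1]

lemma Kcut_eq {a M η d s φ : ℝ} (hd : |d| ≤ M) (hs : |s| ≤ M) (hq : η ≤ s^2-d^2) :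
    Kcut a M η d s φ = Kf a d s φ := by
  unfold Kcut Kf
  rw [clipM_eq hd, clipM_eq hs, max_eq_right hq, div_eq_mul_inv (2*a)]

lemma Kcut_abs {a M η d s φ : ℝ} (ha : 0 ≤ a) (hM : 0 ≤ M) (hη : 0 < η) :
    |Kcut a M η d s φ| ≤ 2 * M * (1/2 + 2*a/η) := by
  unfold Kcut
  have h1 := clipM_abs (M := M) (u := d) hM
  have h2 := clipM_abs (M := M) (u := s) hM
  set i := (max η (clipM M s^2-clipM M d^2))⁻¹ with hi
  have hi0 : 0 < i := by
    rw [hi]; apply inv_pos.2; exact lt_of_lt_of_le hη (le_max_left _ _)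
  have hi1 : i ≤ η⁻¹ := by
    rw [hi]; exact inv_anti₀ hη (le_max_left _ _)
  have h3 : 2*a*i ≤ 2*a/η := by
    rw [div_eq_mul_inv]; exact mul_le_mul_of_nonneg_left hi1 (by linarith)
  have h4 : 0 ≤ 2*a*i := by positivity
  have hs := Real.abs_sin_le_one φ
  have hc := Real.abs_cos_le_one φ
  have e1 : |1/2+2*a*i| ≤ 1/2+2*a/η := by rw [abs_le]; constructor <;> linarith
  have e2 : |2*a*i-1/2| ≤ 1/2+2*a/η := by rw [abs_le]; constructor <;> linarith
  have e3 : |Real.sin φ * clipM M d * (1/2 + 2*a*i)| ≤ 1 * M * (1/2+2*a/η) := by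
    rw [abs_mul, abs_mul]; gcongr
  have e4 : |Real.cos φ * clipM M s * (2*a*i-1/2)| ≤ 1 * M * (1/2+2*a/η) := by
    rw [abs_mul, abs_mul]; gcongr
  refine (abs_add_le _ _).trans ?_
  linarith

lemma inv_max_lip {η : ℝ} (hη : 0 < η) : LocallyLipschitz (fun u : ℝ => (max η u)⁻¹) := by
  have : LipschitzWith (Real.toNNReal (η⁻¹*η⁻¹)) (fun u : ℝ => (max η u)⁻¹) := by
    apply LipschitzWith.of_dist_le_mul
    intro u v
    rw [Real.coe_toNNReal _ (by positivity), Real.dist_eq, Real.dist_eq]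
    have hu : η ≤ max η u := le_max_left _ _
    have hv : η ≤ max η v := le_max_left _ _
    have hu0 := lt_of_lt_of_le hη hu
    have hv0 := lt_of_lt_of_le hη hv
    rw [inv_sub_inv hu0.ne' hv0.ne', abs_div, div_eq_mul_inv, abs_of_pos (mul_pos hu0 hv0), mul_inv, mul_comm]
    have : |max η v - max η u| ≤ |u - v| := by
      rw [abs_sub_comm]
      have := abs_max_sub_max_le_abs u v η
      rwa [max_comm u, max_comm v] at this
    gcongr
  exact this.locallyLipschitz

lemma clipM_lip (M : ℝ) : LocallyLipschitz (clipM M) := by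
  unfold clipM
  exact LocallyLipschitz.const_max (LocallyLipschitz.min_const LocallyLipschitz.id M) (-M)

lemma Kcut_lip (a M : ℝ) {η : ℝ} (hη : 0 < η) :
    LocallyLipschitz (fun p : ℝ × ℝ × ℝ => ((Real.cos p.2.2, Real.sin p.2.2, Kcut a M η p.1 p.2.1 p.2.2) : ℝ × ℝ × ℝ)) := by
  have h1 : LocallyLipschitz (fun p : ℝ × ℝ × ℝ => p.2.2) := (by fun_prop : ContDiff ℝ 1 (fun p : ℝ × ℝ × ℝ => p.2.2)).locallyLipschitz
  have h2 : LocallyLipschitz (fun p : ℝ × ℝ × ℝ => p.2.1) := (by fun_prop : ContDiff ℝ 1 (fun p : ℝ × ℝ × ℝ => p.2.1)).locallyLipschitz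
  have h3 : LocallyLipschitz (fun p : ℝ × ℝ × ℝ => p.1) := (by fun_prop : ContDiff ℝ 1 (fun p : ℝ × ℝ × ℝ => p.1)).locallyLipschitz
  have hd : LocallyLipschitz (fun p : ℝ × ℝ × ℝ => clipM M p.1) := (clipM_lip M).comp h3
  have hs : LocallyLipschitz (fun p : ℝ × ℝ × ℝ => clipM M p.2.1) := (clipM_lip M).comp h2
  have hds := hd.prodMk hs
  have hq : LocallyLipschitz (fun p : ℝ × ℝ => p.2^2-p.1^2) := (by fun_prop : ContDiff ℝ 1 (fun p : ℝ × ℝ => p.2^2-p.1^2)).locallyLipschitz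
  have hi : LocallyLipschitz (fun p : ℝ × ℝ × ℝ => (max η (clipM M p.2.1^2-clipM M p.1^2))⁻¹) :=
    (inv_max_lip hη).comp (hq.comp hds)
  have h4 := hd.prodMk (hs.prodMk (hi.prodMk h1))
  have hF : LocallyLipschitz (fun p : ℝ × ℝ × ℝ × ℝ => ((Real.cos p.2.2.2, Real.sin p.2.2.2,
     Real.sin p.2.2.2 * p.1 * (1/2 + 2*a*p.2.2.1) + Real.cos p.2.2.2 * p.2.1 * (2*a*p.2.2.1 - 1/2)) : ℝ × ℝ × ℝ)) := by
    apply ContDiff.locallyLipschitz (𝕂 := ℝ)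
    fun_prop
  have h5 := hF.comp h4
  simp only [Function.comp_def] at h5
  unfold Kcut
  exact h5

theorem flow_exists (a M η T : ℝ) (ha : 0 ≤ a) (hM : 0 < M) (hη : 0 < η) (hT : 0 < T) :
    ∃ d s φ : ℝ → ℝ → ℝ, (∀ s0 ∈ Icc 0 M, d s0 0 = 0 ∧ s s0 0 = s0 ∧ φ s0 0 = 0 ∧
      ∀ t ∈ Ioo (-T) T, HasDerivAt (d s0) (Real.cos (φ s0 t)) t ∧ HasDerivAt (s s0) (Real.sin (φ s0 t)) t ∧
        HasDerivAt (φ s0) (Kcut a M η (d s0 t) (s s0 t) (φ s0 t)) t) ∧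
      ContinuousOn (fun p : ℝ × ℝ => d p.1 p.2) (Icc 0 M ×ˢ Icc (-T) T) ∧
      ContinuousOn (fun p : ℝ × ℝ => s p.1 p.2) (Icc 0 M ×ˢ Icc (-T) T) ∧
      ContinuousOn (fun p : ℝ × ℝ => φ p.1 p.2) (Icc 0 M ×ˢ Icc (-T) T) := by
  set f : ℝ × ℝ × ℝ → ℝ × ℝ × ℝ := fun p : ℝ × ℝ × ℝ => ((Real.cos p.2.2, Real.sin p.2.2, Kcut a M η p.1 p.2.1 p.2.2) : ℝ × ℝ × ℝ) with hf
  set B : ℝ := 1 + 2 * M * (1/2 + 2*a/η) with hB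
  have hB0 : 0 ≤ B := by positivity
  have hbd : ∀ p, ‖f p‖ ≤ B := by
    intro p
    have h1 := Kcut_abs (d := p.1) (s := p.2.1) (φ := p.2.2) ha hM.le hη
    have h2 := Real.abs_sin_le_one p.2.2
    have h3 := Real.abs_cos_le_one p.2.2
    have h4 : 0 ≤ 2 * M * (1/2 + 2*a/η) := by positivity
    simp only [hf, Prod.norm_def, Real.norm_eq_abs]
    refine max_le (by linarith) (max_le (by linarith) (by linarith))
  set A : ℝ := M + B * T with hA
  have hA0 : 0 ≤ A := by positivity
  obtain ⟨K, hK⟩ := (((Kcut_lip a M hη).locallyLipschitzOn (s := Metric.closedBall 0 A))).exists_lipschitzOnWith_of_compact (isCompact_closedBall _ _)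
  have h0 : (0:ℝ) ∈ Icc (-T) T := ⟨by linarith, hT.le⟩
  have PL : IsPicardLindelof (fun _ : ℝ => f) (⟨0, h0⟩ : Icc (-T) T) 0 ⟨A, hA0⟩ ⟨M, hM.le⟩ ⟨B, hB0⟩ K := by
    refine ⟨fun t _ => hK, fun x _ => continuousOn_const, fun t _ x _ => hbd x, ?_⟩
    change B * max (T - 0) (0 - -T) ≤ A - M
    simp only [sub_zero, zero_sub, neg_neg, max_self]
    linarith
  obtain ⟨α, hα, hc⟩ := PL.exists_forall_mem_closedBall_eq_hasDerivWithinAt_continuousOn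
  have hmem : ∀ s0 ∈ Icc 0 M, ((0, s0, 0) : ℝ × ℝ × ℝ) ∈ Metric.closedBall (0 : ℝ × ℝ × ℝ) ((⟨M, hM.le⟩ : NNReal) : ℝ) := by
    intro s0 hs
    rw [mem_closedBall_zero_iff]
    simp only [Prod.norm_def, Real.norm_eq_abs, abs_zero]
    rw [abs_of_nonneg hs.1]
    exact max_le hM.le (max_le hs.2 hM.le)
  have hcc : ContinuousOn (fun p : ℝ × ℝ => α ((0, p.1, 0), p.2)) (Icc 0 M ×ˢ Icc (-T) T) := by
    apply hc.comp (f := fun p : ℝ × ℝ => (((0, p.1, 0) : ℝ × ℝ × ℝ), p.2))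
    · fun_prop
    · rintro ⟨s0, t⟩ ⟨h1, h2⟩
      exact ⟨hmem s0 h1, h2⟩
  refine ⟨fun s0 t => (α ((0, s0, 0), t)).1, fun s0 t => (α ((0, s0, 0), t)).2.1, fun s0 t => (α ((0, s0, 0), t)).2.2, ?_, ?_, ?_, ?_⟩
  · intro s0 hs
    obtain ⟨e1, e2⟩ := hα _ (hmem s0 hs)
    simp only at e1
    refine ⟨congrArg (fun p => p.1) e1, congrArg (fun p => p.2.1) e1, congrArg (fun p => p.2.2) e1, ?_⟩
    intro t ht
    have h := (e2 t (Ioo_subset_Icc_self ht)).hasDerivAt (Icc_mem_nhds ht.1 ht.2)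
    have h1 := h.fst
    have h2 := h.snd
    exact ⟨h1, h2.fst, h2.snd⟩
  · exact hcc.fst
  · exact hcc.snd.fst
  · exact hcc.snd.snd

lemma anti_of_deriv {f f' : ℝ → ℝ} {u v : ℝ} (huv : u ≤ v)
    (h : ∀ t ∈ Icc u v, HasDerivAt f (f' t) t) (h' : ∀ t ∈ Ioo u v, f' t ≤ 0) : f v ≤ f u := by
  have hA : AntitoneOn f (Icc u v) := by
    apply antitoneOn_of_deriv_nonpos (convex_Icc u v)
    · exact fun t ht => (h t ht).continuousAt.continuousWithinAt
    · intro t ht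
      rw [interior_Icc] at ht
      exact (h t (Ioo_subset_Icc_self ht)).differentiableAt.differentiableWithinAt
    · intro t ht
      rw [interior_Icc] at ht
      rw [(h t (Ioo_subset_Icc_self ht)).deriv]
      exact h' t ht
  exact hA ⟨le_rfl, huv⟩ ⟨huv, le_rfl⟩ huv

lemma mono_of_deriv {f f' : ℝ → ℝ} {u v : ℝ} (huv : u ≤ v)
    (h : ∀ t ∈ Icc u v, HasDerivAt f (f' t) t) (h' : ∀ t ∈ Ioo u v, 0 ≤ f' t) : f u ≤ f v := by
  have := anti_of_deriv (f := fun t => - f t) (f' := fun t => - f' t) huv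
    (fun t ht => (h t ht).neg) (fun t ht => by have := h' t ht; linarith)
  linarith

lemma strict_mono_of_deriv {f f' : ℝ → ℝ} {u v : ℝ} (huv : u < v)
    (h : ∀ t ∈ Icc u v, HasDerivAt f (f' t) t) (h' : ∀ t ∈ Ioo u v, 0 < f' t) : f u < f v := by
  have hA : StrictMonoOn f (Icc u v) := by
    apply strictMonoOn_of_deriv_pos (convex_Icc u v)
    · exact fun t ht => (h t ht).continuousAt.continuousWithinAt
    · intro t ht
      rw [interior_Icc] at ht
      rw [(h t (Ioo_subset_Icc_self ht)).deriv]
      exact h' t ht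
  exact hA ⟨le_rfl, huv.le⟩ ⟨huv.le, le_rfl⟩ huv

lemma strict_anti_of_deriv {f f' : ℝ → ℝ} {u v : ℝ} (huv : u < v)
    (h : ∀ t ∈ Icc u v, HasDerivAt f (f' t) t) (h' : ∀ t ∈ Ioo u v, f' t < 0) : f v < f u := by
  have := strict_mono_of_deriv (f := fun t => - f t) (f' := fun t => - f' t) huv
    (fun t ht => (h t ht).neg) (fun t ht => by have := h' t ht; linarith)
  linarith

/-- first zero -/
lemma first_zero {f : ℝ → ℝ} {u v : ℝ} (hc : ContinuousOn f (Icc u v)) (hu : 0 < f u)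
    (hv : ∃ t ∈ Icc u v, f t ≤ 0) :
    ∃ τ ∈ Ioc u v, f τ = 0 ∧ ∀ t ∈ Ico u τ, 0 < f t := by
  obtain ⟨t1, ht1, hf1⟩ := hv
  have hK : IsCompact (Icc u v ∩ f ⁻¹' Iic 0) :=
    isCompact_Icc.of_isClosed_subset (hc.preimage_isClosed_of_isClosed isClosed_Icc isClosed_Iic) inter_subset_left
  obtain ⟨τ, ⟨hτ, hfτ⟩, hmin⟩ := hK.exists_isLeast ⟨t1, ht1, hf1⟩
  have hpos : ∀ t ∈ Ico u τ, 0 < f t := by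
    intro t ht
    by_contra hcon
    have := hmin ⟨⟨ht.1, ht.2.le.trans hτ.2⟩, not_lt.1 hcon⟩
    linarith [ht.2]
  have huτ : u < τ := by
    rcases hτ.1.lt_or_eq with h | h
    · exact h
    · subst h; exact absurd hfτ (not_le.2 hu)
  refine ⟨τ, ⟨huτ, hτ.2⟩, ?_, hpos⟩
  apply le_antisymm hfτ
  by_contra hcon
  push Not at hcon
  have hc' : ContinuousOn f (Icc u τ) := hc.mono (Icc_subset_Icc_right hτ.2)
  have := intermediate_value_Icc' huτ.le hc'
  obtain ⟨t, ht, hft⟩ := this (⟨by linarith, by linarith⟩ : f τ / 2 ∈ Icc (f τ) (f u))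
  have htτ : t ≠ τ := by rintro rfl; linarith
  have := hpos t ⟨ht.1, lt_of_le_of_ne ht.2 htτ⟩
  linarith

lemma deriv_nonpos_of_pos_left {f : ℝ → ℝ} {c u τ : ℝ} (huτ : u < τ)
    (hpos : ∀ t ∈ Ioo u τ, 0 ≤ f t) (h0 : f τ = 0) (hd : HasDerivAt f c τ) : c ≤ 0 := by
  by_contra hcon
  push Not at hcon
  have h1 := (hasDerivAt_iff_tendsto_slope.1 hd).eventually (lt_mem_nhds hcon)
  have h2 : ∀ᶠ t in 𝓝[<] τ, 0 < slope f τ t := h1.filter_mono (nhdsWithin_mono _ (fun t ht => ne_of_lt ht))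
  have h3 : ∀ᶠ t in 𝓝[<] τ, t ∈ Ioo u τ := Ioo_mem_nhdsLT huτ
  obtain ⟨t, ht, ht'⟩ := (h2.and h3).exists
  rw [slope_def_field, h0, sub_zero] at ht
  have := hpos t ht'
  have h4 : f t / (t - τ) ≤ 0 := div_nonpos_of_nonneg_of_nonpos this (by linarith [ht'.2])
  linarith

structure Traj (a s0 : ℝ) (d s φ : ℝ → ℝ) (T : ℝ) : Prop where
  T0 : 0 ≤ T
  d0 : d 0 = 0
  s00 : s 0 = s0
  φ0 : φ 0 = 0
  hd : ∀ t ∈ Icc 0 T, HasDerivAt d (Real.cos (φ t)) t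
  hs : ∀ t ∈ Icc 0 T, HasDerivAt s (Real.sin (φ t)) t
  hφ : ∀ t ∈ Icc 0 T, HasDerivAt φ (Kf a (d t) (s t) (φ t)) t
  sp : ∀ t ∈ Icc 0 T, 0 < s t
  qp : ∀ t ∈ Icc 0 T, 0 < s t ^ 2 - d t ^ 2

lemma Traj.mono {a s0 : ℝ} {d s φ : ℝ → ℝ} {T T' : ℝ} (h : Traj a s0 d s φ T) (h0 : 0 ≤ T') (h1 : T' ≤ T) :
    Traj a s0 d s φ T' := by
  have hh : ∀ t ∈ Icc 0 T', t ∈ Icc 0 T := fun t ht => ⟨ht.1, ht.2.trans h1⟩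
  exact ⟨h0, h.d0, h.s00, h.φ0, fun t ht => h.hd t (hh t ht), fun t ht => h.hs t (hh t ht),
    fun t ht => h.hφ t (hh t ht), fun t ht => h.sp t (hh t ht), fun t ht => h.qp t (hh t ht)⟩

noncomputable def wt (a d s : ℝ) : ℝ := Real.exp (a * Real.log (s^2-d^2) - (s^2+d^2)/4)

lemma wt_pos (a d s : ℝ) : 0 < wt a d s := Real.exp_pos _

section derivs
variable {a s0 : ℝ} {d s φ : ℝ → ℝ} {T : ℝ}

lemma Traj.wt_deriv (h : Traj a s0 d s φ T) {t : ℝ} (ht : t ∈ Icc 0 T) :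
    HasDerivAt (fun t => wt a (d t) (s t)) (wt a (d t) (s t) *
      (Real.sin (φ t) * s t * (2*a/(s t^2-d t^2) - 1/2) - Real.cos (φ t) * d t * (2*a/(s t^2-d t^2) + 1/2))) t := by
  have hd := h.hd t ht
  have hs := h.hs t ht
  have hq := h.qp t ht
  have h1 : HasDerivAt (fun t => s t^2 - d t^2) (2*s t * Real.sin (φ t) - 2*d t*Real.cos (φ t)) t := by
    refine HasDerivAt.congr_deriv ((hs.pow 2).sub (hd.pow 2)) ?_
    push_cast; ring
  have h2 := (((h1.log hq.ne').const_mul a).sub ((((hs.pow 2).add (hd.pow 2))).div_const 4)).exp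
  unfold wt
  refine HasDerivAt.congr_deriv (h2) ?_
  change Real.exp (a * Real.log (s t^2-d t^2) - (s t^2+d t^2)/4) * _ = _
  congr 1
  push_cast
  field_simp
  ring

lemma Traj.sin_deriv (h : Traj a s0 d s φ T) {t : ℝ} (ht : t ∈ Icc 0 T) :
    HasDerivAt (fun t => Real.sin (φ t)) (Real.cos (φ t) * Kf a (d t) (s t) (φ t)) t := (h.hφ t ht).sin

lemma Traj.cos_deriv (h : Traj a s0 d s φ T) {t : ℝ} (ht : t ∈ Icc 0 T) :
    HasDerivAt (fun t => Real.cos (φ t)) (-Real.sin (φ t) * Kf a (d t) (s t) (φ t)) t := (h.hφ t ht).cos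

lemma Traj.wC_deriv (h : Traj a s0 d s φ T) {t : ℝ} (ht : t ∈ Icc 0 T) :
    HasDerivAt (fun t => wt a (d t) (s t) * Real.cos (φ t))
      (- (wt a (d t) (s t) * (d t * (1/2 + 2*a/(s t^2-d t^2))))) t := by
  refine HasDerivAt.congr_deriv ((h.wt_deriv ht).mul (h.cos_deriv ht)) ?_
  have hh := Real.sin_sq_add_cos_sq (φ t)
  unfold Kf
  try simp only [Pi.mul_apply, Pi.pow_apply, Pi.add_apply, Pi.sub_apply]
  linear_combination -(wt a (d t) (s t) * (d t * (1/2 + 2*a/(s t^2-d t^2)))) * hh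

lemma Traj.wS_deriv (h : Traj a s0 d s φ T) {t : ℝ} (ht : t ∈ Icc 0 T) :
    HasDerivAt (fun t => wt a (d t) (s t) * Real.sin (φ t))
      (wt a (d t) (s t) * (s t * (2*a/(s t^2-d t^2) - 1/2))) t := by
  refine HasDerivAt.congr_deriv ((h.wt_deriv ht).mul (h.sin_deriv ht)) ?_
  have hh := Real.sin_sq_add_cos_sq (φ t)
  unfold Kf
  try simp only [Pi.mul_apply, Pi.pow_apply, Pi.add_apply, Pi.sub_apply]
  linear_combination ((wt a (d t) (s t) * (s t * (2*a/(s t^2-d t^2) - 1/2)))) * hh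

/-- G = w (s C - d S) -/
lemma Traj.G_deriv (h : Traj a s0 d s φ T) {t : ℝ} (ht : t ∈ Icc 0 T) :
    HasDerivAt (fun t => s t * (wt a (d t) (s t) * Real.cos (φ t)) - d t * (wt a (d t) (s t) * Real.sin (φ t)))
      (- (wt a (d t) (s t) * (s t * d t * (4*a/(s t^2-d t^2))))) t := by
  refine HasDerivAt.congr_deriv (((h.hs t ht).mul (h.wC_deriv ht)).sub ((h.hd t ht).mul (h.wS_deriv ht))) ?_
  try simp only [Pi.mul_apply, Pi.pow_apply, Pi.add_apply, Pi.sub_apply]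
  ring

/-- H = w (s S + d C) = w rho'/2 -/
lemma Traj.H_deriv (h : Traj a s0 d s φ T) {t : ℝ} (ht : t ∈ Icc 0 T) :
    HasDerivAt (fun t => s t * (wt a (d t) (s t) * Real.sin (φ t)) + d t * (wt a (d t) (s t) * Real.cos (φ t)))
      (- (wt a (d t) (s t) * (s t^2 + d t^2 - 4*a - 2)/2)) t := by
  refine HasDerivAt.congr_deriv (((h.hs t ht).mul (h.wS_deriv ht)).add ((h.hd t ht).mul (h.wC_deriv ht))) ?_
  have hh := Real.sin_sq_add_cos_sq (φ t)
  have hm : 2*a/(s t^2-d t^2) * (s t^2-d t^2) = 2*a := div_mul_cancel₀ _ (h.qp t ht).ne'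
  try simp only [Pi.mul_apply, Pi.pow_apply, Pi.add_apply, Pi.sub_apply]
  linear_combination (wt a (d t) (s t)) * hh + wt a (d t) (s t) * hm

lemma Traj.rho_deriv (h : Traj a s0 d s φ T) {t : ℝ} (ht : t ∈ Icc 0 T) :
    HasDerivAt (fun t => s t^2 + d t^2 - 4*a - 2) (2*(s t * Real.sin (φ t) + d t * Real.cos (φ t))) t := by
  refine HasDerivAt.congr_deriv (((((h.hs t ht).pow 2).add ((h.hd t ht).pow 2)).sub_const (4*a)).sub_const 2) ?_
  push_cast; ring

lemma Traj.q_deriv (h : Traj a s0 d s φ T) {t : ℝ} (ht : t ∈ Icc 0 T) :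
    HasDerivAt (fun t => s t^2 - d t^2) (2*(s t * Real.sin (φ t) - d t * Real.cos (φ t))) t := by
  refine HasDerivAt.congr_deriv (((h.hs t ht).pow 2).sub ((h.hd t ht).pow 2)) ?_
  push_cast; ring

/-- WE = (1-d²/2) 2 H + rho d (wC) -/
lemma Traj.WE_deriv (h : Traj a s0 d s φ T) {t : ℝ} (ht : t ∈ Icc 0 T) :
    HasDerivAt (fun t => (1 - d t^2/2) * (2*(s t * (wt a (d t) (s t) * Real.sin (φ t)) + d t * (wt a (d t) (s t) * Real.cos (φ t))))
       + (s t^2 + d t^2 - 4*a - 2) * (d t * (wt a (d t) (s t) * Real.cos (φ t))))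
      (- (wt a (d t) (s t) * (s t^2 + d t^2 - 4*a - 2) * (Real.sin (φ t)^2 + 2*a/(s t^2-d t^2) * d t^2))) t := by
  refine HasDerivAt.congr_deriv ((((((h.hd t ht).pow 2).div_const 2).const_sub 1).mul ((h.H_deriv ht).const_mul 2)).add
    ((h.rho_deriv ht).mul ((h.hd t ht).mul (h.wC_deriv ht)))) ?_
  have hh := Real.sin_sq_add_cos_sq (φ t)
  push_cast
  try simp only [Pi.mul_apply, Pi.pow_apply, Pi.add_apply, Pi.sub_apply]
  linear_combination ((wt a (d t) (s t) * (s t^2 + d t^2 - 4*a - 2))) * hh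

/-- WF = 2ds·2H - rho·2(Cs+dS) w -/
lemma Traj.WF_deriv (h : Traj a s0 d s φ T) {t : ℝ} (ht : t ∈ Icc 0 T) :
    HasDerivAt (fun t => (2 * d t * s t) * (2*(s t * (wt a (d t) (s t) * Real.sin (φ t)) + d t * (wt a (d t) (s t) * Real.cos (φ t))))
       - (s t^2 + d t^2 - 4*a - 2) * (2*(s t * (wt a (d t) (s t) * Real.cos (φ t)) + d t * (wt a (d t) (s t) * Real.sin (φ t)))))
      (- (4 * wt a (d t) (s t) * (s t^2 + d t^2 - 4*a - 2) * (Real.sin (φ t) * Real.cos (φ t)))) t := by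
  refine HasDerivAt.congr_deriv (((((h.hd t ht).const_mul 2).mul (h.hs t ht)).mul ((h.H_deriv ht).const_mul 2)).sub
    ((h.rho_deriv ht).mul ((((h.hs t ht).mul (h.wC_deriv ht)).add ((h.hd t ht).mul (h.wS_deriv ht))).const_mul 2))) ?_
  try simp only [Pi.mul_apply, Pi.pow_apply, Pi.add_apply, Pi.sub_apply]
  ring

/-- g = S² + 2a d²/q -/
lemma Traj.g_deriv (h : Traj a s0 d s φ T) {t : ℝ} (ht : t ∈ Icc 0 T) :
    HasDerivAt (fun t => Real.sin (φ t)^2 + 2*a/(s t^2-d t^2) * d t^2)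
      (2 * Real.sin (φ t) * Real.cos (φ t) * Kf a (d t) (s t) (φ t)
        + 4*a*d t*s t*(s t*Real.cos (φ t) - d t*Real.sin (φ t))/(s t^2-d t^2)^2) t := by
  have hq := h.qp t ht
  refine HasDerivAt.congr_deriv (((h.sin_deriv ht).pow 2).add ((((hasDerivAt_const t (2*a)).div (h.q_deriv ht) hq.ne')).mul ((h.hd t ht).pow 2))) ?_
  simp only [Pi.div_apply, Pi.pow_apply]
  push_cast
  field_simp
  try simp only [Pi.mul_apply, Pi.pow_apply, Pi.add_apply, Pi.sub_apply]
  ring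
end derivs

lemma alg_L1 {a D S C σ q m : ℝ} (hD : 0 < D) (hS : 0 < S) (hC : 0 < C) (ha : 0 < a)
    (hq : q = S^2 - D^2) (hq0 : 0 < q) (hm : m*q = 2*a) (hsc : σ^2 + C^2 = 1) (hσ : 0 < σ)
    (hk : σ*D*(1/2+m) + C*S*(m-1/2) = 0)
    (hI : (1 - D^2/2 - (σ^2 + m*D^2)) * (2*(S*σ+D*C)) + (S^2+D^2-4*a-2)*(D*C) ≤ 0) : False := by
  have e1 : σ*D*(q+4*a) = C*S*(q-4*a) := by
    linear_combination (2*q)*hk - (2*σ*D+2*C*S)*hm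
  have hP : 0 < q + 4*a := by linarith
  obtain ⟨l, hl⟩ : ∃ l, l = C/(D*(q+4*a)) := ⟨_, rfl⟩
  have hl0 : 0 < l := by rw [hl]; positivity
  have hCl : C = l*D*(q+4*a) := by rw [hl]; field_simp
  have hσl : σ = l*S*(q-4*a) := by
    have : D*(q+4*a) * σ = D*(q+4*a) * (l*S*(q-4*a)) := by
      rw [hCl] at e1; linear_combination e1
    exact mul_left_cancel₀ (by positivity) this
  have hq4 : 0 < q - 4*a := by
    by_contra hcon
    push Not at hcon
    have : σ ≤ 0 := by
      rw [hσl]; exact mul_nonpos_of_nonneg_of_nonpos (by positivity) hcon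
    linarith
  have h1 : l^2*(S^2*(q-4*a)^2 + D^2*(q+4*a)^2) = 1 := by
    rw [hCl, hσl] at hsc; linear_combination hsc
  -- expression
  have h2 : (1 - D^2/2 - (σ^2 + m*D^2)) * (2*(S*σ+D*C)) + (S^2+D^2-4*a-2)*(D*C)
      = l*D^2*(q+4*a)*(2*q*(S^2+D^2-4*a)*l^2*(q+4*a) - 2) := by
    have h3 : S*σ+D*C = l*q*(S^2+D^2-4*a) := by
      rw [hσl, hCl]; linear_combination (4*a*l)*hq
    have h4 : 1 - D^2/2 - (σ^2 + m*D^2) = C^2 - D^2/2 - m*D^2 := by linear_combination -hsc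
    rw [h3, h4, hCl]
    linear_combination (-2*D^2*l*(S^2+D^2-4*a))*hm
  rw [h2] at hI
  have h5 : 0 < l*D^2*(q+4*a) := by positivity
  have h6 : 2*q*(S^2+D^2-4*a)*l^2*(q+4*a) - 2 ≤ 0 := by
    by_contra hcon
    push Not at hcon
    have := mul_pos h5 hcon
    linarith
  have h7 : q*(S^2+D^2-4*a)*(q+4*a) - (S^2*(q-4*a)^2 + D^2*(q+4*a)^2) = 8*a*S^2*(q-4*a) := by
    rw [hq]; ring
  have h8 : 0 < l^2*(8*a*S^2*(q-4*a)) := by positivity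
  have h9 : 2*q*(S^2+D^2-4*a)*l^2*(q+4*a) - 2 = 2*(l^2*(8*a*S^2*(q-4*a))) := by
    linear_combination (2*l^2)*h7 + 2*h1
  linarith

section
variable {a s0 : ℝ} {d s φ : ℝ → ℝ} {T : ℝ}

lemma Traj.cd (h : Traj a s0 d s φ T) : ContinuousOn d (Icc 0 T) :=
  fun t ht => (h.hd t ht).continuousAt.continuousWithinAt
lemma Traj.cs (h : Traj a s0 d s φ T) : ContinuousOn s (Icc 0 T) :=
  fun t ht => (h.hs t ht).continuousAt.continuousWithinAt
lemma Traj.cφ (h : Traj a s0 d s φ T) : ContinuousOn φ (Icc 0 T) :=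
  fun t ht => (h.hφ t ht).continuousAt.continuousWithinAt

lemma Traj.ck (h : Traj a s0 d s φ T) : ContinuousOn (fun t => Kf a (d t) (s t) (φ t)) (Icc 0 T) := by
  have h1 := h.cd
  have h2 := h.cs
  have h3 := h.cφ
  unfold Kf
  have h4 : ContinuousOn (fun t => 2*a/(s t^2-d t^2)) (Icc 0 T) :=
    ContinuousOn.div continuousOn_const ((h2.pow 2).sub (h1.pow 2)) (fun t ht => (h.qp t ht).ne')
  have h5 : ContinuousOn (fun t => Real.sin (φ t)) (Icc 0 T) := Real.continuous_sin.comp_continuousOn h3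
  have h6 : ContinuousOn (fun t => Real.cos (φ t)) (Icc 0 T) := Real.continuous_cos.comp_continuousOn h3
  fun_prop

lemma Traj.s0p (h : Traj a s0 d s φ T) : 0 < s0 := by
  have := h.sp 0 ⟨le_rfl, h.T0⟩
  rwa [h.s00] at this

lemma Traj.k0 (h : Traj a s0 d s φ T) (hs0 : s0^2 < 4*a) : 0 < Kf a (d 0) (s 0) (φ 0) := by
  have hp := h.s0p
  rw [h.d0, h.s00, h.φ0]
  unfold Kf
  simp only [Real.sin_zero, Real.cos_zero]
  have : 1/2 < 2*a/(s0^2-0^2) := by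
    rw [lt_div_iff₀ (by nlinarith)]; linarith
  have := mul_pos hp (sub_pos.2 this)
  linarith

theorem Traj.k_pos (h : Traj a s0 d s φ T) (ha : 0 < a) (hs0 : s0^2 < 4*a)
    (hdp : ∀ t ∈ Ioc 0 T, 0 < d t) (hφ2 : ∀ t ∈ Icc 0 T, φ t < Real.pi/2) :
    ∀ t ∈ Icc 0 T, 0 < Kf a (d t) (s t) (φ t) := by
  by_contra hcon
  push Not at hcon
  obtain ⟨τ, hτ, hkτ, hkp⟩ := first_zero h.ck (h.k0 hs0) hcon
  have hsub : ∀ t ∈ Icc 0 τ, t ∈ Icc 0 T := fun t ht => ⟨ht.1, ht.2.trans hτ.2⟩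
  have hφp : ∀ t ∈ Ioc 0 τ, 0 < φ t := by
    intro t ht
    have := strict_mono_of_deriv (f := φ) ht.1 (fun r hr => h.hφ r (hsub r ⟨hr.1, hr.2.trans ht.2⟩))
      (fun r hr => hkp r ⟨hr.1.le, hr.2.trans_le ht.2⟩)
    rwa [h.φ0] at this
  have hφ0 : ∀ t ∈ Icc 0 τ, 0 ≤ φ t := by
    intro t ht
    rcases ht.1.eq_or_lt with e | e
    · rw [← e, h.φ0]
    · exact (hφp t ⟨e, ht.2⟩).le
  have hσ0 : ∀ t ∈ Icc 0 τ, 0 ≤ Real.sin (φ t) := fun t ht =>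
    Real.sin_nonneg_of_nonneg_of_le_pi (hφ0 t ht) (by linarith [hφ2 t (hsub t ht), Real.pi_pos])
  have hC0 : ∀ t ∈ Icc 0 τ, 0 < Real.cos (φ t) := fun t ht =>
    Real.cos_pos_of_mem_Ioo ⟨by linarith [hφ0 t ht, Real.pi_pos], hφ2 t (hsub t ht)⟩
  have hd0 : ∀ t ∈ Icc 0 τ, 0 ≤ d t := by
    intro t ht
    rcases ht.1.eq_or_lt with e | e
    · rw [← e, h.d0]
    · exact (hdp t ⟨e, ht.2.trans hτ.2⟩).le
  have hττ : τ ∈ Icc 0 τ := ⟨hτ.1.le, le_rfl⟩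
  have h0τ : (0:ℝ) ∈ Icc 0 τ := ⟨le_rfl, hτ.1.le⟩
  have hσ : 0 < Real.sin (φ τ) := Real.sin_pos_of_pos_of_lt_pi (hφp τ ⟨hτ.1, le_rfl⟩)
    (by linarith [hφ2 τ (hsub τ hττ), Real.pi_pos])
  have hC := hC0 τ hττ
  have hD := hdp τ ⟨hτ.1, hτ.2⟩
  have hS := h.sp τ (hsub τ hττ)
  have hq := h.qp τ (hsub τ hττ)
  have hmq : 2*a/(s τ^2-d τ^2) * (s τ^2-d τ^2) = 2*a := div_mul_cancel₀ _ hq.ne'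
  have hmp : 0 < 2*a/(s τ^2-d τ^2) := by positivity
  have hk : Real.sin (φ τ) * d τ * (1/2 + 2*a/(s τ^2-d τ^2)) + Real.cos (φ τ) * s τ * (2*a/(s τ^2-d τ^2) - 1/2) = 0 := hkτ
  have hm2 : 2*a/(s τ^2-d τ^2) - 1/2 < 0 := by
    by_contra hc
    push Not at hc
    have h1 : 0 ≤ Real.cos (φ τ) * s τ * (2*a/(s τ^2-d τ^2) - 1/2) := by positivity
    have h2 : 0 < Real.sin (φ τ) * d τ * (1/2 + 2*a/(s τ^2-d τ^2)) := by positivity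
    linarith
  have hGτ : 0 < s τ * Real.cos (φ τ) - d τ * Real.sin (φ τ) := by
    by_contra hc
    push Not at hc
    have h1 := mul_nonneg_of_nonpos_of_nonpos hc hm2.le
    have h2 : 0 < Real.sin (φ τ) * d τ * (2*(2*a/(s τ^2-d τ^2))) := by positivity
    nlinarith
  have hGp : ∀ t ∈ Icc 0 τ, 0 < s t * Real.cos (φ t) - d t * Real.sin (φ t) := by
    intro t ht
    have := anti_of_deriv (f := fun t => s t * (wt a (d t) (s t) * Real.cos (φ t)) - d t * (wt a (d t) (s t) * Real.sin (φ t)))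
      ht.2 (fun r hr => h.G_deriv (hsub r ⟨ht.1.trans hr.1, hr.2⟩)) (fun r hr => by
        have hr' : r ∈ Icc 0 τ := ⟨ht.1.trans hr.1.le, hr.2.le⟩
        have := h.qp r (hsub r hr')
        have := h.sp r (hsub r hr')
        have := hd0 r hr'
        have := wt_pos a (d r) (s r)
        rw [neg_nonpos]
        positivity)
    have hw := mul_pos (wt_pos a (d τ) (s τ)) hGτ
    by_contra hc
    push Not at hc
    have h1 := mul_nonpos_of_nonneg_of_nonpos (wt_pos a (d t) (s t)).le hc
    nlinarith
  have hgm : ∀ t1 ∈ Icc 0 τ, ∀ t2 ∈ Icc 0 τ, t1 ≤ t2 →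
      Real.sin (φ t1)^2 + 2*a/(s t1^2-d t1^2) * d t1^2 ≤ Real.sin (φ t2)^2 + 2*a/(s t2^2-d t2^2) * d t2^2 := by
    intro t1 ht1 t2 ht2 h12
    refine mono_of_deriv (f := fun t => Real.sin (φ t)^2 + 2*a/(s t^2-d t^2) * d t^2) h12
      (fun r hr => h.g_deriv (hsub r ⟨ht1.1.trans hr.1, hr.2.trans ht2.2⟩)) ?_
    intro r hr
    have hr' : r ∈ Icc 0 τ := ⟨ht1.1.trans hr.1.le, hr.2.le.trans ht2.2⟩
    have := h.qp r (hsub r hr')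
    have := h.sp r (hsub r hr')
    have := hd0 r hr'
    have := hσ0 r hr'
    have := hC0 r hr'
    have := hGp r hr'
    have := hkp r ⟨hr'.1, hr.2.trans_le ht2.2⟩
    positivity
  have hρm : ∀ t1 ∈ Icc 0 τ, ∀ t2 ∈ Icc 0 τ, t1 ≤ t2 →
      s t1^2 + d t1^2 - 4*a - 2 ≤ s t2^2 + d t2^2 - 4*a - 2 := by
    intro t1 ht1 t2 ht2 h12
    refine mono_of_deriv (f := fun t => s t^2 + d t^2 - 4*a - 2) h12
      (fun r hr => h.rho_deriv (hsub r ⟨ht1.1.trans hr.1, hr.2.trans ht2.2⟩)) ?_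
    intro r hr
    have hr' : r ∈ Icc 0 τ := ⟨ht1.1.trans hr.1.le, hr.2.le.trans ht2.2⟩
    have := h.sp r (hsub r hr')
    have := hd0 r hr'
    have := hσ0 r hr'
    have := hC0 r hr'
    positivity
  obtain ⟨γ, hγ, hγt⟩ : ∃ γ, γ ≤ Real.sin (φ τ)^2 + 2*a/(s τ^2-d τ^2) * d τ^2 ∧ ∀ t ∈ Icc 0 τ,
      0 ≤ (s t^2 + d t^2 - 4*a - 2) * (Real.sin (φ t)^2 + 2*a/(s t^2-d t^2) * d t^2 - γ) := by
    rcases le_or_gt (s τ^2 + d τ^2 - 4*a - 2) 0 with hc | hc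
    · refine ⟨_, le_rfl, fun t ht => ?_⟩
      have h1 := hρm t ht τ hττ ht.2
      have h2 := hgm t ht τ hττ ht.2
      exact mul_nonneg_of_nonpos_of_nonpos (by linarith) (by linarith)
    · have hcont : ContinuousOn (fun t => s t^2 + d t^2 - 4*a - 2) (Icc 0 τ) :=
        fun t ht => (h.rho_deriv (hsub t ht)).continuousAt.continuousWithinAt
      obtain ⟨t0, ht0, hz⟩ := intermediate_value_Icc hτ.1.le hcont
        (⟨by simp only [h.d0, h.s00]; nlinarith, hc.le⟩ : (0:ℝ) ∈ Icc _ _)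
      simp only at hz
      refine ⟨_, hgm t0 ht0 τ hττ ht0.2, fun t ht => ?_⟩
      rcases le_total t t0 with h1 | h1
      · have h2 := hρm t ht t0 ht0 h1
        have h3 := hgm t ht t0 ht0 h1
        exact mul_nonneg_of_nonpos_of_nonpos (by linarith) (by linarith)
      · have h2 := hρm t0 ht0 t ht h1
        have h3 := hgm t0 ht0 t ht h1
        exact mul_nonneg (by linarith) (by linarith)
  have hY := anti_of_deriv hτ.1.le (fun r hr => (h.WE_deriv (hsub r hr)).sub
      (((h.H_deriv (hsub r hr)).const_mul 2).const_mul γ)) (fun r hr => by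
        have h1 := hγt r ⟨hr.1.le, hr.2.le⟩
        have h2 := mul_nonneg (wt_pos a (d r) (s r)).le h1
        nlinarith)
  simp only [Pi.sub_apply, h.d0, h.φ0, Real.sin_zero] at hY
  have hw := wt_pos a (d τ) (s τ)
  have hI : (1 - d τ^2/2 - γ) * (2*(s τ * Real.sin (φ τ)+d τ * Real.cos (φ τ))) + (s τ^2+d τ^2-4*a-2)*(d τ * Real.cos (φ τ)) ≤ 0 := by
    by_contra hc
    push Not at hc
    have := mul_pos hw hc
    nlinarith
  refine alg_L1 hD hS hC ha rfl hq hmq (Real.sin_sq_add_cos_sq (φ τ)) hσ hk ?_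
  have hp : 0 ≤ 2*(s τ * Real.sin (φ τ)+d τ * Real.cos (φ τ)) := by positivity
  have := mul_nonneg (sub_nonneg.2 hγ) hp
  nlinarith
end

section
variable {a s0 : ℝ} {d s φ : ℝ → ℝ} {T : ℝ}

lemma Traj.d_lt_s (h : Traj a s0 d s φ T) {t : ℝ} (ht : t ∈ Icc 0 T) : d t < s t := by
  have h1 := h.sp t ht
  have h2 := h.qp t ht
  nlinarith

lemma Traj.low (h : Traj a s0 d s φ T) (ha : 0 < a) (hs0 : s0^2 < 4*a) {u : ℝ} (hu : u ∈ Icc 0 T)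
    (hdp : ∀ t ∈ Ioo 0 u, 0 < d t) (hφ : ∀ t ∈ Ico 0 u, φ t < Real.pi/2) :
    (∀ t ∈ Ico 0 u, 0 < Kf a (d t) (s t) (φ t)) ∧ ∀ t ∈ Ioc 0 u, 0 < φ t := by
  have h1 : ∀ t ∈ Ico 0 u, 0 < Kf a (d t) (s t) (φ t) := by
    intro t ht
    exact (h.mono ht.1 (ht.2.le.trans hu.2)).k_pos ha hs0 (fun r hr => hdp r ⟨hr.1, hr.2.trans_lt ht.2⟩)
      (fun r hr => hφ r ⟨hr.1, hr.2.trans_lt ht.2⟩) t ⟨ht.1, le_rfl⟩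
  refine ⟨h1, fun t ht => ?_⟩
  have := strict_mono_of_deriv (f := φ) ht.1 (fun r hr => h.hφ r ⟨hr.1, hr.2.trans (ht.2.trans hu.2)⟩)
      (fun r hr => h1 r ⟨hr.1.le, hr.2.trans_le ht.2⟩)
  rwa [h.φ0] at this

theorem Traj.struct (h : Traj a s0 d s φ T) (ha : 0 < a) (hs0 : s0^2 < 4*a)
    (hdp : ∀ t ∈ Ioo 0 T, 0 < d t) (hφπ : ∀ t ∈ Icc 0 T, φ t ≤ Real.pi) :
    ∃ u ∈ Icc 0 T, (∀ t ∈ Ico 0 u, 0 < Kf a (d t) (s t) (φ t) ∧ φ t < Real.pi/2) ∧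
      (∀ t ∈ Ioc 0 T, 0 < φ t) ∧ (∀ t ∈ Ioc u T, Real.pi/2 < φ t) ∧ 
      (φ u = Real.pi/2 ∨ (u = T ∧ φ T < Real.pi/2)) := by
  have hpi := Real.pi_pos
  by_cases hc : ∀ t ∈ Icc 0 T, φ t < Real.pi/2
  · have hT : T ∈ Icc 0 T := ⟨h.T0, le_rfl⟩
    obtain ⟨h1, h2⟩ := h.low ha hs0 hT hdp (fun t ht => hc t ⟨ht.1, ht.2.le⟩)
    exact ⟨T, hT, fun t ht => ⟨h1 t ht, hc t ⟨ht.1, ht.2.le⟩⟩, h2, fun t ht => absurd ht.1 (not_lt.2 ht.2), Or.inr ⟨rfl, hc T hT⟩⟩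
  · push Not at hc
    obtain ⟨r, hr, hr'⟩ := hc
    obtain ⟨u, hu, hu0, hup⟩ := first_zero (f := fun t => Real.pi/2 - φ t) (continuousOn_const.sub h.cφ)
      (by simp only [h.φ0]; linarith) ⟨r, hr, by linarith⟩
    have hup' : ∀ t ∈ Ico 0 u, φ t < Real.pi/2 := fun t ht => by have := hup t ht; linarith
    have hφu : φ u = Real.pi/2 := by linarith
    have huT : u ∈ Icc 0 T := ⟨hu.1.le, hu.2⟩
    obtain ⟨h1, h2⟩ := h.low ha hs0 huT (fun t ht => hdp t ⟨ht.1, ht.2.trans_le hu.2⟩) hup'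
    have hCneg : ∀ t ∈ Ioc u T, Real.cos (φ t) < 0 := by
      intro t ht
      have := strict_anti_of_deriv ht.1 (fun r hr => h.wC_deriv (t := r) ⟨hu.1.le.trans hr.1, hr.2.trans ht.2⟩)
        (fun r hr => by
          have h3 := hdp r ⟨hu.1.trans hr.1, hr.2.trans_le ht.2⟩
          have h4 := h.qp r ⟨(hu.1.trans hr.1).le, (hr.2.trans_le ht.2).le⟩
          have h5 := wt_pos a (d r) (s r)
          rw [neg_lt_zero]; positivity)
      rw [hφu, Real.cos_pi_div_two, mul_zero] at this
      exact neg_of_mul_neg_right this (wt_pos a (d t) (s t)).le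
    have hup2 : ∀ t ∈ Ioc u T, Real.pi/2 < φ t := by
      intro t ht
      by_contra hcon
      push Not at hcon
      have h3 := hCneg t ht
      have h4 : φ t < 0 := by
        by_contra h5
        push Not at h5
        have := Real.cos_nonneg_of_mem_Icc (x := φ t) ⟨by linarith, hcon⟩
        linarith
      obtain ⟨r, hr, hr0⟩ := intermediate_value_Icc' ht.1.le
        (h.cφ.mono (fun x hx => ⟨hu.1.le.trans hx.1, hx.2.trans ht.2⟩)) (⟨h4.le, by rw [hφu]; positivity⟩ : (0:ℝ) ∈ Icc _ _)
      have hru : r ≠ u := by rintro rfl; rw [hφu] at hr0; linarith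
      have := hCneg r ⟨lt_of_le_of_ne hr.1 hru.symm, hr.2.trans ht.2⟩
      rw [hr0, Real.cos_zero] at this
      linarith
    refine ⟨u, huT, fun t ht => ⟨h1 t ht, hup' t ht⟩, fun t ht => ?_, hup2, Or.inl hφu⟩
    rcases le_or_gt t u with h3 | h3
    · exact h2 t ⟨ht.1, h3⟩
    · have := hup2 t ⟨h3, ht.2⟩
      linarith

lemma Traj.s_mono (h : Traj a s0 d s φ T) (hφ0 : ∀ t ∈ Ioc 0 T, 0 < φ t) (hφπ : ∀ t ∈ Icc 0 T, φ t ≤ Real.pi)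
    {t1 t2 : ℝ} (h1 : 0 ≤ t1) (h12 : t1 ≤ t2) (h2 : t2 ≤ T) : s t1 ≤ s t2 :=
  mono_of_deriv h12 (fun r hr => h.hs r ⟨h1.trans hr.1, hr.2.trans h2⟩)
    (fun r hr => Real.sin_nonneg_of_nonneg_of_le_pi (hφ0 r ⟨h1.trans_lt hr.1, hr.2.le.trans h2⟩).le
      (hφπ r ⟨(h1.trans_lt hr.1).le, hr.2.le.trans h2⟩))

lemma sin_add_cos_ge {x : ℝ} (h0 : 0 ≤ x) (h1 : x ≤ Real.pi/2) : 1 ≤ Real.cos x + Real.sin x := by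
  have hs := Real.sin_nonneg_of_nonneg_of_le_pi h0 (by linarith [Real.pi_pos])
  have hc := Real.cos_nonneg_of_mem_Icc (x := x) ⟨by linarith [Real.pi_pos], h1⟩
  nlinarith [Real.sin_sq_add_cos_sq x, mul_nonneg hs hc]

lemma sin_sub_cos_ge {x : ℝ} (h0 : Real.pi/2 ≤ x) (h1 : x ≤ Real.pi) : 1 ≤ Real.sin x - Real.cos x := by
  have := sin_add_cos_ge (x := Real.pi - x) (by linarith) (by linarith)
  rw [Real.cos_pi_sub, Real.sin_pi_sub] at this
  linarith

/-- d is increasing up to u and decreasing after -/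
lemma Traj.d_up (h : Traj a s0 d s φ T) {u : ℝ} (hu : u ∈ Icc 0 T)
    (hup : ∀ t ∈ Ico 0 u, φ t < Real.pi/2) (hφ0 : ∀ t ∈ Ioc 0 T, 0 < φ t) {t1 t2 : ℝ} (h1 : 0 ≤ t1) (h12 : t1 ≤ t2) (h2 : t2 ≤ u) :
    d t1 ≤ d t2 :=
  mono_of_deriv h12 (fun r hr => h.hd r ⟨h1.trans hr.1, hr.2.trans (h2.trans hu.2)⟩)
    (fun r hr => Real.cos_nonneg_of_mem_Icc ⟨by
      have := hφ0 r ⟨h1.trans_lt hr.1, hr.2.le.trans (h2.trans hu.2)⟩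
      linarith [Real.pi_pos], (hup r ⟨(h1.trans_lt hr.1).le, hr.2.trans_le h2⟩).le⟩)

lemma Traj.d_down (h : Traj a s0 d s φ T) {u : ℝ} (hu : u ∈ Icc 0 T)
    (hdn : ∀ t ∈ Ioc u T, Real.pi/2 < φ t) (hφπ : ∀ t ∈ Icc 0 T, φ t ≤ Real.pi) {t1 t2 : ℝ} (h1 : u ≤ t1) (h12 : t1 ≤ t2) (h2 : t2 ≤ T) :
    d t2 ≤ d t1 :=
  anti_of_deriv h12 (fun r hr => h.hd r ⟨hu.1.trans (h1.trans hr.1), hr.2.trans h2⟩)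
    (fun r hr => Real.cos_nonpos_of_pi_div_two_le_of_le (hdn r ⟨h1.trans_lt hr.1, hr.2.le.trans h2⟩).le
      (by linarith [hφπ r ⟨hu.1.trans (h1.trans hr.1.le), hr.2.le.trans h2⟩, Real.pi_pos]))

lemma Traj.d_le (h : Traj a s0 d s φ T) {u : ℝ} (hu : u ∈ Icc 0 T)
    (hup : ∀ t ∈ Ico 0 u, φ t < Real.pi/2) (hφ0 : ∀ t ∈ Ioc 0 T, 0 < φ t)
    (hdn : ∀ t ∈ Ioc u T, Real.pi/2 < φ t) (hφπ : ∀ t ∈ Icc 0 T, φ t ≤ Real.pi) {t : ℝ} (ht : t ∈ Icc 0 T) : d t ≤ d u := by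
  rcases le_total t u with h1 | h1
  · exact h.d_up hu hup hφ0 ht.1 h1 le_rfl
  · exact h.d_down hu hdn hφπ le_rfl h1 ht.2

lemma Traj.time_le (h : Traj a s0 d s φ T) (ha : 0 < a) (hs0 : s0^2 < 4*a)
    (hdp : ∀ t ∈ Ioo 0 T, 0 < d t) (hφπ : ∀ t ∈ Icc 0 T, φ t ≤ Real.pi) : T ≤ 3 * s T := by
  obtain ⟨u, hu, hlow, hφ0, hdn, -⟩ := h.struct ha hs0 hdp hφπ
  have hTT : T ∈ Icc 0 T := ⟨h.T0, le_rfl⟩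
  have h1 : 0 + s 0 + d 0 - 0 ≤ 0 + s u + d u - u := by
    refine mono_of_deriv (f := fun t => 0 + s t + d t - t) hu.1 (fun r hr => 
      ((((hasDerivAt_const r (0:ℝ)).add (h.hs r ⟨hr.1, hr.2.trans hu.2⟩)).add (h.hd r ⟨hr.1, hr.2.trans hu.2⟩)).sub (hasDerivAt_id r))) ?_
    intro r hr
    have := sin_add_cos_ge (hφ0 r ⟨hr.1, hr.2.le.trans hu.2⟩).le (hlow r ⟨hr.1.le, hr.2⟩).2.le
    linarith
  have h2 : 0 + s u - d u - u ≤ 0 + s T - d T - T := by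
    refine mono_of_deriv (f := fun t => 0 + s t - d t - t) hu.2 (fun r hr => 
      ((((hasDerivAt_const r (0:ℝ)).add (h.hs r ⟨hu.1.trans hr.1, hr.2⟩)).sub (h.hd r ⟨hu.1.trans hr.1, hr.2⟩)).sub (hasDerivAt_id r))) ?_
    intro r hr
    have := sin_sub_cos_ge (hdn r ⟨hr.1, hr.2.le⟩).le (hφπ r ⟨(hu.1.trans hr.1.le), hr.2.le⟩)
    linarith
  have h3 := h.d_lt_s hu
  have h4 := h.s_mono hφ0 hφπ hu.1 hu.2 le_rfl
  have h5 := h.sp 0 ⟨le_rfl, h.T0⟩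
  have h6 := h.d0
  have h7 : 0 ≤ d T := by
    have hc : ContinuousWithinAt d (Icc 0 T) T := h.cd T hTT
    rcases h.T0.eq_or_lt with e | e
    · rw [← e, h.d0]
    · have := (h.hd T hTT).continuousAt.tendsto.mono_left (nhdsWithin_le_nhds (s := Iio T))
      apply ge_of_tendsto this
      filter_upwards [Ioo_mem_nhdsLT e] with r hr using (hdp r hr).le
  linarith
end

section
variable {a s0 : ℝ} {d s φ : ℝ → ℝ} {T : ℝ}

theorem Traj.no_return (h : Traj a s0 d s φ T) (ha : 0 < a) {u : ℝ} (hu : 0 ≤ u) (huT : u < T)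
    (hφu : φ u = Real.pi/2) (hdn : ∀ t ∈ Ioc u T, Real.pi/2 < φ t) (hφπ : ∀ t ∈ Icc 0 T, φ t ≤ Real.pi)
    (hdp : ∀ t ∈ Ico u T, 0 < d t) (hdT : d T = 0) (hd2 : 2 ≤ d u^2) (hr : 4*a+2 < s u^2 + d u^2) : False := by
  have hpi := Real.pi_pos
  have hsub : ∀ t ∈ Icc u T, t ∈ Icc 0 T := fun t ht => ⟨hu.trans ht.1, ht.2⟩
  have hdn' : ∀ t ∈ Icc u T, Real.pi/2 ≤ φ t := by
    intro t ht
    rcases ht.1.eq_or_lt with e | e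
    · rw [← e, hφu]
    · exact (hdn t ⟨e, ht.2⟩).le
  have hC : ∀ t ∈ Icc u T, Real.cos (φ t) ≤ 0 := fun t ht =>
    Real.cos_nonpos_of_pi_div_two_le_of_le (hdn' t ht) (by linarith [hφπ t (hsub t ht)])
  have hS : ∀ t ∈ Icc u T, 0 ≤ Real.sin (φ t) := fun t ht =>
    Real.sin_nonneg_of_nonneg_of_le_pi (by linarith [hdn' t ht]) (hφπ t (hsub t ht))
  have huu : u ∈ Icc u T := ⟨le_rfl, huT.le⟩
  have hTT : T ∈ Icc u T := ⟨huT.le, le_rfl⟩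
  have hd0 : ∀ t ∈ Icc u T, 0 ≤ d t := by
    intro t ht
    rcases ht.2.eq_or_lt with e | e
    · rw [e, hdT]
    · exact (hdp t ⟨ht.1, e⟩).le
  have hρ : ∀ t ∈ Icc u T, 0 < s t^2 + d t^2 - 4*a - 2 := by
    by_contra hcon
    push Not at hcon
    obtain ⟨τ, hτ, hτ0, hτp⟩ := first_zero (f := fun t => s t^2 + d t^2 - 4*a - 2)
      (fun t ht => (h.rho_deriv (hsub t ht)).continuousAt.continuousWithinAt) (by linarith) hcon
    have hττ : τ ∈ Icc u T := ⟨hτ.1.le, hτ.2⟩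
    have h1 := deriv_nonpos_of_pos_left hτ.1 (fun t ht => (hτp t ⟨ht.1.le, ht.2⟩).le) hτ0 (h.rho_deriv (hsub τ hττ))
    have h2 := mono_of_deriv hτ.1.le (fun r hr => h.WF_deriv (t := r) (hsub r ⟨hr.1, hr.2.trans hτ.2⟩)) (fun r hr => by
      have hr' : r ∈ Icc u T := ⟨hr.1.le, hr.2.le.trans hτ.2⟩
      have e1 := hC r hr'
      have e2 := hS r hr'
      have e3 := hτp r ⟨hr.1.le, hr.2⟩
      have e4 := wt_pos a (d r) (s r)
      have e5 : Real.sin (φ r) * Real.cos (φ r) ≤ 0 := mul_nonpos_of_nonneg_of_nonpos e2 e1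
      rw [Left.nonneg_neg_iff]
      exact mul_nonpos_of_nonneg_of_nonpos (by positivity) e5)
    simp only [hφu, Real.cos_pi_div_two, Real.sin_pi_div_two] at h2
    have hτ0' : s τ^2 + d τ^2 - 4*a - 2 = 0 := hτ0
    rw [hτ0'] at h2
    have e1 := wt_pos a (d u) (s u)
    have e2 := h.qp u (hsub u huu)
    have e3 := hdp u ⟨le_rfl, huT⟩
    have e4 : 0 < 2 * d u * wt a (d u) (s u) * (s u^2 - d u^2 + 4*a+2) := by positivity
    have e5 : 0 ≤ 2 * d τ * s τ * wt a (d τ) (s τ) := by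
      have := hd0 τ hττ
      have := h.sp τ (hsub τ hττ)
      have := wt_pos a (d τ) (s τ)
      positivity
    have e6 := mul_nonpos_of_nonneg_of_nonpos e5 h1
    linarith
  have h2 := strict_anti_of_deriv huT (fun r hr => h.WE_deriv (t := r) (hsub r hr)) (fun r hr => by
      have hr' : r ∈ Icc u T := ⟨hr.1.le, hr.2.le⟩
      have e2 := h.qp r (hsub r hr')
      have e3 := hρ r hr'
      have e4 := wt_pos a (d r) (s r)
      have e5 := hdp r ⟨hr.1.le, hr.2⟩
      rw [neg_lt_zero]
      positivity)
  simp only [hφu, Real.cos_pi_div_two, Real.sin_pi_div_two, hdT] at h2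
  have e1 := wt_pos a (d u) (s u)
  have e2 := h.sp u (hsub u huu)
  have e3 : 0 ≤ (d u^2 - 2) * (s u * wt a (d u) (s u)) := mul_nonneg (by linarith) (by positivity)
  have e4 : 0 ≤ s T * (wt a 0 (s T) * Real.sin (φ T)) :=
    mul_nonneg (h.sp T (hsub T hTT)).le (mul_nonneg (wt_pos _ _ _).le (hS T hTT))
  nlinarith

lemma Vs_bound {a N x s δ : ℝ} (ha : 1 ≤ a) (hN : N = 4 - δ) (hδ : 0 < δ) (hx : 0 ≤ x) (hxN : x < N)
    (hs : 0 < s) (hs2 : 4*a - δ ≤ s^2) : s*(2*a/(s^2-x) - 1/2) ≤ (δ+x)/(N-x) ∧ 2*a/(s^2-x) ≤ 2/(N-x) := by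
  have hq : 0 < s^2 - x := by nlinarith
  have hNx : 0 < N - x := by linarith
  constructor
  · have e1 : s*(2*a/(s^2-x) - 1/2) = s*(4*a-(s^2-x))/(2*(s^2-x)) := by field_simp; ring
    rw [e1, div_le_div_iff₀ (by positivity) hNx]
    have e2 : s*(4*a-(s^2-x)) ≤ s*(δ+x) := mul_le_mul_of_nonneg_left (by linarith) hs.le
    have e3 : s*(N-x) ≤ 2*(s^2-x) := by
      rcases le_total 2 s with h | h
      · nlinarith [mul_nonneg hx (sub_nonneg.2 h)]
      · have : N ≤ s^2 := by nlinarith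
        nlinarith [mul_nonneg (sub_nonneg.2 h) hq.le, mul_nonneg hs.le (sub_nonneg.2 this)]
    have e4 : s*(4*a-(s^2-x))*(N-x) ≤ s*(δ+x)*(N-x) := mul_le_mul_of_nonneg_right e2 hNx.le
    have e5 : (δ+x)*(s*(N-x)) ≤ (δ+x)*(2*(s^2-x)) := mul_le_mul_of_nonneg_left e3 (by linarith)
    linarith
  · rw [div_le_div_iff₀ hq hNx]
    nlinarith [mul_nonneg (sub_nonneg.2 ha) hx, mul_nonneg (sub_nonneg.2 ha) hδ.le]

theorem Traj.d_big (h : Traj a s0 d s φ T) (ha : 1 ≤ a) (hs0 : s0^2 = 4*a - 1/50) {u : ℝ} (hu : u ∈ Icc 0 T)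
    (hφu : φ u = Real.pi/2) (hlow : ∀ t ∈ Ico 0 u, φ t < Real.pi/2) (hφ0 : ∀ t ∈ Ioc 0 T, 0 < φ t) : 2 + 1/50 ≤ d u^2 := by
  by_contra hcon
  push Not at hcon
  have hpi := Real.pi_pos
  have hsub : ∀ t ∈ Icc 0 u, t ∈ Icc 0 T := fun t ht => ⟨ht.1, ht.2.trans hu.2⟩
  have hd0 : ∀ t ∈ Icc 0 u, 0 ≤ d t := by
    intro t ht
    have := h.d_up hu hlow hφ0 le_rfl ht.1 ht.2
    rwa [h.d0] at this
  have hx : ∀ t ∈ Icc 0 u, d t^2 < 2 + 1/50 := by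
    intro t ht
    have := h.d_up hu hlow hφ0 ht.1 ht.2 le_rfl
    have := hd0 t ht
    nlinarith
  have hss : ∀ t ∈ Icc 0 u, 4*a - 1/50 ≤ s t^2 := by
    intro t ht
    have : s 0 ≤ s t := mono_of_deriv ht.1 (fun r hr => h.hs r (hsub r ⟨hr.1, hr.2.trans ht.2⟩))
      (fun r hr => Real.sin_nonneg_of_nonneg_of_le_pi (hφ0 r ⟨hr.1, hr.2.le.trans (ht.2.trans hu.2)⟩).le
        (by linarith [hlow r ⟨hr.1.le, hr.2.trans_le ht.2⟩]))
    have h2 := h.s0p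
    rw [h.s00] at this
    nlinarith
  have hQ := anti_of_deriv (f := fun t => Real.sin (φ t) * (1 - d t^2/(4-1/50)) * Real.exp (-(d t^2/4)) - (1/50 * d t + d t^3/3)/(4-1/50))
      (f' := fun t => Real.cos (φ t) * (Real.exp (-(d t^2/4)) * ((1 - d t^2/(4-1/50)) * Kf a (d t) (s t) (φ t)
          - 2*d t*Real.sin (φ t)/(4-1/50) - Real.sin (φ t) * (1 - d t^2/(4-1/50)) * d t/2) - (1/50+d t^2)/(4-1/50)))
      hu.1 (fun r hr => by
      have k1 := h.sin_deriv (hsub r hr)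
      have k2 := (h.hd r (hsub r hr)).pow 2
      have k3 := (h.hd r (hsub r hr)).pow 3
      refine HasDerivAt.congr_deriv ((((k1.mul ((k2.div_const (4-1/50)).const_sub 1)).mul ((k2.div_const 4).neg.exp))).sub
        ((((h.hd r (hsub r hr)).const_mul (1/50)).add (k3.div_const 3)).div_const (4-1/50))) ?_
      simp only [Pi.pow_apply, Pi.mul_apply, Pi.neg_apply]
      push_cast
      ring)
      (fun r hr => by
        have hr' : r ∈ Icc 0 u := ⟨hr.1.le, hr.2.le⟩
        have hp := hφ0 r ⟨hr.1, hr.2.le.trans hu.2⟩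
        have hl := hlow r ⟨hr.1.le, hr.2⟩
        have hC : 0 ≤ Real.cos (φ r) := Real.cos_nonneg_of_mem_Icc ⟨by linarith, hl.le⟩
        have hS : 0 ≤ Real.sin (φ r) := Real.sin_nonneg_of_nonneg_of_le_pi hp.le (by linarith)
        have hC1 := Real.cos_le_one (φ r)
        have hd := hd0 r hr'
        have hxx := hx r hr'
        obtain ⟨v1, v2⟩ := Vs_bound (a := a) (N := 4 - 1/50) (x := d r^2) (s := s r) (δ := 1/50) ha rfl (by norm_num) (by positivity)
          (by linarith) (h.sp r (hsub r hr')) (hss r hr')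
        have hE0 := Real.exp_pos (-(d r^2/4))
        have hE1 : Real.exp (-(d r^2/4)) ≤ 1 := Real.exp_le_one_iff.2 (by nlinarith)
        have hN : (0:ℝ) < 4 - 1/50 - d r^2 := by linarith
        refine mul_nonpos_of_nonneg_of_nonpos hC ?_
        have b1 : (1 - d r^2/(4-1/50)) * (2*a/(s r^2-d r^2)) ≤ 2/(4-1/50) := by
          have e : (1 - d r^2/(4-1/50)) = (4-1/50-d r^2)/(4-1/50) := by field_simp
          rw [e]
          calc _ ≤ (4-1/50-d r^2)/(4-1/50) * (2/(4-1/50-d r^2)) := mul_le_mul_of_nonneg_left v2 (by positivity)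
            _ = 2/(4-1/50) := by generalize (4-1/50-d r^2) = N at hN; field_simp
        have b2 : (1 - d r^2/(4-1/50)) * (s r * (2*a/(s r^2-d r^2) - 1/2)) ≤ (1/50+d r^2)/(4-1/50) := by
          have e : (1 - d r^2/(4-1/50)) = (4-1/50-d r^2)/(4-1/50) := by field_simp
          rw [e]
          calc _ ≤ (4-1/50-d r^2)/(4-1/50) * ((1/50 + d r^2)/(4-1/50-d r^2)) := mul_le_mul_of_nonneg_left v1 (by positivity)
            _ = _ := by generalize (4-1/50-d r^2) = N at hN; field_simp
        have b3 : (1 - d r^2/(4-1/50)) * Kf a (d r) (s r) (φ r)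
          - 2*d r*Real.sin (φ r)/(4-1/50) - Real.sin (φ r) * (1 - d r^2/(4-1/50)) * d r/2 ≤ (1/50+d r^2)/(4-1/50) := by
          have c1 : Real.sin (φ r) * d r * ((1 - d r^2/(4-1/50)) * (2*a/(s r^2-d r^2))) ≤ Real.sin (φ r) * d r * (2/(4-1/50)) :=
            mul_le_mul_of_nonneg_left b1 (by positivity)
          have c2 : Real.cos (φ r) * ((1 - d r^2/(4-1/50)) * (s r * (2*a/(s r^2-d r^2) - 1/2))) ≤ Real.cos (φ r) * ((1/50+d r^2)/(4-1/50)) :=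
            mul_le_mul_of_nonneg_left b2 hC
          have c3 : Real.cos (φ r) * ((1/50+d r^2)/(4-1/50)) ≤ 1 * ((1/50+d r^2)/(4-1/50)) :=
            mul_le_mul_of_nonneg_right hC1 (by positivity)
          have c4 : (1 - d r^2/(4-1/50)) * Kf a (d r) (s r) (φ r)
            - 2*d r*Real.sin (φ r)/(4-1/50) - Real.sin (φ r) * (1 - d r^2/(4-1/50)) * d r/2
            = Real.sin (φ r) * d r * ((1 - d r^2/(4-1/50)) * (2*a/(s r^2-d r^2))) - Real.sin (φ r) * d r * (2/(4-1/50))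
             + Real.cos (φ r) * ((1 - d r^2/(4-1/50)) * (s r * (2*a/(s r^2-d r^2) - 1/2))) := by
            unfold Kf; ring
          rw [c4]
          linarith
        have b4 : 0 ≤ (1/50+d r^2)/(4-1/50) := by positivity
        have b5 := mul_le_mul_of_nonneg_left b3 hE0.le
        have b6 := mul_le_mul_of_nonneg_right hE1 b4
        linarith)
  simp only [hφu, Real.sin_pi_div_two, h.d0, h.φ0, Real.sin_zero] at hQ
  have hdu := hd0 u ⟨hu.1, le_rfl⟩
  have hE : (0.74:ℝ)^2 ≤ Real.exp (-(d u^2/4)) := by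
    have e1 : (0.74:ℝ) ≤ Real.exp (-(2.02/8)) := by
      have := Real.add_one_le_exp (-(2.02/8:ℝ)); linarith
    have e2 : Real.exp (-(2.02/8:ℝ))^2 = Real.exp (-(2.02/4)) := by
      rw [← Real.exp_nat_mul]; norm_num
    have e3 : Real.exp (-(2.02/4:ℝ)) ≤ Real.exp (-(d u^2/4)) := Real.exp_le_exp.2 (by linarith)
    calc (0.74:ℝ)^2 ≤ Real.exp (-(2.02/8))^2 := pow_le_pow_left₀ (by norm_num) e1 2
      _ ≤ _ := by rw [e2]; exact e3
  have hd2 : d u < 1.43 := by nlinarith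
  have f1 : (1.96/3.98:ℝ) ≤ 1 - d u^2/(4-1/50) := by
    have : d u^2/(4-1/50) ≤ (2+1/50)/(4-1/50) := by gcongr
    norm_num at this ⊢
    linarith
  have f2 : (1.96/3.98:ℝ) * 0.74^2 ≤ (1 - d u^2/(4-1/50)) * Real.exp (-(d u^2/4)) :=
    mul_le_mul f1 hE (by norm_num) (by linarith)
  have f3 : d u^3 ≤ 1.43 * 2.02 := by
    have : d u^3 = d u * d u^2 := by ring
    rw [this]
    exact mul_le_mul hd2.le (by linarith) (by positivity) (by norm_num)
  norm_num at hQ f2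
  linarith

theorem Traj.hi_fail (h : Traj a s0 d s φ T) (ha : 1 ≤ a) (hs0 : s0^2 = 4*a - 1/50) (hT : 0 < T)
    (hdp : ∀ t ∈ Ioo 0 T, 0 < d t) (hφπ : ∀ t ∈ Icc 0 T, φ t ≤ Real.pi) (hdT : d T = 0) : False := by
  have hpi := Real.pi_pos
  obtain ⟨u, hu, hlow, hφ0, hdn, hor⟩ := h.struct (by linarith) (by linarith) hdp hφπ
  have huT : u < T ∧ φ u = Real.pi/2 := by
    by_contra hc
    have huT : u = T := by
      rcases hor with e | e
      · by_contra h3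
        exact hc ⟨lt_of_le_of_ne hu.2 h3, e⟩
      · exact e.1
    have h1 := h.d_up hu (fun t ht => (hlow t ht).2) hφ0 (t1 := T/2) (t2 := T) (by linarith) (by linarith) (by linarith)
    have h2 := hdp (T/2) ⟨by linarith, by linarith⟩
    linarith
  have hu0 : 0 < u := by
    rcases hu.1.eq_or_lt with e | e
    · have := huT.2; rw [← e, h.φ0] at this; linarith
    · exact e
  have h1 := h.d_big ha hs0 hu huT.2 (fun t ht => (hlow t ht).2) hφ0
  have h2 : s 0 < s u := strict_mono_of_deriv hu0 (fun r hr => h.hs r ⟨hr.1, hr.2.trans hu.2⟩)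
      (fun r hr => Real.sin_pos_of_pos_of_lt_pi (hφ0 r ⟨hr.1, hr.2.le.trans hu.2⟩)
        (by linarith [(hlow r ⟨hr.1.le, hr.2⟩).2]))
  rw [h.s00] at h2
  have := h.s0p
  exact h.no_return (by linarith) hu.1 huT.1 huT.2 hdn hφπ (fun t ht => hdp t ⟨hu0.trans_le ht.1, ht.2⟩) hdT (by linarith) (by nlinarith)
end

section
variable {a s0 : ℝ} {d s φ : ℝ → ℝ} {T : ℝ}

theorem Traj.axis (h : Traj a s0 d s φ T) (ha : 1 ≤ a) (hd0 : ∀ t ∈ Icc 0 T, 0 ≤ d t)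
    (hφ0 : ∀ t ∈ Icc 0 T, 0 ≤ φ t) (hφπ : ∀ t ∈ Icc 0 T, φ t ≤ Real.pi) :
    s T^2 * Real.exp (-(Real.pi + s T^2/2)) ≤ s T^2 - d T^2 := by
  have hTT : T ∈ Icc 0 T := ⟨h.T0, le_rfl⟩
  have hpm : ∀ t ∈ Icc 0 T, 0 < s t + d t ∧ 0 < s t - d t := fun t ht =>
    ⟨by linarith [h.sp t ht, hd0 t ht], by linarith [h.d_lt_s ht]⟩
  have h1 := mono_of_deriv (f := fun t => φ t + (d t * s t/2 - a * Real.log (s t + d t) + a * Real.log (s t - d t)))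
    (f' := fun t => Real.sin (φ t) * d t * (1 + 4*a/(s t^2 - d t^2))) h.T0 (fun r hr => by
      obtain ⟨p1, p2⟩ := hpm r hr
      have hq := h.qp r hr
      have e := h.hd r hr
      have f := h.hs r hr
      refine HasDerivAt.congr_deriv ((h.hφ r hr).add ((((e.mul f).div_const 2).sub (((f.add e).log p1.ne').const_mul a)).add
        (((f.sub e).log p2.ne').const_mul a))) ?_
      simp only [Pi.add_apply, Pi.sub_apply]
      unfold Kf
      have : s r^2 - d r^2 = (s r + d r)*(s r - d r) := by ring
      rw [this]
      have p1' := p1.ne'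
      have p2' := p2.ne'
      field_simp
      ring) (fun r hr => by
      have hr' : r ∈ Icc 0 T := ⟨hr.1.le, hr.2.le⟩
      have e1 := hd0 r hr'
      have e2 := Real.sin_nonneg_of_nonneg_of_le_pi (hφ0 r hr') (hφπ r hr')
      have e3 := h.qp r hr'
      positivity)
  simp only [h.d0, h.φ0, add_zero, sub_zero, zero_mul, zero_div] at h1
  obtain ⟨p1, p2⟩ := hpm T hTT
  have e1 : d T * s T ≤ s T^2 := by nlinarith [h.d_lt_s hTT, h.sp T hTT]
  have e2 : a * (Real.log (s T + d T) - Real.log (s T - d T)) ≤ Real.pi + s T^2/2 := by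
    have := hφπ T hTT
    linarith
  have e3 : Real.log (s T - d T) ≤ Real.log (s T + d T) := Real.log_le_log p2 (by linarith [hd0 T hTT])
  have e4 : Real.log (s T + d T) - (Real.pi + s T^2/2) ≤ Real.log (s T - d T) := by nlinarith
  have e5 := Real.exp_le_exp.2 e4
  rw [Real.exp_sub, Real.exp_log p1, Real.exp_log p2, div_eq_mul_inv, ← Real.exp_neg] at e5
  have hE := Real.exp_pos (-(Real.pi + s T^2/2))
  have e6 : (s T + d T) * ((s T + d T) * Real.exp (-(Real.pi + s T^2/2))) ≤ (s T + d T) * (s T - d T) :=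
    mul_le_mul_of_nonneg_left e5 p1.le
  have e7 : s T^2 ≤ (s T + d T)^2 := by nlinarith [h.sp T hTT, hd0 T hTT]
  nlinarith [mul_le_mul_of_nonneg_right e7 hE.le]

/-- the lower bound on q -/
theorem Traj.q_lower (h : Traj a s0 d s φ T) (ha : 1 ≤ a) (hd0 : ∀ t ∈ Icc 0 T, 0 ≤ d t)
    (hφ0 : ∀ t ∈ Icc 0 T, 0 ≤ φ t) (hφπ : ∀ t ∈ Icc 0 T, φ t ≤ Real.pi) {t X slo : ℝ} (ht : t ∈ Icc 0 T)
    (hX : s t ≤ X) (hlo : 0 < slo) (hls : slo ≤ s t) :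
    slo^2 * Real.exp (-(Real.pi + X^2/2)) ≤ s t^2 - d t^2 := by
  have h1 := (h.mono ht.1 ht.2).axis ha (fun r hr => hd0 r ⟨hr.1, hr.2.trans ht.2⟩)
    (fun r hr => hφ0 r ⟨hr.1, hr.2.trans ht.2⟩) (fun r hr => hφπ r ⟨hr.1, hr.2.trans ht.2⟩)
  refine le_trans ?_ h1
  have e1 : slo^2 ≤ s t^2 := by nlinarith
  have e2 : s t^2 ≤ X^2 := by nlinarith
  exact mul_le_mul e1 (Real.exp_le_exp.2 (by linarith)) (Real.exp_pos _).le (by positivity)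

lemma wt_lower {a d s q X : ℝ} (ha : 0 ≤ a) (hq : 0 < q) (hqq : q ≤ s^2-d^2) (hs : 0 < s) (hX : s ≤ X) :
    Real.exp (a * Real.log q - X^2/2) ≤ wt a d s := by
  unfold wt
  apply Real.exp_le_exp.2
  have e1 := mul_le_mul_of_nonneg_left (Real.log_le_log hq hqq) ha
  have e2 : s^2 ≤ X^2 := by nlinarith
  nlinarith

theorem Traj.struct_full (h : Traj a s0 d s φ T) (ha : 0 < a) (hs0 : s0^2 < 4*a) (hT : 0 < T)
    (hdp : ∀ t ∈ Ioo 0 T, 0 < d t) (hφπ : ∀ t ∈ Icc 0 T, φ t ≤ Real.pi) (hdT : d T = 0) :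
    ∃ u ∈ Ioo 0 T, (∀ t ∈ Ico 0 u, 0 < Kf a (d t) (s t) (φ t)) ∧ (∀ t ∈ Ico 0 u, φ t < Real.pi/2) ∧
      (∀ t ∈ Ioc 0 T, 0 < φ t) ∧ (∀ t ∈ Ioc u T, Real.pi/2 < φ t) ∧ φ u = Real.pi/2 := by
  have hpi := Real.pi_pos
  obtain ⟨u, hu, hlow, hφ0, hdn, hor⟩ := h.struct (by linarith) (by linarith) hdp hφπ
  have huT : u < T ∧ φ u = Real.pi/2 := by
    by_contra hc
    have huT : u = T := by
      rcases hor with e | e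
      · by_contra h3
        exact hc ⟨lt_of_le_of_ne hu.2 h3, e⟩
      · exact e.1
    have h1 := h.d_up hu (fun t ht => (hlow t ht).2) hφ0 (t1 := T/2) (t2 := T) (by linarith) (by linarith) (by linarith)
    have h2 := hdp (T/2) ⟨by linarith, by linarith⟩
    linarith
  have hu0 : 0 < u := by
    rcases hu.1.eq_or_lt with e | e
    · have := huT.2; rw [← e, h.φ0] at this; linarith
    · exact e
  exact ⟨u, ⟨hu0, huT.1⟩, fun t ht => (hlow t ht).1, fun t ht => (hlow t ht).2, hφ0, hdn, huT.2⟩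

/-- early escape from the diagonal -/
theorem Traj.early (h : Traj a s0 d s φ T) (ha : 0 < a) {u slo δ K1 : ℝ} (hu : u ∈ Icc 0 T)
    (hlow : ∀ t ∈ Ico 0 u, φ t < Real.pi/2) (hφ0 : ∀ t ∈ Ioc 0 T, 0 < φ t) (hφu : φ u = Real.pi/2)
    (hlo : 0 < slo) (hls : slo ≤ s0) (hδ : 0 < δ) (hδs : δ ≤ slo/2) (hK : K1 = slo*(1/2+4*a/slo^2)+4*a/slo) (hKδ : K1*δ ≤ 1) :
    ∃ r ∈ Icc 0 u, d r = δ/2 ∧ s r ≤ s0 + δ/2 := by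
  have hpi := Real.pi_pos
  have hK0 : 0 < K1 := by rw [hK]; positivity
  have hsub : ∀ t ∈ Icc 0 u, t ∈ Icc 0 T := fun t ht => ⟨ht.1, ht.2.trans hu.2⟩
  have hd0 : ∀ t ∈ Icc 0 u, 0 ≤ d t := by
    intro t ht
    have := h.d_up hu hlow hφ0 le_rfl ht.1 ht.2
    rwa [h.d0] at this
  have hCS : ∀ t ∈ Icc 0 u, 0 ≤ Real.cos (φ t) ∧ 0 ≤ Real.sin (φ t) := by
    intro t ht
    have h1 : 0 ≤ φ t := by
      rcases ht.1.eq_or_lt with e | e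
      · rw [← e, h.φ0]
      · exact (hφ0 t ⟨e, ht.2.trans hu.2⟩).le
    have h2 : φ t ≤ Real.pi/2 := by
      rcases ht.2.eq_or_lt with e | e
      · rw [e, hφu]
      · exact (hlow t ⟨ht.1, e⟩).le
    exact ⟨Real.cos_nonneg_of_mem_Icc ⟨by linarith, h2⟩, Real.sin_nonneg_of_nonneg_of_le_pi h1 (by linarith)⟩
  have hss : ∀ t ∈ Icc 0 u, slo ≤ s t := by
    intro t ht
    have : s 0 ≤ s t := mono_of_deriv ht.1 (fun r hr => h.hs r (hsub r ⟨hr.1, hr.2.trans ht.2⟩))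
      (fun r hr => (hCS r ⟨hr.1.le, hr.2.le.trans ht.2⟩).2)
    rw [h.s00] at this
    linarith
  have key : ∀ t ∈ Icc 0 u, d t ≤ δ → Real.sin (φ t) ≤ K1 * d t := by
    intro t ht hdt
    have hm := mono_of_deriv (f := fun t => K1 * d t - Real.sin (φ t))
      (f' := fun t => K1 * Real.cos (φ t) - Real.cos (φ t) * Kf a (d t) (s t) (φ t)) ht.1
      (fun r hr => ((h.hd r (hsub r ⟨hr.1, hr.2.trans ht.2⟩)).const_mul K1).sub (h.sin_deriv (hsub r ⟨hr.1, hr.2.trans ht.2⟩)))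
      (fun r hr => by
        have hr' : r ∈ Icc 0 u := ⟨hr.1.le, hr.2.le.trans ht.2⟩
        obtain ⟨c1, c2⟩ := hCS r hr'
        have c3 := hss r hr'
        have c4 := hd0 r hr'
        have c5 : d r ≤ δ := (h.d_up hu hlow hφ0 hr.1.le hr.2.le ht.2).trans hdt
        have c6 : d r ≤ slo/2 := c5.trans hδs
        have c7 : d r ≤ s r/2 := by linarith
        have sp : 0 < s r := by linarith
        have q1 : s r^2/2 ≤ s r^2 - d r^2 := by nlinarith
        have q0 : 0 < s r^2 - d r^2 := by nlinarith
        have q2 : slo^2/2 ≤ s r^2 - d r^2 := by nlinarith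
        have m1 : 2*a/(s r^2-d r^2) ≤ 4*a/slo^2 := by
          rw [div_le_div_iff₀ q0 (by positivity)]; nlinarith
        have m2 : s r * (2*a/(s r^2-d r^2)) ≤ 4*a/slo := by
          rw [mul_div_assoc', div_le_div_iff₀ q0 hlo]
          nlinarith [mul_le_mul_of_nonneg_left c3 (by positivity : 0 ≤ a * s r)]
        have s1 := Real.sin_le_one (φ r)
        have s2 := Real.cos_le_one (φ r)
        have k1 : Real.sin (φ r) * d r * (1/2 + 2*a/(s r^2-d r^2)) ≤ slo*(1/2+4*a/slo^2) := by
          have : Real.sin (φ r) * d r ≤ slo := by nlinarith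
          exact mul_le_mul this (by linarith) (by positivity) hlo.le
        have k2 : Real.cos (φ r) * s r * (2*a/(s r^2-d r^2) - 1/2) ≤ 4*a/slo := by
          have p : 0 ≤ s r * (2*a/(s r^2-d r^2)) := by positivity
          nlinarith [mul_nonneg c1 sp.le]
        have kk : Kf a (d r) (s r) (φ r) ≤ K1 := by unfold Kf; rw [hK]; linarith
        nlinarith)
    simp only [h.d0, h.φ0, Real.sin_zero] at hm
    linarith
  have huu : u ∈ Icc 0 u := ⟨hu.1, le_rfl⟩
  have hdu : δ/2 ≤ d u := by
    by_contra hc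
    push Not at hc
    have := key u huu (by linarith)
    rw [hφu, Real.sin_pi_div_two] at this
    nlinarith
  have hcd : ContinuousOn d (Icc 0 u) := fun t ht => (h.hd t (hsub t ht)).continuousAt.continuousWithinAt
  obtain ⟨r, hr, hdr⟩ := intermediate_value_Icc hu.1 hcd (⟨by rw [h.d0]; linarith, hdu⟩ : δ/2 ∈ Icc (d 0) (d u))
  refine ⟨r, hr, hdr, ?_⟩
  have := anti_of_deriv (f := fun t => s t - d t) (f' := fun t => Real.sin (φ t) - Real.cos (φ t)) hr.1
    (fun t ht => (h.hs t (hsub t ⟨ht.1, ht.2.trans hr.2⟩)).sub (h.hd t (hsub t ⟨ht.1, ht.2.trans hr.2⟩)))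
    (fun t ht => by
      have ht' : t ∈ Icc 0 u := ⟨ht.1.le, ht.2.le.trans hr.2⟩
      have e1 : d t ≤ δ/2 := hdr ▸ h.d_up hu hlow hφ0 ht.1.le ht.2.le hr.2
      have e2 := key t ht' (by linarith)
      have e3 : Real.sin (φ t) ≤ 1/2 := by nlinarith
      obtain ⟨c1, c2⟩ := hCS t ht'
      nlinarith [Real.sin_sq_add_cos_sq (φ t)])
  simp only [h.d0, h.s00, hdr] at this
  linarith
end

section
variable {a s0 : ℝ} {d s φ : ℝ → ℝ} {T : ℝ}

set_option maxHeartbeats 1000000 in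
/-- G is small enough at the end. -/
theorem Traj.G_end (h : Traj a s0 d s φ T) (ha : 1 ≤ a) (hs0 : s0^2 < 4*a) (hT : 0 < T)
    (hdp : ∀ t ∈ Ioo 0 T, 0 < d t) (hφπ : ∀ t ∈ Icc 0 T, φ t ≤ Real.pi) (hdT : d T = 0)
    {slo δ K1 D S1 qm wm c3 : ℝ} (hlo : 0 < slo) (hls : slo ≤ s0) (hδ : 0 < δ) (hδs : δ ≤ slo/2)
    (hK : K1 = slo*(1/2+4*a/slo^2)+4*a/slo) (hKδ : K1*δ ≤ 1)
    (hD0 : 0 < D) (hD : 4*a+2 ≤ D^2) (hS1 : 2*(a+1) + D * (2*(a+1)) * 2 / δ ≤ S1)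
    (hqm : qm = slo^2 * Real.exp (-(Real.pi + (S1+1)^2/2))) (hwm : wm = Real.exp (a * Real.log qm - (S1+1)^2/2))
    (hc3 : c3 = wm * (slo * (δ/2) * (4*a/(S1+1)^2))) :
    s T * (wt a (d T) (s T) * Real.cos (φ T)) ≤ - min c3 (wm * (δ/2)) := by
  have hpi := Real.pi_pos
  obtain ⟨u, hu, -, hlow, hφ0, hdn, hφu⟩ := h.struct_full (by linarith) hs0 hT hdp hφπ hdT
  have huc : u ∈ Icc 0 T := ⟨hu.1.le, hu.2.le⟩
  have hTT : T ∈ Icc 0 T := ⟨h.T0, le_rfl⟩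
  obtain ⟨r, hr, hdr, hsr⟩ := h.early (by linarith) huc hlow hφ0 hφu hlo hls hδ hδs hK hKδ
  have hdu : d u ≤ D := by
    by_contra hc
    push Not at hc
    have h1 : 4*a+2 < d u^2 := by nlinarith
    exact h.no_return (by linarith) hu.1.le hu.2 hφu hdn hφπ (fun t ht => hdp t ⟨hu.1.trans_le ht.1, ht.2⟩) hdT
      (by linarith) (by nlinarith [h.sp u huc])
  have hs0b : s0 ≤ a + 1 := by nlinarith [h.s0p]
  have hφ0' : ∀ t ∈ Icc 0 T, 0 ≤ φ t := by
    intro t ht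
    rcases ht.1.eq_or_lt with e | e
    · rw [← e, h.φ0]
    · exact (hφ0 t ⟨e, ht.2⟩).le
  have hd0 : ∀ t ∈ Icc 0 T, 0 ≤ d t := by
    intro t ht
    rcases ht.1.eq_or_lt with e | e
    · rw [← e, h.d0]
    · rcases ht.2.eq_or_lt with e' | e'
      · rw [e', hdT]
      · exact (hdp t ⟨e, e'⟩).le
  have hsl : ∀ t ∈ Icc 0 T, slo ≤ s t := fun t ht => by
    have := h.s_mono hφ0 hφπ le_rfl ht.1 ht.2
    rw [h.s00] at this; linarith
  set S0 := 2*(a+1) with hS0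
  have hS0p : 0 < S0 := by rw [hS0]; linarith
  have hS0S1 : S0 ≤ S1 := by
    have : 0 < D * S0 * 2 / δ := by positivity
    linarith
  have hsr' : s r ≤ S0 := by rw [hS0]; linarith
  have hqmp : 0 < qm := by rw [hqm]; positivity
  have hwmp : 0 < wm := by rw [hwm]; positivity
  have hwlow : ∀ t ∈ Icc 0 T, s t ≤ S1+1 → wm ≤ wt a (d t) (s t) := by
    intro t ht hst
    rw [hwm]
    exact wt_lower (by linarith) hqmp (hqm ▸ h.q_lower ha hd0 hφ0' hφπ ht hst hlo (hsl t ht)) (h.sp t ht) hst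
  set G := fun t => s t * (wt a (d t) (s t) * Real.cos (φ t)) - d t * (wt a (d t) (s t) * Real.sin (φ t)) with hG
  have hGd : ∀ t ∈ Icc 0 T, HasDerivAt G (- (wt a (d t) (s t) * (s t * d t * (4*a/(s t^2-d t^2))))) t := fun t ht => h.G_deriv ht
  have hGanti : ∀ t1 t2, 0 ≤ t1 → t1 ≤ t2 → t2 ≤ T → G t2 ≤ G t1 := by
    intro t1 t2 h1 h12 h2
    exact anti_of_deriv h12 (fun t ht => hGd t ⟨h1.trans ht.1, ht.2.trans h2⟩) (fun t ht => by
      have ht' : t ∈ Icc 0 T := ⟨h1.trans ht.1.le, ht.2.le.trans h2⟩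
      have := wt_pos a (d t) (s t)
      have := h.sp t ht'
      have := h.qp t ht'
      have := hd0 t ht'
      rw [neg_nonpos]; positivity)
  have hGu : G u = -(d u * wt a (d u) (s u)) := by
    simp only [hG, hφu, Real.cos_pi_div_two, Real.sin_pi_div_two]; ring
  have hGT : G T = s T * (wt a (d T) (s T) * Real.cos (φ T)) := by
    simp only [hG]; rw [hdT]; ring
  have hGu0 : G u < 0 := by
    rw [hGu]
    have := mul_pos (hdp u hu) (wt_pos a (d u) (s u))
    linarith
  rw [← hGT]
  -- a time g in [r,u] where s ≤ S1 and G ≤ 0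
  have hg : ∃ g ∈ Icc r u, s g ≤ S1 ∧ G g ≤ 0 := by
    by_cases hGr : G r ≤ 0
    · exact ⟨r, ⟨le_rfl, hr.2⟩, hsr'.trans hS0S1, hGr⟩
    push Not at hGr
    obtain ⟨g, hg, hg0, hgp⟩ := first_zero (f := G) (u := r) (v := u)
      (fun t ht => (hGd t ⟨hr.1.trans ht.1, ht.2.trans hu.2.le⟩).continuousAt.continuousWithinAt) hGr ⟨u, ⟨hr.2, le_rfl⟩, hGu0.le⟩
    refine ⟨g, ⟨hg.1.le, hg.2⟩, ?_, hg0.le⟩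
    have hgT : g ∈ Icc 0 T := ⟨hr.1.trans hg.1.le, hg.2.trans hu.2.le⟩
    have hm := mono_of_deriv (f := fun t => d t / s t) (f' := fun t => (Real.cos (φ t) * s t - d t * Real.sin (φ t))/(s t)^2) hg.1.le
      (fun t ht => by
        have ht' : t ∈ Icc 0 T := ⟨hr.1.trans ht.1, ht.2.trans hgT.2⟩
        exact (h.hd t ht').div (h.hs t ht') (h.sp t ht').ne')
      (fun t ht => by
        have ht' : t ∈ Icc 0 T := ⟨hr.1.trans ht.1.le, ht.2.le.trans hgT.2⟩
        have e1 : 0 < G t := hgp t ⟨ht.1.le, ht.2⟩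
        have e2 : G t = wt a (d t) (s t) * (Real.cos (φ t) * s t - d t * Real.sin (φ t)) := by simp only [hG]; ring
        rw [e2] at e1
        have := (pos_iff_pos_of_mul_pos e1).1 (wt_pos _ _ _)
        positivity)
    rw [hdr] at hm
    have hsg := h.sp g hgT
    have hsr0 := h.sp r ⟨hr.1, hr.2.trans hu.2.le⟩
    rw [div_le_div_iff₀ hsr0 hsg] at hm
    have e1 : d g ≤ D := (h.d_up huc hlow hφ0 hgT.1 hg.2 le_rfl).trans hdu
    have e2 : δ/2 * s g ≤ D * S0 := hm.trans (mul_le_mul e1 hsr' hsr0.le hD0.le)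
    have e3 : s g ≤ D * S0 * 2 / δ := by
      rw [le_div_iff₀ hδ]; linarith
    linarith
  obtain ⟨g, hg, hsg, hGg⟩ := hg
  have hg0 : 0 ≤ g := hr.1.trans hg.1
  have hdd : ∀ t ∈ Icc g u, δ/2 ≤ d t := fun t ht => hdr ▸ h.d_up huc hlow hφ0 hr.1 (hg.1.trans ht.1) ht.2
  rcases le_or_gt (s u) (S1+1) with hc | hc
  · have e1 := hGanti u T hu.1.le hu.2.le le_rfl
    have e2 := hwlow u huc hc
    have e3 := hdd u ⟨hg.2, le_rfl⟩
    have e4 : wm * (δ/2) ≤ d u * wt a (d u) (s u) := by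
      rw [mul_comm (d u)]
      exact mul_le_mul e2 e3 (by positivity) (wt_pos _ _ _).le
    have e5 := min_le_right c3 (wm * (δ/2))
    linarith
  · have hcs : ContinuousOn s (Icc g u) := fun t ht => (h.hs t ⟨hg0.trans ht.1, ht.2.trans hu.2.le⟩).continuousAt.continuousWithinAt
    obtain ⟨v, hv, hsv⟩ := intermediate_value_Icc hg.2 hcs (⟨by linarith, hc.le⟩ : S1 + 1 ∈ Icc (s g) (s u))
    have hvT : v ≤ T := hv.2.trans hu.2.le
    have hc3p : 0 ≤ c3 := by rw [hc3]; positivity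
    have e1 := anti_of_deriv (f := fun t => G t + c3 * s t) hv.1
      (fun t ht => (hGd t ⟨hg0.trans ht.1, ht.2.trans hvT⟩).add ((h.hs t ⟨hg0.trans ht.1, ht.2.trans hvT⟩).const_mul c3))
      (fun t ht => by
        have ht' : t ∈ Icc 0 T := ⟨hg0.trans ht.1.le, ht.2.le.trans hvT⟩
        have f1 : s t ≤ S1 + 1 := hsv ▸ h.s_mono hφ0 hφπ ht'.1 ht.2.le hvT
        have f2 := hwlow t ht' f1
        have f3 := hsl t ht'
        have f4 := hdd t ⟨ht.1.le, ht.2.le.trans hv.2⟩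
        have f5 := h.qp t ht'
        have f6 : 4*a/(S1+1)^2 ≤ 4*a/(s t^2-d t^2) := by
          apply div_le_div_of_nonneg_left (by linarith) f5
          nlinarith
        have f7 : c3 ≤ wt a (d t) (s t) * (s t * d t * (4*a/(s t^2-d t^2))) := by
          rw [hc3]
          have : 0 ≤ d t := by linarith
          have : 0 < s t := by linarith
          have hw0 := wt_pos a (d t) (s t)
          gcongr
        have f8 := mul_le_mul_of_nonneg_left (Real.sin_le_one (φ t)) hc3p
        linarith)
    have e2 := hGanti v T (hg0.trans hv.1) hvT le_rfl
    rw [hsv] at e1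
    have e5 := min_le_left c3 (wm * (δ/2))
    nlinarith

theorem L5 {a slo : ℝ} (ha : 1 ≤ a) (hlo : 0 < slo) : ∃ M0 : ℝ, 1 ≤ M0 ∧ ∀ (s0 : ℝ) (d s φ : ℝ → ℝ) (T : ℝ),
    Traj a s0 d s φ T → slo ≤ s0 → s0^2 < 4*a → 0 < T → (∀ t ∈ Ioo 0 T, 0 < d t) → (∀ t ∈ Icc 0 T, φ t ≤ Real.pi) → d T = 0 →
    s T ≤ M0 := by
  set K1 := slo*(1/2+4*a/slo^2)+4*a/slo with hK
  have hK0 : 0 < K1 := by rw [hK]; positivity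
  set δ := min (slo/2) (1/K1) with hδ
  have hδ0 : 0 < δ := lt_min (by linarith) (by positivity)
  have hδ1 : δ ≤ slo/2 := min_le_left _ _
  have hδ2 : K1 * δ ≤ 1 := by
    have : δ ≤ 1/K1 := min_le_right _ _
    rw [le_div_iff₀ hK0] at this
    linarith
  set D := 2*a+2 with hD
  set S1 := 2*(a+1) + D * (2*(a+1)) * 2 / δ with hS1
  have hS1p : 0 < S1 := by rw [hS1, hD]; positivity
  set qm := slo^2 * Real.exp (-(Real.pi + (S1+1)^2/2)) with hqm
  set wm := Real.exp (a * Real.log qm - (S1+1)^2/2) with hwm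
  set c3 := wm * (slo * (δ/2) * (4*a/(S1+1)^2)) with hc3
  have hwmp : 0 < wm := Real.exp_pos _
  have hc3p : 0 < c3 := by rw [hc3]; positivity
  set c4 := min c3 (wm * (δ/2)) with hc4
  have hc4p : 0 < c4 := lt_min hc3p (by positivity)
  refine ⟨4*(2*a+1) + 4*|Real.log c4| + 1, by have := abs_nonneg (Real.log c4); linarith, ?_⟩
  intro s0 d s φ T h hls hs0 hT hdp hφπ hdT
  have hTT : T ∈ Icc 0 T := ⟨h.T0, le_rfl⟩
  have hE := h.G_end ha hs0 hT hdp hφπ hdT hlo hls hδ0 hδ1 hK hδ2 (by rw [hD]; linarith) (by rw [hD]; nlinarith) hS1.ge hqm hwm hc3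
  have hs := h.sp T hTT
  have hw := wt_pos a (d T) (s T)
  have h1 : c4 ≤ s T * wt a (d T) (s T) := by
    have := mul_le_mul_of_nonneg_left (Real.neg_one_le_cos (φ T)) (mul_pos hs hw).le
    linarith
  have h2 := Real.log_le_log hc4p h1
  rw [Real.log_mul hs.ne' hw.ne'] at h2
  unfold wt at h2
  rw [Real.log_exp, hdT] at h2
  have h3 : Real.log (s T^2 - 0^2) = 2 * Real.log (s T) := by
    rw [show s T^2 - 0^2 = s T^2 by ring, Real.log_pow]; push_cast; ring
  rw [h3] at h2
  have h4 : Real.log (s T) ≤ s T := (Real.log_le_sub_one_of_pos hs).trans (by linarith)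
  have h5 : (2*a+1) * Real.log (s T) ≤ (2*a+1) * s T := mul_le_mul_of_nonneg_left h4 (by linarith)
  by_contra hc
  push Not at hc
  have h6 := neg_abs_le (Real.log c4)
  have h7 := abs_nonneg (Real.log c4)
  have h8 : 1 ≤ s T := by linarith
  nlinarith [mul_nonneg h7 (sub_nonneg.2 h8)]
end

section
variable {a s0 : ℝ} {d s φ : ℝ → ℝ} {T : ℝ}

lemma Traj.d_nonneg (h : Traj a s0 d s φ T) (hdp : ∀ t ∈ Ioo 0 T, 0 < d t) (hdT : 0 ≤ d T) : ∀ t ∈ Icc 0 T, 0 ≤ d t := by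
  intro t ht
  rcases ht.1.eq_or_lt with e | e
  · rw [← e, h.d0]
  · rcases ht.2.eq_or_lt with e' | e'
    · rw [e']; exact hdT
    · exact (hdp t ⟨e, e'⟩).le

lemma Traj.phi_nonneg (h : Traj a s0 d s φ T) (hφ0 : ∀ t ∈ Ioc 0 T, 0 < φ t) : ∀ t ∈ Icc 0 T, 0 ≤ φ t := by
  intro t ht
  rcases ht.1.eq_or_lt with e | e
  · rw [← e, h.φ0]
  · exact (hφ0 t ⟨e, ht.2⟩).le

set_option maxHeartbeats 1000000 in
theorem Traj.d_small (h : Traj a s0 d s φ T) (ha : 1 ≤ a) (hs0 : s0^2 < 4*a)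
    (hdp : ∀ t ∈ Ioo 0 T, 0 < d t) (hdT : 0 ≤ d T) (hφπ : ∀ t ∈ Icc 0 T, φ t ≤ Real.pi) {z c K3 : ℝ} (hz : s T ≤ z)
    (hc : c = Real.exp (-(Real.pi + z^2/2))) (hK3 : K3 = Real.exp (a*(Real.pi+z^2/2) + z^2/2)) :
    ∀ t ∈ Icc 0 T, d t ≤ (2/c + 2*K3)*s0 := by
  have hpi := Real.pi_pos
  have hcp : 0 < c := hc ▸ Real.exp_pos _
  have hKp : 0 < K3 := hK3 ▸ Real.exp_pos _
  have hs0p := h.s0p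
  obtain ⟨u, hu, hlow, hφ0, hdn, hor⟩ := h.struct (by linarith) hs0 hdp hφπ
  have hd0 := h.d_nonneg hdp hdT
  have hφ0' := h.phi_nonneg hφ0
  have hsz : ∀ t ∈ Icc 0 T, s t ≤ z := fun t ht => (h.s_mono hφ0 hφπ ht.1 ht.2 le_rfl).trans hz
  have hss : ∀ t ∈ Icc 0 T, s0 ≤ s t := fun t ht => h.s00 ▸ h.s_mono hφ0 hφπ le_rfl ht.1 ht.2
  have hq : ∀ t ∈ Icc 0 T, s t^2 * c ≤ s t^2 - d t^2 := fun t ht =>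
    hc ▸ h.q_lower ha hd0 hφ0' hφπ ht (hsz t ht) (h.sp t ht) le_rfl
  have hsub : ∀ t ∈ Icc 0 u, t ∈ Icc 0 T := fun t ht => ⟨ht.1, ht.2.trans hu.2⟩
  -- stage one
  have st1 : ∀ t ∈ Icc 0 T, (∀ r ∈ Ioo 0 t, φ r ≤ Real.pi/4) → d t ≤ 2/c*s0 := by
    intro t ht hr4
    have h1 := anti_of_deriv (f := fun t => s t - d t) (f' := fun t => Real.sin (φ t) - Real.cos (φ t)) ht.1
      (fun r hr => (h.hs r ⟨hr.1, hr.2.trans ht.2⟩).sub (h.hd r ⟨hr.1, hr.2.trans ht.2⟩))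
      (fun r hr => by
        have e1 := hr4 r hr
        have e2 := hφ0' r ⟨hr.1.le, hr.2.le.trans ht.2⟩
        have e3 : Real.sin (φ r) ≤ Real.sin (Real.pi/4) := Real.sin_le_sin_of_le_of_le_pi_div_two (by linarith) (by linarith) e1
        have e4 : Real.cos (Real.pi/4) ≤ Real.cos (φ r) := Real.cos_le_cos_of_nonneg_of_le_pi e2 (by linarith) e1
        rw [Real.sin_pi_div_four] at e3
        rw [Real.cos_pi_div_four] at e4
        linarith)
    simp only [h.s00, h.d0] at h1
    have e1 := hq t ht
    have e2 := h.d_lt_s ht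
    have e3 := h.sp t ht
    have e4 : s t * c ≤ 2 * s0 := by
      have e5 : s t * (s t * c) ≤ s t * (2 * (s t - d t)) := by nlinarith [hd0 t ht]
      have := le_of_mul_le_mul_left e5 e3
      linarith
    have e6 : s t ≤ 2/c*s0 := by
      rw [div_mul_eq_mul_div, le_div_iff₀ hcp]; exact e4
    linarith
  have hduu : d u ≤ (2/c + 2*K3)*s0 := by
    by_cases hcase : ∃ t ∈ Icc 0 u, Real.pi/4 - φ t ≤ 0
    · obtain ⟨p, hp, hp0, hpp⟩ := first_zero (f := fun t => Real.pi/4 - φ t) (u := 0) (v := u)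
        (fun t ht => ((h.hφ t (hsub t ht)).continuousAt.continuousWithinAt).const_sub _) (by simp only [h.φ0]; linarith) hcase
      have hpc : p ∈ Icc 0 u := ⟨hp.1.le, hp.2⟩
      have h1 := st1 p (hsub p hpc) (fun r hr => by have := hpp r ⟨hr.1.le, hr.2⟩; linarith)
      have hphi : ∀ t ∈ Icc p u, Real.pi/4 ≤ φ t := by
        intro t ht
        have : φ p ≤ φ t := mono_of_deriv ht.1 (fun r hr => h.hφ r (hsub r ⟨hp.1.le.trans hr.1, hr.2.trans ht.2⟩))
          (fun r hr => (hlow r ⟨hp.1.le.trans hr.1.le, hr.2.trans_le ht.2⟩).1.le)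
        linarith
      have h2 := anti_of_deriv (f := fun t => d t + 2*K3*s0^2/(s t)) (f' := fun t => Real.cos (φ t) + (0 * s t - 2*K3*s0^2*Real.sin (φ t))/(s t)^2) hp.2
        (fun r hr => by
          have hr' := hsub r ⟨hp.1.le.trans hr.1, hr.2⟩
          exact (h.hd r hr').add ((hasDerivAt_const r (2*K3*s0^2)).div (h.hs r hr') (h.sp r hr').ne'))
        (fun r hr => by
          have hr' := hsub r ⟨hp.1.le.trans hr.1.le, hr.2.le⟩
          have e1 := hphi r ⟨hr.1.le, hr.2.le⟩
          have e2 := (hlow r ⟨hp.1.le.trans hr.1.le, hr.2⟩).2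
          have e3 : Real.sin (Real.pi/4) ≤ Real.sin (φ r) := Real.sin_le_sin_of_le_of_le_pi_div_two (by linarith) (by linarith) e1
          rw [Real.sin_pi_div_four] at e3
          have e4 : (1:ℝ)/2 ≤ Real.sin (φ r) := by
            have : (1:ℝ) ≤ √2 := Real.one_le_sqrt.2 (by norm_num)
            linarith
          have sp := h.sp r hr'
          have e5 := anti_of_deriv hr'.1 (fun t ht => h.wC_deriv (t := t) ⟨ht.1, ht.2.trans hr'.2⟩) (fun t ht => by
            have ht' : t ∈ Icc 0 T := ⟨ht.1.le, ht.2.le.trans hr'.2⟩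
            have := wt_pos a (d t) (s t)
            have := hd0 t ht'
            have := h.qp t ht'
            rw [neg_nonpos]; positivity)
          simp only [h.d0, h.s00, h.φ0, Real.cos_zero, mul_one] at e5
          -- w0 ≤ K3 (s0/s)^2 w
          have e6 : wt a 0 s0 * (s r^2) ≤ K3 * s0^2 * wt a (d r) (s r) := by
            have l1 : wt a 0 s0 * (s r^2) = Real.exp (a * (2 * Real.log s0) - s0^2/4 + 2 * Real.log (s r)) := by
              unfold wt
              rw [Real.exp_add, show s0^2 - 0^2 = s0^2 by ring, Real.log_pow, show 2 * Real.log (s r) = Real.log (s r^2) by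
                rw [Real.log_pow]; push_cast; ring, Real.exp_log (by positivity)]
              push_cast
              congr 3
              ring
            have l2 : K3 * s0^2 * wt a (d r) (s r) = Real.exp ((a*(Real.pi+z^2/2) + z^2/2) + 2 * Real.log s0
                + (a * Real.log (s r^2 - d r^2) - (s r^2 + d r^2)/4)) := by
              rw [Real.exp_add, Real.exp_add, ← hK3, show 2 * Real.log s0 = Real.log (s0^2) by
                rw [Real.log_pow]; push_cast; ring, Real.exp_log (by positivity)]
              rfl
            rw [l1, l2]
            apply Real.exp_le_exp.2
            have l3 : 2 * Real.log (s r) - (Real.pi + z^2/2) ≤ Real.log (s r^2 - d r^2) := by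
              have := Real.log_le_log (by positivity) (hq r hr')
              rw [Real.log_mul (by positivity) hcp.ne', Real.log_pow, hc, Real.log_exp] at this
              push_cast at this
              linarith
            have l4 := mul_le_mul_of_nonneg_left l3 (by linarith : (0:ℝ) ≤ a)
            have l5 : Real.log s0 ≤ Real.log (s r) := Real.log_le_log hs0p (hss r hr')
            have l6 : 0 ≤ (a - 1) * (Real.log (s r) - Real.log s0) := mul_nonneg (by linarith) (by linarith)
            have l7 : s r^2 ≤ z^2 := by nlinarith [hsz r hr']
            have l8 : d r^2 ≤ s r^2 := by nlinarith [h.qp r hr']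
            nlinarith
          have hw := wt_pos a (d r) (s r)
          have e7 : Real.cos (φ r) * s r^2 ≤ K3 * s0^2 := by
            have : wt a (d r) (s r) * (Real.cos (φ r) * s r^2) ≤ wt a (d r) (s r) * (K3 * s0^2) := by
              have := mul_le_mul_of_nonneg_right e5 (sq_nonneg (s r))
              linarith
            exact le_of_mul_le_mul_left this hw
          have e8 : K3 * s0^2 * (1/2) ≤ K3 * s0^2 * Real.sin (φ r) := mul_le_mul_of_nonneg_left e4 (by positivity)
          have e9 : Real.cos (φ r) + (0 * s r - 2*K3*s0^2*Real.sin (φ r))/(s r)^2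
             = (Real.cos (φ r) * s r^2 - 2*K3*s0^2*Real.sin (φ r))/(s r)^2 := by field_simp; ring
          rw [e9]
          apply div_nonpos_of_nonpos_of_nonneg _ (sq_nonneg _)
          linarith)
      have e1 : 0 ≤ 2*K3*s0^2/(s u) := by
        have := h.sp u hu
        positivity
      have e2 : 2*K3*s0^2/(s p) ≤ 2*K3*s0 := by
        rw [div_le_iff₀ (h.sp p (hsub p hpc))]
        have := mul_le_mul_of_nonneg_left (hss p (hsub p hpc)) (by positivity : 0 ≤ 2*K3*s0)
        nlinarith
      linarith
    · push Not at hcase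
      have := st1 u hu (fun r hr => by have := hcase r ⟨hr.1.le, hr.2.le⟩; linarith)
      have : 0 < 2*K3*s0 := by positivity
      linarith
  intro t ht
  exact (h.d_le hu (fun t ht => (hlow t ht).2) hφ0 hdn hφπ ht).trans hduu
end

section
variable {a s0 : ℝ} {d s φ : ℝ → ℝ} {T : ℝ}

set_option maxHeartbeats 1000000 in
theorem Traj.no_pi (h : Traj a s0 d s φ T) (ha : 1 ≤ a) (hs0 : s0^2 < 4*a)
    (hdp : ∀ t ∈ Ioo 0 T, 0 < d t) (hdT : 0 ≤ d T) (hφπ : ∀ t ∈ Icc 0 T, φ t ≤ Real.pi) {z M' Ks wm : ℝ} (hz : s T ≤ z)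
    (hM' : M' = Real.exp (2*a*(2*Real.log z))/2 + 2*a*Real.exp ((2*a-1)*(2*Real.log z)))
    (hwm : wm = Real.exp (a*Real.log (4*a) - z^2/2))
    (hK : ∀ t ∈ Icc 0 T, d t ≤ Ks) (hsm : M' * Ks^2 < wm^2) : φ T < Real.pi := by
  by_contra hcon
  have hpi := Real.pi_pos
  have hTT : T ∈ Icc 0 T := ⟨h.T0, le_rfl⟩
  have hφT : φ T = Real.pi := le_antisymm (hφπ T hTT) (not_lt.1 hcon)
  have hT : 0 < T := by
    rcases h.T0.eq_or_lt with e | e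
    · rw [← e, h.φ0] at hφT; linarith
    · exact e
  obtain ⟨u, hu, hlow, hφ0, hdn, hor⟩ := h.struct (by linarith) hs0 hdp hφπ
  have hφu : φ u = Real.pi/2 := by
    rcases hor with e | e
    · exact e
    · linarith [e.2]
  have hd0 := h.d_nonneg hdp hdT
  have hsz : ∀ t ∈ Icc 0 T, s t ≤ z := fun t ht => (h.s_mono hφ0 hφπ ht.1 ht.2 le_rfl).trans hz
  have hzp : 0 < z := (h.sp T hTT).trans_le hz
  -- q(T) ≥ 4a
  have hk := deriv_nonpos_of_pos_left (f := fun t => Real.pi - φ t) hT (fun t ht => by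
    have := hφπ t ⟨ht.1.le, ht.2.le⟩; linarith) (by simp only [hφT]; ring) ((h.hφ T hTT).const_sub Real.pi)
  have hqT := h.qp T hTT
  have hsT := h.sp T hTT
  have hq4 : 4*a ≤ s T^2 - d T^2 := by
    unfold Kf at hk
    rw [hφT, Real.sin_pi, Real.cos_pi] at hk
    by_contra hc
    push Not at hc
    have : 1/2 < 2*a/(s T^2-d T^2) := by
      rw [lt_div_iff₀ hqT]; linarith
    nlinarith
  have hwT : wm ≤ wt a (d T) (s T) := hwm ▸ wt_lower (by linarith) (by linarith) hq4 hsT hz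
  have hub : ∀ t ∈ Icc 0 T, wt a (d t) (s t)^2 * (1/2 + 2*a/(s t^2-d t^2)) ≤ M' := by
    intro t ht
    have q0 := h.qp t ht
    have sp := h.sp t ht
    have q1 : s t^2 - d t^2 ≤ z^2 := by nlinarith [hsz t ht]
    have l1 : Real.log (s t^2-d t^2) ≤ 2*Real.log z := by
      have := Real.log_le_log q0 q1
      rw [Real.log_pow] at this; push_cast at this; exact this
    have w2 : wt a (d t) (s t)^2 = Real.exp (2*a*Real.log (s t^2-d t^2) - (s t^2+d t^2)/2) := by
      unfold wt; rw [← Real.exp_nat_mul]; congr 1; push_cast; ring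
    have w3 : wt a (d t) (s t)^2 / (s t^2-d t^2) = Real.exp ((2*a-1)*Real.log (s t^2-d t^2) - (s t^2+d t^2)/2) := by
      rw [w2]
      nth_rw 2 [← Real.exp_log q0]
      rw [← Real.exp_sub]; congr 1; ring
    have w4 : wt a (d t) (s t)^2 ≤ Real.exp (2*a*(2*Real.log z)) := by
      rw [w2]; apply Real.exp_le_exp.2
      have := mul_le_mul_of_nonneg_left l1 (by linarith : 0 ≤ 2*a)
      nlinarith [sq_nonneg (s t), sq_nonneg (d t)]
    have w5 : wt a (d t) (s t)^2 / (s t^2-d t^2) ≤ Real.exp ((2*a-1)*(2*Real.log z)) := by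
      rw [w3]; apply Real.exp_le_exp.2
      have := mul_le_mul_of_nonneg_left l1 (by linarith : 0 ≤ 2*a-1)
      nlinarith [sq_nonneg (s t), sq_nonneg (d t)]
    have w6 := mul_le_mul_of_nonneg_left w5 (by linarith : 0 ≤ 2*a)
    rw [hM']
    calc wt a (d t) (s t)^2 * (1/2 + 2*a/(s t^2-d t^2)) = wt a (d t) (s t)^2/2 + 2*a*(wt a (d t) (s t)^2 / (s t^2-d t^2)) := by ring
      _ ≤ _ := by linarith
  have h2 := anti_of_deriv (f := fun t => (wt a (d t) (s t) * Real.cos (φ t))^2 + M' * d t^2)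
    (f' := fun t => 2 * (d t * Real.cos (φ t)) * (M' - wt a (d t) (s t)^2 * (1/2 + 2*a/(s t^2-d t^2)))) hu.2
    (fun r hr => by
      have hr' : r ∈ Icc 0 T := ⟨hu.1.trans hr.1, hr.2⟩
      refine HasDerivAt.congr_deriv (((h.wC_deriv hr').pow 2).add (((h.hd r hr').pow 2).const_mul M')) ?_
      push_cast
      ring)
    (fun r hr => by
      have hr' : r ∈ Icc 0 T := ⟨hu.1.trans hr.1.le, hr.2.le⟩
      have e1 := hub r hr'
      have e2 := hd0 r hr'
      have e3 : Real.cos (φ r) ≤ 0 := Real.cos_nonpos_of_pi_div_two_le_of_le (hdn r ⟨hr.1, hr.2.le⟩).le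
        (by linarith [hφπ r hr'])
      have e4 : d r * Real.cos (φ r) ≤ 0 := mul_nonpos_of_nonneg_of_nonpos e2 e3
      exact mul_nonpos_of_nonpos_of_nonneg (by linarith) (by linarith))
  simp only [hφT, hφu, Real.cos_pi, Real.cos_pi_div_two] at h2
  have hM0 : 0 ≤ M' := by rw [hM']; positivity
  have e1 : M' * d u^2 ≤ M' * Ks^2 := mul_le_mul_of_nonneg_left (by nlinarith [hK u hu, hd0 u hu]) hM0
  have e2 : 0 ≤ M' * d T^2 := by positivity
  have e3 : 0 < wm := hwm ▸ Real.exp_pos _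
  nlinarith

lemma bracket_pos {b S : ℝ} (hb : 2 ≤ b) (hS : S^2 ≤ 3) :
    1 ≤ 2*b^2 - 2*b*S - S^2 + 2*b^2*S^2 + 4*b*S^3 + S^4 := by
  have hS1 : S ≤ 1.733 := by nlinarith
  have hS2 : -1.733 ≤ S := by nlinarith
  rcases le_total 0 S with h | h
  · have e1 : 0 ≤ (b-2)*(b-S) := mul_nonneg (by linarith) (by linarith)
    have e2 : 0 ≤ 2*b^2*S^2 - 8*S^2 := by have := mul_nonneg (sq_nonneg S) (by nlinarith : 0 ≤ b^2 - 4); linarith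
    have e3 : 0 ≤ 4*b*S^3 := by positivity
    have e4 : 0 ≤ S^4 := by positivity
    nlinarith [sq_nonneg S]
  · have hp : 0 ≤ -S := by linarith
    -- reduce to b = 2
    have e1 : 2*2^2 - 2*2*S - S^2 + 2*2^2*S^2 + 4*2*S^3 + S^4 ≤ 2*b^2 - 2*b*S - S^2 + 2*b^2*S^2 + 4*b*S^3 + S^4 := by
      have : 0 ≤ (b-2)*(2*(b+2) - 2*S + 2*S^2*(b+2+2*S)) := by
        apply mul_nonneg (by linarith)
        have : 0 ≤ 2*S^2*(b+2+2*S) := by apply mul_nonneg (by positivity); linarith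
        linarith
      nlinarith
    have e2 : (1:ℝ) ≤ 2*2^2 - 2*2*S - S^2 + 2*2^2*S^2 + 4*2*S^3 + S^4 := by
      obtain ⟨p, hp2⟩ : ∃ p, p = -S := ⟨_, rfl⟩
      have hS' : S = -p := by linarith
      subst hS'
      have hp0 : 0 ≤ p := by linarith
      have hp1 : p ≤ 1.733 := by linarith
      have : 0 ≤ (1.733 - p)*p^2 := by positivity
      nlinarith [sq_nonneg (p^2-4*p+2), sq_nonneg (p-1.733), mul_nonneg (sub_nonneg.2 hp1) hp0, sq_nonneg (p^2 - 3), sq_nonneg (p^2-1.7*p)]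
    linarith

/-- positivity of the Sturm integrand -/
lemma sturm_pos {a b s d σ c z1 : ℝ} (ha : 1 ≤ a) (hb : b^2 = 4*a) (hb2 : 2 ≤ b) (hS : (s-b)^2 ≤ 3) (hz1 : 0 < z1) (hs : z1 ≤ s)
    (hc : 0 < c) (hq : s^2*c ≤ s^2-d^2) (hσ : σ^2 ≤ 1) (hd : 4*a*(9+4*b)*d^2 < c*z1^2) :
    0 < -2*σ^2 - 2*(s-b)*(s*(2*a/(s^2-d^2) - 1/2)) + (3-(s-b)^2)*(1/2+2*a/(s^2-d^2)) := by
  have hs0 : 0 < s := by linarith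
  have hq0 : 0 < s^2 - d^2 := lt_of_lt_of_le (by positivity) hq
  set S := s - b with hSd
  have hsb : s = b + S := by rw [hSd]; ring
  have h1 := bracket_pos hb2 hS
  obtain ⟨m, hm⟩ : ∃ m, m = 2*a/(s^2-d^2) := ⟨_, rfl⟩
  have hmq : m*(s^2-d^2) = 2*a := by rw [hm]; field_simp
  have hm0 : 0 < m := by rw [hm]; positivity
  rw [← hm]
  have hE : 2*s^2*(-2*σ^2 - 2*S*(s*(m - 1/2)) + (3-S^2)*(1/2+m))
     = (2*b^2 - 2*b*S - S^2 + 2*b^2*S^2 + 4*b*S^3 + S^4) + 4*s^2*(1-σ^2) + 2*m*d^2*(3-3*S^2-2*b*S) := by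
    have e : m*s^2 = b^2/2 + m*d^2 := by rw [hb]; linarith
    have : 2*s^2*(-2*σ^2 - 2*S*(s*(m - 1/2)) + (3-S^2)*(1/2+m)) = 
       -4*σ^2*s^2 + 2*S*s*s^2 + (3-S^2)*s^2 + (2*(3-S^2) - 4*S*s)*(m*s^2) := by ring
    rw [this, e, hsb]; ring
  have hS3 : |S| ≤ 2 := abs_le_of_sq_le_sq (by linarith) (by norm_num)
  obtain ⟨S1, S2⟩ := abs_le.1 hS3
  have hB : -(9+4*b) ≤ 3-3*S^2-2*b*S := by nlinarith
  have hmd : 2*m*d^2*(9+4*b) < 1 := by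
    have e1 : m * (c*z1^2) ≤ 2*a := by
      rw [← hmq]
      apply mul_le_mul_of_nonneg_left _ hm0.le
      have : z1^2 ≤ s^2 := by nlinarith
      nlinarith
    have e2 := mul_lt_mul_of_pos_left hd hm0
    have e3 : 2*a*(2*m*d^2*(9+4*b)) < 2*a*1 := by linarith
    exact lt_of_mul_lt_mul_left e3 (by linarith)
  have hB2 := mul_le_mul_of_nonneg_left hB (by positivity : 0 ≤ 2*m*d^2)
  have : 0 < 2*s^2*(-2*σ^2 - 2*S*(s*(m - 1/2)) + (3-S^2)*(1/2+m)) := by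
    rw [hE]
    have : 0 ≤ 4*s^2*(1-σ^2) := mul_nonneg (by positivity) (by linarith)
    linarith
  exact (pos_iff_pos_of_mul_pos this).1 (by positivity)

set_option maxHeartbeats 1000000 in
theorem Traj.sturm (h : Traj a s0 d s φ T) (ha : 1 ≤ a) (hs0 : s0^2 < 4*a)
    (hdp : ∀ t ∈ Ioo 0 T, 0 < d t) (hdT : 0 ≤ d T) (hφπ : ∀ t ∈ Icc 0 T, φ t ≤ Real.pi) {b z1 z c Ks : ℝ}
    (hb : b^2 = 4*a) (hb2 : 2 ≤ b) (hz : z = b + √3) (hz1 : z1 = b - √3) (hs01 : s0 ≤ z1)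
    (hc : c = Real.exp (-(Real.pi + z^2/2)))
    (hK : ∀ t ∈ Icc 0 T, d t ≤ Ks) (hsm : 4*a*(9+4*b)*Ks^2 < c*z1^2) (hsT : s T = z) : False := by
  have hpi := Real.pi_pos
  have h3 : √3^2 = 3 := Real.sq_sqrt (by norm_num)
  have h3p : 0 < √3 := Real.sqrt_pos.2 (by norm_num)
  have h32 : √3 < 2 := by nlinarith
  have hz1p : 0 < z1 := by linarith
  have hTT : T ∈ Icc 0 T := ⟨h.T0, le_rfl⟩
  have hcp : 0 < c := hc ▸ Real.exp_pos _
  obtain ⟨u, hu, hlow, hφ0, hdn, hor⟩ := h.struct (by linarith) hs0 hdp hφπ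
  have hd0 := h.d_nonneg hdp hdT
  have hφ0' := h.phi_nonneg hφ0
  have hsn : ∀ t ∈ Icc 0 T, 0 ≤ Real.sin (φ t) := fun t ht => Real.sin_nonneg_of_nonneg_of_le_pi (hφ0' t ht) (hφπ t ht)
  have hsz : ∀ t ∈ Icc 0 T, s t ≤ z := fun t ht => (h.s_mono hφ0 hφπ ht.1 ht.2 le_rfl).trans hsT.le
  have hq : ∀ t ∈ Icc 0 T, s t^2 * c ≤ s t^2 - d t^2 := fun t ht =>
    hc ▸ h.q_lower ha hd0 hφ0' hφπ ht (hsz t ht) (h.sp t ht) le_rfl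
  obtain ⟨p, hp, hsp⟩ := intermediate_value_Icc h.T0 h.cs (⟨by rw [h.s00]; exact hs01, by rw [hsT]; linarith⟩ : z1 ∈ Icc (s 0) (s T))
  have hpT : p < T := by
    rcases hp.2.eq_or_lt with e | e
    · rw [e] at hsp; linarith
    · exact e
  have h2 := strict_mono_of_deriv (f := fun t => (d t * (-2*(s t - b))) * (wt a (d t) (s t) * Real.sin (φ t)) - (3 - (s t-b)^2) * (wt a (d t) (s t) * Real.cos (φ t)))
    (f' := fun t => wt a (d t) (s t) * d t * (-2*Real.sin (φ t)^2 - 2*(s t-b)*(s t*(2*a/(s t^2-d t^2) - 1/2)) + (3-(s t-b)^2)*(1/2+2*a/(s t^2-d t^2)))) hpT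
    (fun r hr => by
      have hr' : r ∈ Icc 0 T := ⟨hp.1.trans hr.1, hr.2⟩
      have e1 := (h.hs r hr').sub_const b
      refine HasDerivAt.congr_deriv ((((h.hd r hr').mul (e1.const_mul (-2))).mul (h.wS_deriv hr')).sub (((e1.pow 2).const_sub 3).mul (h.wC_deriv hr'))) ?_
      simp only [Pi.mul_apply, Pi.pow_apply]
      push_cast
      ring)
    (fun r hr => by
      have hr' : r ∈ Icc 0 T := ⟨hp.1.trans hr.1.le, hr.2.le⟩
      have e1 : z1 ≤ s r := hsp ▸ h.s_mono hφ0 hφπ hp.1 hr.1.le hr.2.le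
      have e2 := hsz r hr'
      have e3 := hdp r ⟨hp.1.trans_lt hr.1, hr.2⟩
      have e4 := wt_pos a (d r) (s r)
      have e5 := hK r hr'
      have e6 : 4*a*(9+4*b)*d r^2 ≤ 4*a*(9+4*b)*Ks^2 := by
        apply mul_le_mul_of_nonneg_left (by nlinarith)
        have : 0 < a := by linarith
        have : 0 < b := by linarith
        positivity
      have e7 := sturm_pos (σ := Real.sin (φ r)) ha hb hb2 (by nlinarith) hz1p e1 hcp (hq r hr') (Real.sin_sq_le_one _) (by linarith)
      exact mul_pos (mul_pos e4 e3) e7)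
  rw [hsp, hsT, hz, hz1] at h2
  have g1 : 3 - (b - √3 - b)^2 = 0 := by nlinarith
  have g2 : 3 - (b + √3 - b)^2 = 0 := by nlinarith
  rw [g1, g2] at h2
  have hw1 := wt_pos a (d p) (b - √3)
  have hw2 := wt_pos a (d T) (b + √3)
  have k1 : 0 ≤ d p * (√3 * (wt a (d p) (b-√3) * Real.sin (φ p))) := by
    have := hd0 p hp
    have := hsn p hp
    positivity
  have k2 : 0 ≤ d T * (√3 * (wt a (d T) (b+√3) * Real.sin (φ T))) := by
    have := hsn T hTT
    positivity
  nlinarith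

theorem L4 {a : ℝ} (ha : 1 ≤ a) : ∃ slo z : ℝ, 0 < slo ∧ slo ≤ 1 ∧ slo < z ∧ ∀ (d s φ : ℝ → ℝ) (T : ℝ),
    Traj a slo d s φ T → (∀ t ∈ Ioo 0 T, 0 < d t) → 0 ≤ d T → (∀ t ∈ Icc 0 T, φ t ≤ Real.pi) → s T ≤ z →
    φ T < Real.pi ∧ s T < z := by
  obtain ⟨b, hb⟩ : ∃ b, b = 2*√a := ⟨_, rfl⟩
  have hbb : b^2 = 4*a := by rw [hb, mul_pow, Real.sq_sqrt (by linarith)]; norm_num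
  have hb0 : 0 ≤ b := by rw [hb]; positivity
  have hb2 : 2 ≤ b := by nlinarith
  have h3 : √3^2 = 3 := Real.sq_sqrt (by norm_num)
  have h3p : 0 < √3 := Real.sqrt_pos.2 (by norm_num)
  have h32 : √3 < 2 := by nlinarith
  obtain ⟨z, hz⟩ : ∃ z, z = b + √3 := ⟨_, rfl⟩
  obtain ⟨z1, hz1⟩ : ∃ z1, z1 = b - √3 := ⟨_, rfl⟩
  have hz1p : 0 < z1 := by linarith
  obtain ⟨c, hc⟩ : ∃ c, c = Real.exp (-(Real.pi + z^2/2)) := ⟨_, rfl⟩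
  obtain ⟨K3, hK3⟩ : ∃ c, c = Real.exp (a*(Real.pi+z^2/2) + z^2/2) := ⟨_, rfl⟩
  obtain ⟨M', hM'⟩ : ∃ c, c = Real.exp (2*a*(2*Real.log z))/2 + 2*a*Real.exp ((2*a-1)*(2*Real.log z)) := ⟨_, rfl⟩
  obtain ⟨wm, hwm⟩ : ∃ c, c = Real.exp (a*Real.log (4*a) - z^2/2) := ⟨_, rfl⟩
  have hcp : 0 < c := hc ▸ Real.exp_pos _
  have hwp : 0 < wm := hwm ▸ Real.exp_pos _
  obtain ⟨K, hK⟩ : ∃ K, K = 2/c+2*K3 := ⟨_, rfl⟩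
  have t1 : Tendsto (fun x : ℝ => M' * (K*x)^2) (𝓝[>] 0) (𝓝 0) := by
    have : Continuous (fun x : ℝ => M' * (K*x)^2) := by fun_prop
    have h := this.tendsto 0
    simp only [mul_zero, ne_eq, OfNat.ofNat_ne_zero, not_false_eq_true, zero_pow] at h
    exact h.mono_left nhdsWithin_le_nhds
  have t2 : Tendsto (fun x : ℝ => 4*a*(9+4*b) * (K*x)^2) (𝓝[>] 0) (𝓝 0) := by
    have : Continuous (fun x : ℝ => 4*a*(9+4*b) * (K*x)^2) := by fun_prop
    have h := this.tendsto 0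
    simp only [mul_zero, ne_eq, OfNat.ofNat_ne_zero, not_false_eq_true, zero_pow] at h
    exact h.mono_left nhdsWithin_le_nhds
  have ev := ((t1.eventually (gt_mem_nhds (by positivity : 0 < wm^2))).and (t2.eventually (gt_mem_nhds (by positivity : 0 < c*z1^2)))).and
    (Ioc_mem_nhdsGT (show (0:ℝ) < min 1 z1 from lt_min one_pos hz1p))
  obtain ⟨slo, ⟨h1, h2⟩, h4⟩ := ev.exists
  have h5 : slo ≤ 1 := h4.2.trans (min_le_left _ _)
  have h6 : slo ≤ z1 := h4.2.trans (min_le_right _ _)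
  refine ⟨slo, z, h4.1, h5, by linarith, ?_⟩
  intro d s φ T h hdp hdT hφπ hsT
  have hs0 : slo^2 < 4*a := by nlinarith [h4.1]
  have hds := h.d_small ha hs0 hdp hdT hφπ hsT hc hK3
  rw [← hK] at hds
  refine ⟨h.no_pi ha hs0 hdp hdT hφπ hsT hM' hwm hds h1, lt_of_le_of_ne hsT ?_⟩
  intro he
  exact h.sturm ha hs0 hdp hdT hφπ hbb hb2 hz hz1 h6 hc hds h2 he
end

section
variable {a s0 : ℝ} {d s φ : ℝ → ℝ} {T : ℝ}

theorem Traj.no_touch (h : Traj a s0 d s φ T) (ha : 1 ≤ a) (hs0 : s0^2 < 4*a) (hT : 0 < T)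
    (hdp : ∀ t ∈ Ioo 0 T, 0 < d t) (hφπ : ∀ t ∈ Icc 0 T, φ t ≤ Real.pi) (hdT : d T = 0) : ∀ t ∈ Ico 0 T, φ t < Real.pi := by
  intro τ hτ
  by_contra hcon
  have hpi := Real.pi_pos
  have hτT : τ ∈ Icc 0 T := ⟨hτ.1, hτ.2.le⟩
  have hφτ : φ τ = Real.pi := le_antisymm (hφπ τ hτT) (not_lt.1 hcon)
  have hτ0 : 0 < τ := by
    rcases hτ.1.eq_or_lt with e | e
    · rw [← e, h.φ0] at hφτ; linarith
    · exact e
  have hd0 := h.d_nonneg hdp hdT.ge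
  have hmax : IsLocalMax φ τ := by
    filter_upwards [Ioo_mem_nhds hτ0 hτ.2] with t ht
    rw [hφτ]; exact hφπ t ⟨ht.1.le, ht.2.le⟩
  have hk := hmax.hasDerivAt_eq_zero (h.hφ τ hτT)
  unfold Kf at hk
  rw [hφτ, Real.sin_pi, Real.cos_pi] at hk
  have hq := h.qp τ hτT
  have hs := h.sp τ hτT
  have hq4 : s τ^2 - d τ^2 = 4*a := by
    have e1 : s τ * (2*a/(s τ^2-d τ^2) - 1/2) = 0 := by linarith
    rcases mul_eq_zero.1 e1 with e | e
    · linarith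
    · have : 2*a/(s τ^2-d τ^2) = 1/2 := by linarith
      rw [div_eq_iff hq.ne'] at this
      linarith
  obtain ⟨u, hu, -, hlow, hφ0, hdn, hφu⟩ := h.struct_full (by linarith) hs0 hT hdp hφπ hdT
  have huτ : u < τ := by
    by_contra hc
    push Not at hc
    rcases hc.eq_or_lt with e | e
    · rw [e, hφu] at hφτ; linarith
    · have := hlow τ ⟨hτ.1, e⟩; linarith
  have hC : ∀ t ∈ Ioo u T, Real.cos (φ t) ≤ 0 := fun t ht =>
    Real.cos_nonpos_of_pi_div_two_le_of_le (hdn t ⟨ht.1, ht.2.le⟩).le (by linarith [hφπ t ⟨hu.1.le.trans ht.1.le, ht.2.le⟩])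
  have hS : ∀ t ∈ Icc 0 T, 0 ≤ Real.sin (φ t) := fun t ht =>
    Real.sin_nonneg_of_nonneg_of_le_pi (h.phi_nonneg hφ0 t ht) (hφπ t ht)
  have hqle : ∀ t ∈ Icc u τ, s t^2 - d t^2 ≤ 4*a := by
    intro t ht
    rw [← hq4]
    exact mono_of_deriv ht.2 (fun r hr => h.q_deriv (t := r) ⟨hu.1.le.trans (ht.1.trans hr.1), hr.2.trans hτ.2.le⟩)
      (fun r hr => by
        have hr' : r ∈ Icc 0 T := ⟨hu.1.le.trans (ht.1.trans hr.1.le), hr.2.le.trans hτ.2.le⟩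
        have e1 := hC r ⟨ht.1.trans_lt hr.1, hr.2.trans hτ.2⟩
        have e2 := mul_nonneg (h.sp r hr').le (hS r hr')
        have e3 := mul_nonpos_of_nonneg_of_nonpos (hd0 r hr') e1
        linarith)
  have h2 := mono_of_deriv huτ.le (fun r hr => h.wS_deriv (t := r) ⟨hu.1.le.trans hr.1, hr.2.trans hτ.2.le⟩)
    (fun r hr => by
      have hr' : r ∈ Icc 0 T := ⟨hu.1.le.trans hr.1.le, hr.2.le.trans hτ.2.le⟩
      have e1 := hqle r ⟨hr.1.le, hr.2.le⟩
      have e2 := h.qp r hr'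
      have e3 : 1/2 ≤ 2*a/(s r^2-d r^2) := by rw [le_div_iff₀ e2]; linarith
      exact mul_nonneg (wt_pos _ _ _).le (mul_nonneg (h.sp r hr').le (by linarith)))
  rw [hφu, hφτ, Real.sin_pi, Real.sin_pi_div_two] at h2
  have := wt_pos a (d u) (s u)
  linarith
end

structure CFlow (a M η Tt : ℝ) (d s φ : ℝ → ℝ → ℝ) : Prop where
  d0 : ∀ s0 ∈ Icc 0 M, d s0 0 = 0
  s00 : ∀ s0 ∈ Icc 0 M, s s0 0 = s0
  φ0 : ∀ s0 ∈ Icc 0 M, φ s0 0 = 0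
  hd : ∀ s0 ∈ Icc 0 M, ∀ t ∈ Ioo (-Tt) Tt, HasDerivAt (d s0) (Real.cos (φ s0 t)) t
  hs : ∀ s0 ∈ Icc 0 M, ∀ t ∈ Ioo (-Tt) Tt, HasDerivAt (s s0) (Real.sin (φ s0 t)) t
  hφ : ∀ s0 ∈ Icc 0 M, ∀ t ∈ Ioo (-Tt) Tt, HasDerivAt (φ s0) (Kcut a M η (d s0 t) (s s0 t) (φ s0 t)) t
  cd : ContinuousOn (fun p : ℝ × ℝ => d p.1 p.2) (Icc 0 M ×ˢ Icc (-Tt) Tt)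
  cs : ContinuousOn (fun p : ℝ × ℝ => s p.1 p.2) (Icc 0 M ×ˢ Icc (-Tt) Tt)
  cφ : ContinuousOn (fun p : ℝ × ℝ => φ p.1 p.2) (Icc 0 M ×ˢ Icc (-Tt) Tt)

theorem CFlow.exists (a M η T : ℝ) (ha : 0 ≤ a) (hM : 0 < M) (hη : 0 < η) (hT : 0 < T) : ∃ d s φ, CFlow a M η T d s φ := by
  obtain ⟨d, s, φ, h1, h2, h3, h4⟩ := flow_exists a M η T ha hM hη hT
  exact ⟨d, s, φ, fun s0 hs => (h1 s0 hs).1, fun s0 hs => (h1 s0 hs).2.1, fun s0 hs => (h1 s0 hs).2.2.1,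
    fun s0 hs t ht => ((h1 s0 hs).2.2.2 t ht).1, fun s0 hs t ht => ((h1 s0 hs).2.2.2 t ht).2.1,
    fun s0 hs t ht => ((h1 s0 hs).2.2.2 t ht).2.2, h2, h3, h4⟩

section
variable {a M η Tt : ℝ} {d s φ : ℝ → ℝ → ℝ}

lemma CFlow.hφ' (F : CFlow a M η Tt d s φ) (hη : 0 < η) {s0 t : ℝ} (hs0 : s0 ∈ Icc 0 M) (ht : t ∈ Ioo (-Tt) Tt)
    (hsp : 0 < s s0 t) (hsM : s s0 t ≤ M) (hq : η ≤ s s0 t^2 - d s0 t^2) :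
    HasDerivAt (φ s0) (Kf a (d s0 t) (s s0 t) (φ s0 t)) t := by
  have h1 := F.hφ s0 hs0 t ht
  have h2 : |s s0 t| ≤ M := by rw [abs_of_pos hsp]; exact hsM
  have h3 : |d s0 t| ≤ M := by
    refine le_trans ?_ hsM
    exact abs_le_of_sq_le_sq (by linarith) hsp.le
  rwa [Kcut_eq h3 h2 hq] at h1

lemma CFlow.traj (F : CFlow a M η Tt d s φ) (hη : 0 < η) {s0 T : ℝ} (hs0 : s0 ∈ Icc 0 M) (hT : 0 ≤ T) (hTt : T < Tt)
    (hg : ∀ t ∈ Icc 0 T, 0 < s s0 t ∧ s s0 t ≤ M ∧ η ≤ s s0 t^2 - d s0 t^2) : Traj a s0 (d s0) (s s0) (φ s0) T := by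
  have hh : ∀ t ∈ Icc 0 T, t ∈ Ioo (-Tt) Tt := fun t ht => ⟨by linarith [ht.1], ht.2.trans_lt hTt⟩
  exact ⟨hT, F.d0 s0 hs0, F.s00 s0 hs0, F.φ0 s0 hs0, fun t ht => F.hd s0 hs0 t (hh t ht), fun t ht => F.hs s0 hs0 t (hh t ht),
    fun t ht => F.hφ' hη hs0 (hh t ht) (hg t ht).1 (hg t ht).2.1 (hg t ht).2.2, fun t ht => (hg t ht).1,
    fun t ht => hη.trans_le (hg t ht).2.2⟩

/-- uniform short time positivity -/
lemma CFlow.short (F : CFlow a M η Tt d s φ) (ha : 0 ≤ a) (hM : 0 < M) (hη : 0 < η) (hTt : 0 < Tt) :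
    ∃ t0, 0 < t0 ∧ t0 < Tt ∧ ∀ s0 ∈ Icc 0 M, ∀ t ∈ Ioc 0 t0, 0 < d s0 t ∧ φ s0 t ≤ 1 := by
  set B := 2*M*(1/2+2*a/η) with hB
  have hB0 : 0 < B := by positivity
  refine ⟨min (1/B) (Tt/2), lt_min (by positivity) (by linarith), (min_le_right _ _).trans_lt (by linarith), ?_⟩
  intro s0 hs0
  have key : ∀ t ∈ Icc 0 (min (1/B) (Tt/2)), |φ s0 t| ≤ 1 := by
    intro t ht
    have htT : t ≤ Tt/2 := ht.2.trans (min_le_right _ _)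
    have htB : t*B ≤ 1 := by
      have := ht.2.trans (min_le_left _ _)
      rwa [le_div_iff₀ hB0] at this
    have hh : ∀ r ∈ Icc 0 t, r ∈ Ioo (-Tt) Tt := fun r hr => ⟨by linarith [hr.1], by linarith [hr.2]⟩
    have u1 := anti_of_deriv (f := fun r => φ s0 r - B * r) (f' := fun r => Kcut a M η (d s0 r) (s s0 r) (φ s0 r) - B * 1) ht.1
      (fun r hr => (F.hφ s0 hs0 r (hh r hr)).sub ((hasDerivAt_id r).const_mul B))
      (fun r hr => by
        have := (abs_le.1 (Kcut_abs (d := d s0 r) (s := s s0 r) (φ := φ s0 r) ha hM.le hη)).2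
        linarith)
    have u2 := mono_of_deriv (f := fun r => φ s0 r + B * r) (f' := fun r => Kcut a M η (d s0 r) (s s0 r) (φ s0 r) + B * 1) ht.1
      (fun r hr => (F.hφ s0 hs0 r (hh r hr)).add ((hasDerivAt_id r).const_mul B))
      (fun r hr => by
        have := (abs_le.1 (Kcut_abs (d := d s0 r) (s := s s0 r) (φ := φ s0 r) ha hM.le hη)).1
        linarith)
    rw [F.φ0 s0 hs0] at u1 u2
    rw [abs_le]; constructor <;> linarith
  intro t ht
  have htT : t ≤ Tt/2 := ht.2.trans (min_le_right _ _)
  refine ⟨?_, (abs_le.1 (key t ⟨ht.1.le, ht.2⟩)).2⟩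
  have := strict_mono_of_deriv ht.1 (fun r hr => F.hd s0 hs0 r ⟨by linarith [hr.1], by linarith [hr.2]⟩)
    (fun r hr => Real.cos_pos_of_le_one (key r ⟨hr.1.le, hr.2.le.trans ht.2⟩))
  rwa [F.d0 s0 hs0] at this

lemma CFlow.cont1 (F : CFlow a M η Tt d s φ) {s0 : ℝ} (hs0 : s0 ∈ Icc 0 M) {u v : ℝ} (hu : -Tt < u) (hv : v < Tt) :
    ContinuousOn (d s0) (Icc u v) ∧ ContinuousOn (s s0) (Icc u v) ∧ ContinuousOn (φ s0) (Icc u v) := by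
  have hh : ∀ r ∈ Icc u v, r ∈ Ioo (-Tt) Tt := fun r hr => ⟨by linarith [hr.1], by linarith [hr.2]⟩
  exact ⟨fun t ht => (F.hd s0 hs0 t (hh t ht)).continuousAt.continuousWithinAt, fun t ht => (F.hs s0 hs0 t (hh t ht)).continuousAt.continuousWithinAt,
    fun t ht => (F.hφ s0 hs0 t (hh t ht)).continuousAt.continuousWithinAt⟩
end

section
variable {a M η Tt : ℝ} {d s φ : ℝ → ℝ → ℝ}

def GoodAt (M η Tt : ℝ) (d s φ : ℝ → ℝ → ℝ) (s0 t1 : ℝ) : Prop :=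
  0 < t1 ∧ t1 < Tt ∧ d s0 t1 = 0 ∧ (∀ t ∈ Ioo 0 t1, 0 < d s0 t) ∧
    ∀ t ∈ Icc 0 t1, φ s0 t < Real.pi ∧ η < s s0 t^2 - d s0 t^2 ∧ 0 < s s0 t ∧ s s0 t < M

lemma CFlow.contAt (F : CFlow a M η Tt d s φ) {s0 t : ℝ} (hs0 : s0 ∈ Ioo 0 M) (ht : t ∈ Ioo (-Tt) Tt) :
    ContinuousAt (fun p : ℝ × ℝ => d p.1 p.2) (s0, t) ∧ ContinuousAt (fun p : ℝ × ℝ => s p.1 p.2) (s0, t) ∧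
    ContinuousAt (fun p : ℝ × ℝ => φ p.1 p.2) (s0, t) := by
  have : Icc 0 M ×ˢ Icc (-Tt) Tt ∈ 𝓝 (s0, t) := prod_mem_nhds (Icc_mem_nhds hs0.1 hs0.2) (Icc_mem_nhds ht.1 ht.2)
  exact ⟨F.cd.continuousAt this, F.cs.continuousAt this, F.cφ.continuousAt this⟩

lemma GoodAt.traj {s0 t1 : ℝ} (F : CFlow a M η Tt d s φ) (hη : 0 < η) (hs0 : s0 ∈ Icc 0 M)
    (h : GoodAt M η Tt d s φ s0 t1) : Traj a s0 (d s0) (s s0) (φ s0) t1 :=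
  F.traj hη hs0 h.1.le h.2.1 (fun t ht => ⟨(h.2.2.2.2 t ht).2.2.1, (h.2.2.2.2 t ht).2.2.2.le, (h.2.2.2.2 t ht).2.1.le⟩)

set_option maxHeartbeats 1000000 in
theorem good_open (F : CFlow a M η Tt d s φ) (ha : 1 ≤ a) (hM : 0 < M) (hη : 0 < η) {s0 t1 : ℝ} (hs0 : s0 ∈ Ioo 0 M) (hs4 : s0^2 < 4*a)
    (h : GoodAt M η Tt d s φ s0 t1) : ∀ᶠ s' in 𝓝 s0, ∃ t', GoodAt M η Tt d s φ s' t' := by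
  have hpi := Real.pi_pos
  have hs0' : s0 ∈ Icc 0 M := ⟨hs0.1.le, hs0.2.le⟩
  have tr := h.traj F hη hs0'
  obtain ⟨h1, h2, h3, h4, h5⟩ := h
  have hTt : 0 < Tt := h1.trans h2
  obtain ⟨t0, ht0, ht0T, hsh⟩ := F.short (by linarith) hM hη hTt
  obtain ⟨u, hu, -, -, -, hdn, -⟩ := tr.struct_full (by linarith) hs4 h1 h4 (fun t ht => (h5 t ht).1.le) h3
  have hφ1 := hdn t1 ⟨hu.2, le_rfl⟩
  have h51 := h5 t1 ⟨h1.le, le_rfl⟩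
  have ht1T : t1 ∈ Ioo (-Tt) Tt := ⟨by linarith, h2⟩
  have cφ := (F.hφ s0 hs0' t1 ht1T).continuousAt
  have cs := (F.hs s0 hs0' t1 ht1T).continuousAt
  have cd := (F.hd s0 hs0' t1 ht1T).continuousAt
  have ev : ∀ᶠ t in 𝓝 t1, (Real.pi/2 < φ s0 t ∧ φ s0 t < Real.pi) ∧ η < s s0 t^2 - d s0 t^2 ∧ 0 < s s0 t ∧ s s0 t < M := by
    refine ((cφ.eventually (lt_mem_nhds hφ1)).and (cφ.eventually (gt_mem_nhds h51.1))).and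
      ((((cs.pow 2).sub (cd.pow 2)).eventually (lt_mem_nhds h51.2.1)).and
        ((cs.eventually (lt_mem_nhds h51.2.2.1)).and (cs.eventually (gt_mem_nhds h51.2.2.2))))
  obtain ⟨ε, hε, hball⟩ := Metric.eventually_nhds_iff.1 ev
  obtain ⟨t2, ht2, ht2ε, ht2T⟩ : ∃ t2, t1 < t2 ∧ t2 < t1 + ε ∧ t2 < Tt := by
    obtain ⟨t2, e1, e2⟩ := exists_between (lt_min (show t1 < t1 + ε by linarith) h2)
    exact ⟨t2, e1, e2.trans_le (min_le_left _ _), e2.trans_le (min_le_right _ _)⟩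
  have hb : ∀ t ∈ Icc t1 t2, (Real.pi/2 < φ s0 t ∧ φ s0 t < Real.pi) ∧ η < s s0 t^2 - d s0 t^2 ∧ 0 < s s0 t ∧ s s0 t < M := by
    intro t ht
    apply hball
    rw [Real.dist_eq, abs_of_nonneg (by linarith [ht.1])]
    linarith [ht.2]
  have hd2 : d s0 t2 < 0 := by
    rw [← h3]
    exact strict_anti_of_deriv ht2 (fun r hr => F.hd s0 hs0' r ⟨by linarith [hr.1], by linarith [hr.2]⟩)
      (fun r hr => by
        have := (hb r ⟨hr.1.le, hr.2.le⟩).1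
        exact Real.cos_neg_of_pi_div_two_lt_of_lt this.1 (by linarith [this.2]))
  have hall : ∀ t ∈ Icc 0 t2, φ s0 t < Real.pi ∧ η < s s0 t^2 - d s0 t^2 ∧ 0 < s s0 t ∧ s s0 t < M := by
    intro t ht
    rcases le_total t t1 with e | e
    · exact h5 t ⟨ht.1, e⟩
    · have := hb t ⟨e, ht.2⟩
      exact ⟨this.1.2, this.2⟩
  have evK : ∀ᶠ s' in 𝓝 s0, ∀ t ∈ Icc 0 t2, φ s' t < Real.pi ∧ η < s s' t^2 - d s' t^2 ∧ 0 < s s' t ∧ s s' t < M := by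
    apply isCompact_Icc.eventually_forall_of_forall_eventually
    intro t ht
    obtain ⟨c1, c2, c3⟩ := F.contAt hs0 (t := t) ⟨by linarith [ht.1], by linarith [ht.2]⟩
    have := hall t ht
    exact (c3.eventually (gt_mem_nhds this.1)).and ((((c2.pow 2).sub (c1.pow 2)).eventually (lt_mem_nhds this.2.1)).and
        ((c2.eventually (lt_mem_nhds this.2.2.1)).and (c2.eventually (gt_mem_nhds this.2.2.2))))
  have evd : ∀ᶠ s' in 𝓝 s0, d s' t2 < 0 := by
    have c1 := (F.contAt hs0 (t := t2) ⟨by linarith, ht2T⟩).1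
    have : ContinuousAt (fun s' : ℝ => (s', t2)) s0 := by fun_prop
    have c2 := ContinuousAt.comp (f := fun s' : ℝ => (s', t2)) (g := fun p : ℝ × ℝ => d p.1 p.2) c1 this
    exact c2.eventually (gt_mem_nhds hd2)
  filter_upwards [evK, evd, Ioo_mem_nhds hs0.1 hs0.2] with s' k1 k2 k3
  have hs' : s' ∈ Icc 0 M := ⟨k3.1.le, k3.2.le⟩
  have ht02 : t0 < t2 := by
    by_contra hc
    push Not at hc
    have := (hsh s' hs' t2 ⟨by linarith, hc⟩).1
    linarith
  obtain ⟨τ, hτ, hτ0, hτp⟩ := first_zero (f := d s') (F.cont1 hs' (u := t0) (v := t2) (by linarith) ht2T).1 (hsh s' hs' t0 ⟨ht0, le_rfl⟩).1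
    ⟨t2, ⟨ht02.le, le_rfl⟩, k2.le⟩
  refine ⟨τ, ht0.trans hτ.1, hτ.2.trans_lt ht2T, hτ0, ?_, fun t ht => k1 t ⟨ht.1, ht.2.trans hτ.2⟩⟩
  intro t ht
  rcases le_total t t0 with e | e
  · exact (hsh s' hs' t ⟨ht.1, e⟩).1
  · exact hτp t ⟨e, ht.2⟩

def Succ (a s0 t1 : ℝ) (d s φ : ℝ → ℝ) : Prop :=
  Traj a s0 d s φ t1 ∧ 0 < t1 ∧ (∀ t ∈ Ioo 0 t1, 0 < d t) ∧ (∀ t ∈ Ioo 0 t1, 0 < φ t ∧ φ t < Real.pi) ∧ d t1 = 0 ∧ φ t1 = Real.pi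

/-- weak good implies good or success -/
theorem weak_good (F : CFlow a M η Tt d s φ) (ha : 1 ≤ a) (hM : 0 < M) (hη : 0 < η) {s0 tb : ℝ} (hs0 : s0 ∈ Ioo 0 M) (hs4 : s0^2 < 4*a)
    (htb : 0 < tb) (htT : tb < Tt) (hd : d s0 tb = 0) (hφ : ∀ t ∈ Icc 0 tb, φ s0 t ≤ Real.pi ∧ η < s s0 t^2 - d s0 t^2 ∧ 0 < s s0 t ∧ s s0 t < M) :
    ∃ t1, t1 < Tt ∧ (GoodAt M η Tt d s φ s0 t1 ∨ Succ a s0 t1 (d s0) (s s0) (φ s0)) := by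
  have hs0' : s0 ∈ Icc 0 M := ⟨hs0.1.le, hs0.2.le⟩
  have hTt : 0 < Tt := htb.trans htT
  obtain ⟨t0, ht0, ht0T, hsh⟩ := F.short (by linarith) hM hη hTt
  have ht0b : t0 < tb := by
    by_contra hc
    push Not at hc
    have := (hsh s0 hs0' tb ⟨htb, hc⟩).1
    linarith
  obtain ⟨τ, hτ, hτ0, hτp⟩ := first_zero (f := d s0) (F.cont1 hs0' (u := t0) (v := tb) (by linarith) htT).1 (hsh s0 hs0' t0 ⟨ht0, le_rfl⟩).1
    ⟨tb, ⟨ht0b.le, le_rfl⟩, hd.le⟩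
  have hτ00 : 0 < τ := ht0.trans hτ.1
  have hdp : ∀ t ∈ Ioo 0 τ, 0 < d s0 t := by
    intro t ht
    rcases le_total t t0 with e | e
    · exact (hsh s0 hs0' t ⟨ht.1, e⟩).1
    · exact hτp t ⟨e, ht.2⟩
  have hφ' : ∀ t ∈ Icc 0 τ, φ s0 t ≤ Real.pi ∧ η < s s0 t^2 - d s0 t^2 ∧ 0 < s s0 t ∧ s s0 t < M := fun t ht => hφ t ⟨ht.1, ht.2.trans hτ.2⟩
  have tr : Traj a s0 (d s0) (s s0) (φ s0) τ := F.traj hη hs0' hτ00.le (hτ.2.trans_lt htT)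
    (fun t ht => ⟨(hφ' t ht).2.2.1, (hφ' t ht).2.2.2.le, (hφ' t ht).2.1.le⟩)
  have nt := tr.no_touch ha hs4 hτ00 hdp (fun t ht => (hφ' t ht).1) hτ0
  refine ⟨τ, hτ.2.trans_lt htT, ?_⟩
  rcases (hφ' τ ⟨hτ00.le, le_rfl⟩).1.eq_or_lt with e | e
  · right
    obtain ⟨u, hu, -, -, hp, -, -⟩ := tr.struct_full (by linarith) hs4 hτ00 hdp (fun t ht => (hφ' t ht).1) hτ0
    exact ⟨tr, hτ00, hdp, fun t ht => ⟨hp t ⟨ht.1, ht.2.le⟩, nt t ⟨ht.1.le, ht.2⟩⟩, hτ0, e⟩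
  · left
    refine ⟨hτ00, hτ.2.trans_lt htT, hτ0, hdp, fun t ht => ⟨?_, (hφ' t ht).2⟩⟩
    rcases ht.2.eq_or_lt with e' | e'
    · rw [e']; exact e
    · exact nt t ⟨ht.1, e'⟩

/-- closedness of the compact family -/
theorem weak_closed (F : CFlow a M η Tt d s φ) {slo shi tlo thi q0 M0 : ℝ} (hlo : 0 ≤ slo) (hhi : shi ≤ M) (htlo : 0 ≤ tlo) (hthi : thi ≤ Tt) :
    IsClosed {s0 | s0 ∈ Icc slo shi ∧ ∃ t1 ∈ Icc tlo thi, d s0 t1 = 0 ∧ ∀ l ∈ Icc (0:ℝ) 1, φ s0 (l*t1) ≤ Real.pi ∧ q0 ≤ s s0 (l*t1)^2 - d s0 (l*t1)^2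
       ∧ slo ≤ s s0 (l*t1) ∧ s s0 (l*t1) ≤ M0} := by
  set K := Icc slo shi ×ˢ Icc tlo thi with hK
  have hKc : IsCompact K := isCompact_Icc.prod isCompact_Icc
  have hmap : ∀ l ∈ Icc (0:ℝ) 1, MapsTo (fun p : ℝ × ℝ => (p.1, l*p.2)) K (Icc 0 M ×ˢ Icc (-Tt) Tt) := by
    intro l hl p hp
    obtain ⟨⟨e1, e2⟩, e3, e4⟩ := hp
    have e0 : 0 ≤ p.2 := htlo.trans e3
    have f1 := mul_nonneg hl.1 e0
    have f2 := mul_le_mul_of_nonneg_right hl.2 e0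
    exact ⟨⟨hlo.trans e1, e2.trans hhi⟩, ⟨by simp only; linarith, by simp only; linarith⟩⟩
  have hcl : ∀ l : ℝ, Continuous (fun p : ℝ × ℝ => (p.1, l*p.2)) := fun l => by fun_prop
  have kd : ∀ l ∈ Icc (0:ℝ) 1, ContinuousOn (fun p : ℝ × ℝ => d p.1 (l*p.2)) K := fun l hl => F.cd.comp (hcl l).continuousOn (hmap l hl)
  have ks : ∀ l ∈ Icc (0:ℝ) 1, ContinuousOn (fun p : ℝ × ℝ => s p.1 (l*p.2)) K := fun l hl => F.cs.comp (hcl l).continuousOn (hmap l hl)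
  have kφ : ∀ l ∈ Icc (0:ℝ) 1, ContinuousOn (fun p : ℝ × ℝ => φ p.1 (l*p.2)) K := fun l hl => F.cφ.comp (hcl l).continuousOn (hmap l hl)
  have hclosed : IsClosed (⋂ l : Icc (0:ℝ) 1, ((K ∩ (fun p : ℝ × ℝ => d p.1 ((1:ℝ)*p.2)) ⁻¹' {0}) ∩ ((K ∩ (fun p : ℝ × ℝ => φ p.1 (l*p.2)) ⁻¹' Iic Real.pi) ∩
      ((K ∩ (fun p : ℝ × ℝ => s p.1 (l*p.2)^2 - d p.1 (l*p.2)^2) ⁻¹' Ici q0) ∩ (K ∩ (fun p : ℝ × ℝ => s p.1 (l*p.2)) ⁻¹' Icc slo M0))))) := by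
    apply isClosed_iInter
    intro l
    refine ((kd 1 (by simp)).preimage_isClosed_of_isClosed hKc.isClosed isClosed_singleton).inter
      (((kφ l l.2).preimage_isClosed_of_isClosed hKc.isClosed isClosed_Iic).inter
      (((((ks l l.2).pow 2).sub ((kd l l.2).pow 2)).preimage_isClosed_of_isClosed hKc.isClosed isClosed_Ici).inter
      ((ks l l.2).preimage_isClosed_of_isClosed hKc.isClosed isClosed_Icc)))
  have hcomp := hKc.inter_right hclosed
  have himg := (hcomp.image continuous_fst).isClosed
  convert himg using 1
  ext x
  simp only [mem_setOf_eq, mem_image, mem_inter_iff, mem_iInter, mem_preimage, Prod.exists, exists_and_right, exists_eq_right]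
  constructor
  · rintro ⟨hx, t1, ht1, hd0, hl⟩
    have hm : (x, t1) ∈ K := ⟨hx, ht1⟩
    refine ⟨t1, hm, fun l => ⟨⟨hm, by simpa using hd0⟩, ⟨hm, (hl l l.2).1⟩, ⟨hm, (hl l l.2).2.1⟩, hm, (hl l l.2).2.2⟩⟩
  · rintro ⟨t1, hm, hl⟩
    refine ⟨hm.1, t1, hm.2, by simpa using (hl ⟨0, by simp⟩).1.2, fun l hl' => ?_⟩
    have := hl ⟨l, hl'⟩
    exact ⟨this.2.1.2, this.2.2.1.2, this.2.2.2.2⟩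
end

section
variable {a M η Tt : ℝ} {d s φ : ℝ → ℝ → ℝ}

lemma apriori (ha : 1 ≤ a) {slo M0 s0 T : ℝ} {d s φ : ℝ → ℝ} (hlo : 0 < slo) (h : Traj a s0 d s φ T) (hs : slo ≤ s0) (hs4 : s0^2 < 4*a)
    (hdp : ∀ t ∈ Ioo 0 T, 0 < d t) (hdT : 0 ≤ d T) (hφπ : ∀ t ∈ Icc 0 T, φ t ≤ Real.pi) (hM0 : s T ≤ M0) :
    T ≤ 3*M0 ∧ ∀ t ∈ Icc 0 T, slo ≤ s t ∧ s t ≤ M0 ∧ slo^2*Real.exp (-(Real.pi + M0^2/2)) ≤ s t^2 - d t^2 := by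
  obtain ⟨u, hu, -, hp, -⟩ := h.struct (by linarith) hs4 hdp hφπ
  have hT := h.time_le (by linarith) hs4 hdp hφπ
  refine ⟨by linarith, fun t ht => ?_⟩
  have m1 := h.s_mono hp hφπ le_rfl ht.1 ht.2
  have m2 := h.s_mono hp hφπ ht.1 ht.2 le_rfl
  rw [h.s00] at m1
  refine ⟨hs.trans m1, m2.trans hM0, ?_⟩
  exact h.q_lower ha (h.d_nonneg hdp hdT) (h.phi_nonneg hp) hφπ ht (m2.trans hM0) hlo (hs.trans m1)

theorem slo_good (F : CFlow a M η Tt d s φ) (ha : 1 ≤ a) (hM : 0 < M) (hη : 0 < η) {slo z M0 : ℝ} (hlo : 0 < slo) (hlo1 : slo ≤ 1) (hloz : slo < z)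
    (hL4 : ∀ d s φ T, Traj a slo d s φ T → (∀ t ∈ Ioo 0 T, 0 < d t) → 0 ≤ d T → (∀ t ∈ Icc 0 T, φ t ≤ Real.pi) → s T ≤ z → φ T < Real.pi ∧ s T < z)
    (hz : z ≤ M0) (hM0 : M0 < M) (hT : 3*M0 < Tt) (hη2 : slo^2*Real.exp (-(Real.pi + M0^2/2)) = 2*η) :
    ∃ t1, GoodAt M η Tt d s φ slo t1 := by
  have hs4 : slo^2 < 4*a := by nlinarith
  have hs0 : slo ∈ Icc 0 M := ⟨hlo.le, by linarith⟩
  have hTt : 0 < Tt := by linarith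
  have hpi := Real.pi_gt_three
  have hηs : η < slo^2 := by
    have : Real.exp (-(Real.pi + M0^2/2)) ≤ 1 := Real.exp_le_one_iff.2 (by nlinarith [sq_nonneg M0])
    nlinarith [sq_nonneg slo]
  obtain ⟨t0, ht0, ht0T, hsh⟩ := F.short (by linarith) hM hη hTt
  have h0T : (0:ℝ) ∈ Ioo (-Tt) Tt := ⟨by linarith, hTt⟩
  have cs := (F.hs slo hs0 0 h0T).continuousAt
  have cd := (F.hd slo hs0 0 h0T).continuousAt
  have ev : ∀ᶠ t in 𝓝 (0:ℝ), η < s slo t^2 - d slo t^2 ∧ 0 < s slo t ∧ s slo t < z := by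
    refine (((cs.pow 2).sub (cd.pow 2)).eventually (lt_mem_nhds ?_)).and
        ((cs.eventually (lt_mem_nhds ?_)).and (cs.eventually (gt_mem_nhds ?_)))
    · simp only [Pi.sub_apply, Pi.pow_apply]; rw [F.s00 slo hs0, F.d0 slo hs0]; linarith
    · rw [F.s00 slo hs0]; exact hlo
    · rw [F.s00 slo hs0]; exact hloz
  obtain ⟨ε, hε, hball⟩ := Metric.eventually_nhds_iff.1 ev
  obtain ⟨T2, hT2a, hT2b⟩ := exists_between hT
  set t' := min (min t0 (ε/2)) (3*M0) with ht'
  have ht'0 : 0 < t' := lt_min (lt_min ht0 (by linarith)) (by linarith)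
  have ht'1 : t' ≤ t0 := (min_le_left _ _).trans (min_le_left _ _)
  have ht'2 : t' ≤ ε/2 := (min_le_left _ _).trans (min_le_right _ _)
  have ht'3 : t' ≤ 3*M0 := min_le_right _ _
  have start : ∀ t ∈ Icc 0 t', (0 < t → 0 < d slo t) ∧ φ slo t < Real.pi ∧ η < s slo t^2 - d slo t^2 ∧ 0 < s slo t ∧ s slo t < z := by
    intro t ht
    refine ⟨fun h => (hsh slo hs0 t ⟨h, ht.2.trans ht'1⟩).1, ?_, ?_⟩
    · rcases ht.1.eq_or_lt with h | h
      · rw [← h, F.φ0 slo hs0]; linarith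
      · linarith [(hsh slo hs0 t ⟨h, ht.2.trans ht'1⟩).2]
    · apply hball
      rw [Real.dist_eq, abs_of_nonneg (by linarith [ht.1])]
      linarith [ht.2]
  set f : ℝ → ℝ := fun t => min (min (d slo t) (Real.pi - φ slo t)) (min (min (s slo t^2 - d slo t^2 - η) (s slo t)) (z - s slo t)) with hf
  have hfpos : ∀ t, 0 < f t ↔ (0 < d slo t ∧ φ slo t < Real.pi) ∧ (η < s slo t^2 - d slo t^2 ∧ 0 < s slo t) ∧ s slo t < z := by
    intro t; simp only [hf, lt_min_iff, sub_pos]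
  have hfnn : ∀ t, 0 ≤ f t ↔ (0 ≤ d slo t ∧ φ slo t ≤ Real.pi) ∧ (η ≤ s slo t^2 - d slo t^2 ∧ 0 ≤ s slo t) ∧ s slo t ≤ z := by
    intro t; simp only [hf, le_min_iff, sub_nonneg]
  have key : ∀ τ ∈ Icc t' T2, (∀ t ∈ Ico t' τ, 0 < f t) → 0 ≤ f τ → τ ≤ 3*M0 ∧ φ slo τ < Real.pi ∧ η < s slo τ^2 - d slo τ^2 ∧ 0 < s slo τ ∧ s slo τ < z := by
    intro τ hτ h1 h2
    have all : ∀ t ∈ Icc 0 τ, φ slo t ≤ Real.pi ∧ η ≤ s slo t^2 - d slo t^2 ∧ 0 < s slo t ∧ s slo t ≤ z := by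
      intro t ht
      rcases le_total t t' with e | e
      · have := start t ⟨ht.1, e⟩
        exact ⟨this.2.1.le, this.2.2.1.le, this.2.2.2.1, this.2.2.2.2.le⟩
      · rcases ht.2.eq_or_lt with e' | e'
        · rw [e']
          obtain ⟨⟨a1, a2⟩, ⟨a3, a4⟩, a5⟩ := (hfnn τ).1 h2
          refine ⟨a2, a3, ?_, a5⟩
          rcases a4.eq_or_lt with e4 | e4
          · rw [← e4] at a3; nlinarith [sq_nonneg (d slo τ)]
          · exact e4
        · obtain ⟨⟨a1, a2⟩, ⟨a3, a4⟩, a5⟩ := (hfpos t).1 (h1 t ⟨e, e'⟩)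
          exact ⟨a2.le, a3.le, a4, a5.le⟩
    have hdp : ∀ t ∈ Ioo 0 τ, 0 < d slo t := by
      intro t ht
      rcases le_total t t' with e | e
      · exact (start t ⟨ht.1.le, e⟩).1 ht.1
      · exact ((hfpos t).1 (h1 t ⟨e, ht.2⟩)).1.1
    have hτ0 : 0 ≤ τ := by linarith [hτ.1]
    have tr := F.traj hη hs0 hτ0 (by linarith [hτ.2]) (fun t ht => ⟨(all t ht).2.2.1, by linarith [(all t ht).2.2.2], (all t ht).2.1⟩)
    have hφ : ∀ t ∈ Icc 0 τ, φ slo t ≤ Real.pi := fun t ht => (all t ht).1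
    have hdτ := ((hfnn τ).1 h2).1.1
    have hzτ := ((hfnn τ).1 h2).2.2
    have l4 := hL4 _ _ _ _ tr hdp hdτ hφ hzτ
    have ap := apriori ha hlo tr le_rfl hs4 hdp hdτ hφ (hzτ.trans hz)
    have := ap.2 τ ⟨hτ0, le_rfl⟩
    exact ⟨ap.1, l4.1, by linarith [this.2.2], by linarith [this.1], l4.2⟩
  have hfc : ContinuousOn f (Icc t' T2) := by
    obtain ⟨c1, c2, c3⟩ := F.cont1 hs0 (u := t') (v := T2) (by linarith) hT2b
    have m : ∀ {g h : ℝ → ℝ}, ContinuousOn g (Icc t' T2) → ContinuousOn h (Icc t' T2) → ContinuousOn (fun t => min (g t) (h t)) (Icc t' T2) :=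
      fun h1 h2 => ContinuousOn.inf h1 h2
    exact m (m c1 (continuousOn_const.sub c3)) (m (m (((c2.pow 2).sub (c1.pow 2)).sub continuousOn_const) c2) (continuousOn_const.sub c2))
  have hft' : 0 < f t' := by
    have := start t' ⟨ht'0.le, le_rfl⟩
    exact (hfpos t').2 ⟨⟨this.1 ht'0, this.2.1⟩, ⟨this.2.2.1, this.2.2.2.1⟩, this.2.2.2.2⟩
  have hex : ∃ t ∈ Icc t' T2, f t ≤ 0 := by
    by_contra hc
    push Not at hc
    have := (key T2 ⟨by linarith, le_rfl⟩ (fun t ht => hc t ⟨ht.1, ht.2.le⟩) (hc T2 ⟨by linarith, le_rfl⟩).le).1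
    linarith
  obtain ⟨τ, hτ, hfτ, hpos⟩ := first_zero hfc hft' hex
  obtain ⟨k1, k2, k3, k4, k5⟩ := key τ ⟨hτ.1.le, hτ.2⟩ hpos hfτ.ge
  have hdτ : d slo τ = 0 := by
    have h1 := ((hfnn τ).1 hfτ.ge).1.1
    rcases h1.eq_or_lt with e | e
    · exact e.symm
    · have := (hfpos τ).2 ⟨⟨e, k2⟩, ⟨k3, k4⟩, k5⟩
      linarith
  refine ⟨τ, ht'0.trans hτ.1, by linarith, hdτ, ?_, ?_⟩
  · intro t ht
    rcases le_total t t' with e | e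
    · exact (start t ⟨ht.1.le, e⟩).1 ht.1
    · exact ((hfpos t).1 (hpos t ⟨e, ht.2⟩)).1.1
  · intro t ht
    rcases le_total t t' with e | e
    · have := start t ⟨ht.1, e⟩
      exact ⟨this.2.1, this.2.2.1, this.2.2.2.1, by linarith [this.2.2.2.2]⟩
    · rcases ht.2.eq_or_lt with e' | e'
      · rw [e']; exact ⟨k2, k3, k4, by linarith⟩
      · obtain ⟨⟨a1, a2⟩, ⟨a3, a4⟩, a5⟩ := (hfpos t).1 (hpos t ⟨e, e'⟩)
        exact ⟨a2, a3, a4, by linarith⟩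
end

theorem main_exists {a : ℝ} (ha : 1 ≤ a) : ∃ (s0 t1 ε : ℝ) (d s φ : ℝ → ℝ), Succ a s0 t1 d s φ ∧ 0 < ε ∧
    ∀ t ∈ Ioc (-ε) t1, HasDerivAt d (Real.cos (φ t)) t ∧ HasDerivAt s (Real.sin (φ t)) t ∧ HasDerivAt φ (Kf a (d t) (s t) (φ t)) t ∧
      0 < s t ∧ 0 < s t^2 - d t^2 := by
  obtain ⟨slo, z, hlo, hlo1, hloz, hL4⟩ := L4 ha
  obtain ⟨M1, hM1, hL5⟩ := L5 ha hlo
  set M0 := max M1 z with hM0d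
  have hM0a : M1 ≤ M0 := le_max_left _ _
  have hM0z : z ≤ M0 := le_max_right _ _
  set shi := Real.sqrt (4*a-1/50) with hshi
  have hshi2 : shi^2 = 4*a-1/50 := Real.sq_sqrt (by linarith)
  have hshi1 : 1 ≤ shi := Real.one_le_sqrt.2 (by linarith)
  set M := 2*M0+shi+2 with hMd
  have hM : 0 < M := by linarith
  set η := slo^2*Real.exp (-(Real.pi + M0^2/2))/2 with hηd
  have hη : 0 < η := by positivity
  set Tt := 3*M0+1 with hTd
  have hTt : 0 < Tt := by linarith
  have hη2 : slo^2*Real.exp (-(Real.pi + M0^2/2)) = 2*η := by rw [hηd]; ring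
  have hηs : η < slo^2 := by
    have : Real.exp (-(Real.pi + M0^2/2)) ≤ 1 := Real.exp_le_one_iff.2 (by nlinarith [sq_nonneg M0, Real.pi_pos])
    nlinarith [sq_nonneg slo]
  obtain ⟨d, s, φ, F⟩ := CFlow.exists a M η Tt (by linarith) hM hη hTt
  obtain ⟨t0, ht0, ht0T, hsh⟩ := F.short (by linarith) hM hη hTt
  have hP0 := slo_good F ha hM hη hlo hlo1 hloz hL4 hM0z (by linarith) (by linarith) hη2
  have hin : ∀ s0 ∈ Icc slo shi, s0 ∈ Ioo 0 M ∧ s0 ∈ Icc 0 M ∧ s0^2 < 4*a := by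
    intro s0 h
    refine ⟨⟨by linarith [h.1], by linarith [h.2]⟩, ⟨by linarith [h.1], by linarith [h.2]⟩, ?_⟩
    nlinarith [h.1, h.2]
  suffices hS : ∃ s0 ∈ Icc slo shi, ∃ t1, t1 < Tt ∧ Succ a s0 t1 (d s0) (s s0) (φ s0) by
    obtain ⟨s0, hs0, t1, ht1, hS⟩ := hS
    obtain ⟨i1, i2, i3⟩ := hin s0 hs0
    have h0T : (0:ℝ) ∈ Ioo (-Tt) Tt := ⟨by linarith, hTt⟩
    have cs := (F.hs s0 i2 0 h0T).continuousAt
    have cd := (F.hd s0 i2 0 h0T).continuousAt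
    have ev : ∀ᶠ t in 𝓝 (0:ℝ), η < s s0 t^2 - d s0 t^2 ∧ 0 < s s0 t ∧ s s0 t < M := by
      refine (((cs.pow 2).sub (cd.pow 2)).eventually (lt_mem_nhds ?_)).and
          ((cs.eventually (lt_mem_nhds ?_)).and (cs.eventually (gt_mem_nhds ?_)))
      · simp only [Pi.sub_apply, Pi.pow_apply]; rw [F.s00 s0 i2, F.d0 s0 i2]; nlinarith [hs0.1]
      · rw [F.s00 s0 i2]; exact i1.1
      · rw [F.s00 s0 i2]; exact i1.2
    obtain ⟨ε, hε, hball⟩ := Metric.eventually_nhds_iff.1 ev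
    refine ⟨s0, t1, min ε Tt, d s0, s s0, φ s0, hS, lt_min hε hTt, ?_⟩
    intro t ht
    have e1 : -ε < t := by linarith [ht.1, min_le_left ε Tt]
    have e2 : -Tt < t := by linarith [ht.1, min_le_right ε Tt]
    have e3 : t < Tt := by linarith [ht.2]
    rcases le_total 0 t with h | h
    · have tr := hS.1
      have ht' : t ∈ Icc 0 t1 := ⟨h, ht.2⟩
      exact ⟨tr.hd t ht', tr.hs t ht', tr.hφ t ht', tr.sp t ht', tr.qp t ht'⟩
    · have := hball (y := t) (by rw [Real.dist_eq, abs_of_nonpos (by linarith)]; linarith)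
      exact ⟨F.hd s0 i2 t ⟨e2, e3⟩, F.hs s0 i2 t ⟨e2, e3⟩, F.hφ' hη i2 ⟨e2, e3⟩ this.2.1 this.2.2.le this.1.le, this.2.1, by linarith [this.1]⟩
  by_contra hno
  push Not at hno
  set P : Set ℝ := {s0 | ∃ t1, GoodAt M η Tt d s φ s0 t1} with hP
  have hC := weak_closed F (slo := slo) (shi := shi) (tlo := t0) (thi := 3*M0) (q0 := 2*η) (M0 := M0) hlo.le (by linarith) ht0.le (by linarith)
  have hPC : P ∩ Icc slo shi = {s0 | s0 ∈ Icc slo shi ∧ ∃ t1 ∈ Icc t0 (3*M0), d s0 t1 = 0 ∧ ∀ l ∈ Icc (0:ℝ) 1, φ s0 (l*t1) ≤ Real.pi ∧ 2*η ≤ s s0 (l*t1)^2 - d s0 (l*t1)^2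
       ∧ slo ≤ s s0 (l*t1) ∧ s s0 (l*t1) ≤ M0} := by
    ext s0
    constructor
    · rintro ⟨⟨t1, hg⟩, hs0⟩
      obtain ⟨i1, i2, i3⟩ := hin s0 hs0
      have tr := hg.traj F hη i2
      obtain ⟨g1, g2, g3, g4, g5⟩ := hg
      have hφ : ∀ t ∈ Icc 0 t1, φ s0 t ≤ Real.pi := fun t ht => (g5 t ht).1.le
      have hm := hL5 _ _ _ _ _ tr hs0.1 i3 g1 g4 hφ g3
      have ap := apriori ha hlo tr hs0.1 i3 g4 g3.ge hφ (hm.trans hM0a)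
      refine ⟨hs0, t1, ⟨?_, ap.1⟩, g3, ?_⟩
      · by_contra hc
        push Not at hc
        have := (hsh s0 i2 t1 ⟨g1, hc.le⟩).1
        linarith
      · intro l hl
        have hl' : l*t1 ∈ Icc 0 t1 := ⟨mul_nonneg hl.1 g1.le, by nlinarith [hl.2]⟩
        have := ap.2 _ hl'
        exact ⟨hφ _ hl', by linarith [this.2.2], this.1, this.2.1⟩
    · rintro ⟨hs0, t1, ht1, hd, hl⟩
      obtain ⟨i1, i2, i3⟩ := hin s0 hs0
      have ht1p : 0 < t1 := ht0.trans_le ht1.1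
      obtain ⟨t2, ht2, hg | hg⟩ := weak_good F ha hM hη i1 i3 ht1p (by linarith [ht1.2]) hd (by
        intro t ht
        have := hl (t/t1) ⟨div_nonneg ht.1 ht1p.le, (div_le_one ht1p).2 ht.2⟩
        rw [div_mul_cancel₀ _ ht1p.ne'] at this
        exact ⟨this.1, by linarith [this.2.1], by linarith [this.2.2.1], by linarith [this.2.2.2]⟩)
      · exact ⟨⟨t2, hg⟩, hs0⟩
      · exact absurd hg (hno s0 hs0 t2 ht2)
  have hsub : Icc slo shi ⊆ P := by
    apply IsClosed.Icc_subset_of_forall_exists_gt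
    · rw [hPC]; exact hC
    · exact hP0
    · rintro x ⟨⟨t1, hg⟩, hx⟩ y hy
      obtain ⟨i1, i2, i3⟩ := hin x ⟨hx.1, hx.2.le⟩
      have ev := good_open F ha hM hη i1 i3 hg
      have ev2 : ∀ᶠ r in 𝓝[>] x, r ∈ P := ev.filter_mono nhdsWithin_le_nhds
      have ev3 : ∀ᶠ r in 𝓝[>] x, r ∈ Ioc x y := Ioc_mem_nhdsGT hy
      obtain ⟨r, hr⟩ := (ev2.and ev3).exists
      exact ⟨r, hr⟩
  have hshiI : shi ∈ Icc slo shi := ⟨by linarith, le_rfl⟩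
  obtain ⟨t1, hg⟩ := hsub hshiI
  have tr := hg.traj F hη (hin shi hshiI).2.1
  obtain ⟨g1, g2, g3, g4, g5⟩ := hg
  exact tr.hi_fail ha hshi2 g1 g4 (fun t ht => (g5 t ht).1.le) g3

theorem main_final (n : ℕ) (hn : 2 ≤ n) : ∃ (Rstar T t₁ : ℝ) (x y θ : ℝ → ℝ),
      0 < Rstar ∧ (0 < T ∧ x 0 = Rstar / Real.sqrt 2 ∧ y 0 = Rstar / Real.sqrt 2 ∧ θ 0 = -(Real.pi / 4) ∧
  ∀ t ∈ Set.Ico 0 T, 0 < x t ∧ 0 < y t ∧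
    HasDerivAt x (Real.cos (θ t)) t ∧ HasDerivAt y (Real.sin (θ t)) t ∧
    HasDerivAt θ ((x t / 2 - ((n : ℝ) - 1) / x t) * Real.sin (θ t)
      + (((n : ℝ) - 1) / y t - y t / 2) * Real.cos (θ t)) t) ∧ t₁ ∈ Set.Ioo 0 T ∧
      x t₁ = y t₁ ∧ θ t₁ = -(5 * Real.pi / 4) ∧
      (∀ t ∈ Set.Ioo 0 t₁, 0 < y t ∧ y t < x t) ∧
      Set.InjOn (fun t => (x t, y t)) (Set.Icc 0 t₁) := by
  have hn' : (2:ℝ) ≤ n := by exact_mod_cast hn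
  obtain ⟨s0, t1, ε, d, s, φ, ⟨tr, ht1, hdp, hφp, hd1, hφ1⟩, hε, hall⟩ := main_exists (a := (n:ℝ)-1) (by linarith)
  have h2 : 0 < Real.sqrt 2 := by positivity
  have h22 : Real.sqrt 2 * Real.sqrt 2 = 2 := Real.mul_self_sqrt (by norm_num)
  have hmem : ∀ t ∈ Ico 0 (t1+ε), t1 - t ∈ Ioc (-ε) t1 := fun t ht => ⟨by linarith [ht.2], by linarith [ht.1]⟩
  have habs : ∀ t ∈ Ico 0 (t1+ε), 0 < s (t1-t) + d (t1-t) ∧ 0 < s (t1-t) - d (t1-t) := by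
    intro t ht
    obtain ⟨-, -, -, h4, h5⟩ := hall _ (hmem t ht)
    have := abs_lt_of_sq_lt_sq (show d (t1-t)^2 < s (t1-t)^2 by linarith) h4.le
    rw [abs_lt] at this
    constructor <;> linarith [this.1, this.2]
  have hcos : ∀ p : ℝ, Real.cos (p - Real.pi - Real.pi/4) = -(Real.cos p + Real.sin p)/Real.sqrt 2 := by
    intro p
    rw [Real.cos_sub, Real.cos_sub_pi, Real.sin_sub_pi, Real.cos_pi_div_four, Real.sin_pi_div_four]
    have h3 : Real.sqrt 2 ^ 2 = 2 := by rw [sq]; exact h22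
    field_simp
    rw [h3]; ring
  have hsin : ∀ p : ℝ, Real.sin (p - Real.pi - Real.pi/4) = (Real.cos p - Real.sin p)/Real.sqrt 2 := by
    intro p
    rw [Real.sin_sub, Real.cos_sub_pi, Real.sin_sub_pi, Real.cos_pi_div_four, Real.sin_pi_div_four]
    have h3 : Real.sqrt 2 ^ 2 = 2 := by rw [sq]; exact h22
    field_simp
    rw [h3]; ring
  have hr : ∀ t, HasDerivAt (fun t : ℝ => t1 - t) (-1) t := fun t => by
    simpa using (hasDerivAt_id t).const_sub t1
  refine ⟨s t1, t1+ε, t1, fun t => (s (t1-t) + d (t1-t))/Real.sqrt 2, fun t => (s (t1-t) - d (t1-t))/Real.sqrt 2,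
    fun t => φ (t1-t) - Real.pi - Real.pi/4, tr.sp t1 ⟨ht1.le, le_rfl⟩, ⟨by linarith, ?_, ?_, ?_, ?_⟩, ⟨ht1, by linarith⟩, ?_, ?_, ?_, ?_⟩
  · simp [hd1]
  · simp [hd1]
  · simp [hφ1]
  · intro t ht
    obtain ⟨k1, k2, k3, k4, k5⟩ := hall _ (hmem t ht)
    obtain ⟨p1, p2⟩ := habs t ht
    have k1' : HasDerivAt (fun t => d (t1-t)) _ t := HasDerivAt.comp t k1 (hr t)
    have k2' : HasDerivAt (fun t => s (t1-t)) _ t := HasDerivAt.comp t k2 (hr t)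
    have k3' : HasDerivAt (fun t => φ (t1-t)) _ t := HasDerivAt.comp t k3 (hr t)
    refine ⟨div_pos p1 h2, div_pos p2 h2, ?_, ?_, ?_⟩
    · refine ((k2'.add k1').div_const (Real.sqrt 2)).congr_deriv ?_
      rw [hcos]; ring
    · refine ((k2'.sub k1').div_const (Real.sqrt 2)).congr_deriv ?_
      rw [hsin]; ring
    · refine ((k3'.sub_const Real.pi).sub_const (Real.pi/4)).congr_deriv ?_
      simp only [hcos, hsin, Kf]
      generalize s (t1-t) = S at *
      generalize d (t1-t) = D at *
      generalize Real.cos (φ (t1-t)) = C at *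
      generalize Real.sin (φ (t1-t)) = Q at *
      generalize (n:ℝ)-1 = A at *
      have q1 : S + D ≠ 0 := p1.ne'
      have q2 : S - D ≠ 0 := p2.ne'
      have e : S^2-D^2 = (S+D)*(S-D) := by ring
      rw [e]
      have h3 : Real.sqrt 2 ^ 2 = 2 := by rw [sq]; exact h22
      field_simp
      rw [h3]
      ring
  · simp [tr.d0]
  · simp only [sub_self, tr.φ0]; ring
  · intro t ht
    have ht' : t ∈ Ico 0 (t1+ε) := ⟨ht.1.le, by linarith [ht.2]⟩
    have := hdp (t1-t) ⟨by linarith [ht.2], by linarith [ht.1]⟩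
    exact ⟨div_pos (habs t ht').2 h2, div_lt_div_of_pos_right (by linarith) h2⟩
  · have hmono : ∀ u v, 0 ≤ u → u < v → v ≤ t1 → s u < s v := by
      intro u v h0 huv hv
      refine strict_mono_of_deriv huv (fun t ht => tr.hs t ⟨h0.trans ht.1, ht.2.trans hv⟩) (fun t ht => ?_)
      have := hφp t ⟨h0.trans_lt ht.1, ht.2.trans_le hv⟩
      exact Real.sin_pos_of_pos_of_lt_pi this.1 this.2
    intro u hu v hv huv
    simp only [Prod.mk.injEq] at huv
    obtain ⟨e1, e2⟩ := huv
    rw [div_left_inj' h2.ne'] at e1 e2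
    have e : s (t1-u) = s (t1-v) := by linarith
    rcases lt_trichotomy u v with h | h | h
    · have := hmono (t1-v) (t1-u) (by linarith [hv.2]) (by linarith) (by linarith [hu.1])
      linarith
    · exact h
    · have := hmono (t1-u) (t1-v) (by linarith [hu.2]) (by linarith) (by linarith [hv.1])
      linarith

theorem exists_geodesic_segment_orthogonal_to_diagonal (n : ℕ) (hn : 2 ≤ n) :
    ∃ (Rstar T t₁ : ℝ) (x y θ : ℝ → ℝ),
      0 < Rstar ∧ ShootingSol n Rstar T x y θ ∧ t₁ ∈ Set.Ioo 0 T ∧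
      x t₁ = y t₁ ∧ θ t₁ = -(5 * Real.pi / 4) ∧
      (∀ t ∈ Set.Ioo 0 t₁, 0 < y t ∧ y t < x t) ∧
      Set.InjOn (fun t => (x t, y t)) (Set.Icc 0 t₁) := by
  exact main_final n hn
end

section
/- Let m, n ≥ 2 be integers and let (x, y, θ) be a solution of the self-shrinker profile system on (a, b) such that cos θ(t) ≠ 0 for all t ∈ (a, b) (so the curve is a graph over the x-axis) and lim_{t→b} (x(t), y(t)) = (x_b, 0) with x_b > 0. Then the limits lim_{t→b} x'(t) and lim_{t→b} y'(t) exist, with lim_{t→b} x'(t) = 0 and lim_{t→b} y'(t) = −1; in particular the solution extends continuously to (a, b] and the curve meets the x-axis orthogonally. Analogously, if (x, y, θ) is a solution with sin θ(t) ≠ 0 for all t and lim_{t→b} (x(t), y(t)) = (0, y_b) with y_b > 0, then lim_{t→b} y'(t) = 0 and lim_{t→b} x'(t) = −1, so the curve meets the y-axis orthogonally. -/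
open Set Filter Topology

/-- `(x, y, θ)` solves the self-shrinker profile system
`x' = cos θ`, `y' = sin θ`,
`θ' = (x/2 − (m−1)/x)·sin θ + ((n−1)/y − y/2)·cos θ`, with `x, y > 0`, on the set `S`. -/
def SysSol (m n : ℕ) (x y θ : ℝ → ℝ) (S : Set ℝ) : Prop :=
  ∀ t ∈ S, 0 < x t ∧ 0 < y t ∧
    HasDerivAt x (Real.cos (θ t)) t ∧ HasDerivAt y (Real.sin (θ t)) t ∧
    HasDerivAt θ ((x t / 2 - ((m : ℝ) - 1) / x t) * Real.sin (θ t)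
      + (((n : ℝ) - 1) / y t - y t / 2) * Real.cos (θ t)) t

theorem barrier_aux (f f' : ℝ → ℝ) (p q k : ℝ)
    (hd : ∀ t ∈ Ico p q, HasDerivAt f (f' t) t) (h0 : k ≤ f p)
    (hb : ∀ t ∈ Ico p q, f t = k → 0 < f' t) : ∀ t ∈ Ico p q, k ≤ f t := by
  intro t ht
  have := image_le_of_deriv_right_lt_deriv_boundary' (f := fun _ => k) (f' := fun _ => 0)
    (a := p) (b := t) continuousOn_const (fun z _ => hasDerivWithinAt_const _ _ _)
    (B := f) (B' := f') h0
    (fun z hz => (hd z ⟨hz.1, hz.2.trans_lt ht.2⟩).continuousAt.continuousWithinAt)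
    (fun z hz => (hd z ⟨hz.1, hz.2.trans ht.2⟩).hasDerivWithinAt)
    (fun z hz h => hb z ⟨hz.1, hz.2.trans ht.2⟩ h.symm)
  exact this ⟨ht.1, le_rfl⟩

theorem sin_deriv_lower (ε M P N y s c : ℝ) (hε : 0 < ε) (hε1 : ε ≤ 1) (hN : 1 ≤ N)
    (hy : 0 < y) (hy1 : y ≤ 1) (hyM : y * (4 * (1 + M)) ≤ ε) (hP : |P| ≤ M)
    (hsc : s ^ 2 + c ^ 2 = 1) (h1 : -1 + ε ≤ s) (h2 : s ≤ 1 / 2) :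
    ε / 4 / y ≤ c * (P * s + (N / y - y / 2) * c) := by
  have hc : ε / 2 ≤ c ^ 2 := by nlinarith
  have hcs : |c * s| ≤ 1 := by rw [abs_le]; constructor <;> nlinarith [sq_nonneg (c - s), sq_nonneg (c + s)]
  have hM : |c * s * P| ≤ M := by
    rw [abs_mul]
    nlinarith [abs_nonneg (c * s), abs_nonneg P]
  have hM' := (abs_le.1 hM).1
  have hi : 1 / y ≤ N / y := by gcongr
  have hiM : 1 + M ≤ ε / 4 / y := by
    rw [le_div_iff₀ hy]; linarith
  have h1y : 1 ≤ 1 / y := by rw [le_div_iff₀ hy]; linarith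
  have e1 : ε / 4 / y = ε / 4 * (1 / y) := by ring
  rw [e1] at hiM ⊢
  have hQ : 1 / y - y / 2 ≤ N / y - y / 2 := by linarith
  have hQ0 : 0 ≤ 1 / y - y / 2 := by linarith
  have : ε / 2 * (1 / y - y / 2) ≤ c ^ 2 * (N / y - y / 2) :=
    mul_le_mul hc hQ hQ0 (sq_nonneg c)
  nlinarith

theorem half_aux (m n : ℕ) (hn : 2 ≤ n)
    (a b : ℝ) (hab : a < b) (x y θ : ℝ → ℝ)
    (hsol : SysSol m n x y θ (Ioo a b)) (xb : ℝ) (hxb : 0 < xb)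
    (hlim : Tendsto (fun t => (x t, y t)) (𝓝[Ioo a b] b) (𝓝 (xb, 0))) :
    Tendsto (fun t => Real.cos (θ t)) (𝓝[Ioo a b] b) (𝓝 0) ∧
        Tendsto (fun t => Real.sin (θ t)) (𝓝[Ioo a b] b) (𝓝 (-1)) := by
  rw [nhdsWithin_Ioo_eq_nhdsLT hab] at *
  have hx : Tendsto x (𝓝[<] b) (𝓝 xb) := (continuous_fst.tendsto _).comp hlim
  have hy : Tendsto y (𝓝[<] b) (𝓝 0) := (continuous_snd.tendsto _).comp hlim
  have hN : (1 : ℝ) ≤ (n : ℝ) - 1 := by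
    have : (2 : ℝ) ≤ n := by exact_mod_cast hn
    linarith
  suffices hs : Tendsto (fun t => Real.sin (θ t)) (𝓝[<] b) (𝓝 (-1)) by
    refine ⟨?_, hs⟩
    rw [tendsto_zero_iff_abs_tendsto_zero]
    have h : Tendsto (fun t => √(1 - Real.sin (θ t) ^ 2)) (𝓝[<] b) (𝓝 (√(1 - (-1) ^ 2))) :=
      ((hs.pow 2).const_sub 1).sqrt
    have e : √(1 - (-1 : ℝ) ^ 2) = 0 := by norm_num
    rw [e] at h
    refine h.congr fun t => ?_
    simp [Real.abs_cos_eq_sqrt_one_sub_sin_sq]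
  have key : ∀ ε : ℝ, 0 < ε → ε ≤ 1 → ∀ᶠ t in 𝓝[<] b, Real.sin (θ t) < -1 + ε := by
    intro ε hε hε1
    have hP : Tendsto (fun t => |x t / 2 - ((m : ℝ) - 1) / x t|) (𝓝[<] b)
        (𝓝 |xb / 2 - ((m : ℝ) - 1) / xb|) :=
      ((hx.div_const 2).sub (tendsto_const_nhds.div hx hxb.ne')).abs
    set M := |xb / 2 - ((m : ℝ) - 1) / xb| + 1 with hM
    have hM0 : 0 < M := by positivity
    have ev1 := hP.eventually (eventually_le_nhds (show _ < M by rw [hM]; linarith))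
    have ev2 := hy.eventually (eventually_le_nhds (show (0 : ℝ) < 1 by norm_num))
    have ev3 := hy.eventually (eventually_le_nhds (show (0 : ℝ) < ε / (4 * (1 + M)) by positivity))
    have ev4 : ∀ᶠ t in 𝓝[<] b, t ∈ Ioo a b := Ioo_mem_nhdsLT hab
    obtain ⟨T, hT, hTb⟩ := (mem_nhdsLT_iff_exists_Ioo_subset' hab).1
      (ev1.and (ev2.and (ev3.and ev4)))
    have hTb' : ∀ t ∈ Ioo T b, ε / 4 / y t ≤ Real.cos (θ t) *
        ((x t / 2 - ((m : ℝ) - 1) / x t) * Real.sin (θ t)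
      + (((n : ℝ) - 1) / y t - y t / 2) * Real.cos (θ t)) ∨
        Real.sin (θ t) < -1 + ε ∨ 1 / 2 < Real.sin (θ t) := by
      intro t ht
      obtain ⟨h1, h2, h3, h4⟩ := hTb ht
      by_contra! hcon
      refine absurd (sin_deriv_lower ε M _ _ _ _ _ hε hε1 hN (hsol t h4).2.1 h2 ?_ h1
        (Real.sin_sq_add_cos_sq _) hcon.2.1 hcon.2.2) (not_le.2 hcon.1)
      rwa [le_div_iff₀ (by positivity)] at h3
    have hI : ∀ t ∈ Ioo T b, t ∈ Ioo a b := fun t ht => (hTb ht).2.2.2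
    have hds : ∀ t ∈ Ioo T b, HasDerivAt (fun t => Real.sin (θ t)) (Real.cos (θ t) *
        ((x t / 2 - ((m : ℝ) - 1) / x t) * Real.sin (θ t)
      + (((n : ℝ) - 1) / y t - y t / 2) * Real.cos (θ t))) t :=
      fun t ht => (hsol t (hI t ht)).2.2.2.2.sin
    by_cases hall : ∀ t ∈ Ioo T b, Real.sin (θ t) < -1 + ε
    · filter_upwards [Ioo_mem_nhdsLT hT] with t ht using hall t ht
    exfalso
    push Not at hall
    obtain ⟨t0, ht0, hst0⟩ := hall
    have sub : ∀ p ∈ Ioo T b, ∀ t ∈ Ico p b, t ∈ Ioo T b :=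
      fun p hp t ht => ⟨hp.1.trans_le ht.1, ht.2⟩
    have bar : ∀ k, -1 + ε ≤ k → k ≤ 1 / 2 → ∀ p ∈ Ioo T b, k ≤ Real.sin (θ p) →
        ∀ t ∈ Ico p b, k ≤ Real.sin (θ t) := by
      intro k hk1 hk2 p hp hkp
      refine barrier_aux (fun t => Real.sin (θ t)) _ p b k
        (fun t ht => hds t (sub p hp t ht)) hkp ?_
      intro t ht hst
      have hst : Real.sin (θ t) = k := hst
      have hypos := (hsol t (hI t (sub p hp t ht))).2.1
      rcases hTb' t (sub p hp t ht) with h | h | h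
      · exact lt_of_lt_of_le (by positivity) h
      · linarith
      · linarith
    have hmem : ∀ p ∈ Ioo T b, ∀ᶠ t in 𝓝[<] b, t ∈ Ico p b := fun p hp =>
      Filter.mem_of_superset (Ioo_mem_nhdsLT hp.2) Ioo_subset_Ico_self
    -- sin stays at most 1/2
    have hup : ∀ t ∈ Ico t0 b, Real.sin (θ t) < 1 / 2 := by
      intro t1 ht1
      by_contra! hcon
      have ht1' := sub t0 ht0 t1 ht1
      have hge := fun hk => bar (1 / 2) hk le_rfl t1 ht1' hcon
      have hnn : ∀ t ∈ Ico t1 b, 0 ≤ Real.sin (θ t) := by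
        intro t ht
        have := bar 0 (by linarith) (by norm_num) t1 ht1' (by linarith) t ht
        exact this
      have hmono : MonotoneOn y (Ico t1 b) := by
        refine monotoneOn_of_hasDerivWithinAt_nonneg (f' := fun t => Real.sin (θ t)) (convex_Ico _ _)
          (fun t ht => (hsol t (hI t (sub t1 ht1' t ht))).2.2.2.1.continuousAt.continuousWithinAt)
          (fun t ht => (hsol t (hI t (sub t1 ht1' t (interior_subset ht)))).2.2.2.1.hasDerivWithinAt)
          (fun t ht => hnn t (interior_subset ht))
      have hy1 := (hsol t1 (hI t1 ht1')).2.1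
      have : y t1 ≤ 0 := ge_of_tendsto hy ((hmem t1 ht1').mono fun t ht =>
        hmono ⟨le_rfl, ht1.2⟩ ht ht.1)
      linarith
    have hlo := bar (-1 + ε) le_rfl
    have hlo' : ∀ t ∈ Ico t0 b, -1 + ε ≤ Real.sin (θ t) := by
      by_cases h : -1 + ε ≤ 1 / 2
      · exact hlo h t0 ht0 hst0
      · linarith
    have hdg : ∀ t ∈ Ico t0 b, HasDerivAt (fun t => Real.sin (θ t) + ε / 4 * Real.log (y t))
        (Real.cos (θ t) *
        ((x t / 2 - ((m : ℝ) - 1) / x t) * Real.sin (θ t)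
      + (((n : ℝ) - 1) / y t - y t / 2) * Real.cos (θ t)) +
        ε / 4 * (Real.sin (θ t) / y t)) t := by
      intro t ht
      have h := hsol t (hI t (sub t0 ht0 t ht))
      exact (hds t (sub t0 ht0 t ht)).add ((h.2.2.2.1.log h.2.1.ne').const_mul _)
    have hmono : MonotoneOn (fun t => Real.sin (θ t) + ε / 4 * Real.log (y t)) (Ico t0 b) := by
      refine monotoneOn_of_hasDerivWithinAt_nonneg (convex_Ico _ _)
        (fun t ht => (hdg t ht).continuousAt.continuousWithinAt)
        (fun t ht => (hdg t (interior_subset ht)).hasDerivWithinAt) ?_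
      intro t ht
      have ht := interior_subset ht
      have hypos := (hsol t (hI t (sub t0 ht0 t ht))).2.1
      rcases hTb' t (sub t0 ht0 t ht) with h | h | h
      · have e : ε / 4 * (Real.sin (θ t) / y t) = ε / 4 / y t * Real.sin (θ t) := by ring
        rw [e]
        have : 0 < ε / 4 / y t := by positivity
        nlinarith [Real.neg_one_le_sin (θ t)]
      · linarith [hlo' t ht]
      · linarith [hup t ht]
    have hypos : ∀ᶠ t in 𝓝[<] b, y t ∈ Ioi (0 : ℝ) := by
      filter_upwards [ev4] with t ht using (hsol t ht).2.1
    have hlog : Tendsto (fun t => Real.log (y t)) (𝓝[<] b) atBot :=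
      Real.tendsto_log_nhdsGT_zero.comp (tendsto_nhdsWithin_iff.2 ⟨hy, hypos⟩)
    have hlog' := hlog.const_mul_atBot (show 0 < ε / 4 by positivity)
    obtain ⟨t, h1, h2⟩ := ((hlog'.eventually (eventually_lt_atBot
      (Real.sin (θ t0) + ε / 4 * Real.log (y t0) - 1))).and (hmem t0 ht0)).exists
    have := hmono ⟨le_rfl, ht0.2⟩ h2 h2.1
    simp only at this
    linarith [Real.sin_le_one (θ t)]
  rw [tendsto_order]
  constructor
  · intro c hc
    exact Eventually.of_forall fun t => hc.trans_le (Real.neg_one_le_sin _)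
  · intro c hc
    filter_upwards [key (min (c + 1) 1) (lt_min (by linarith) one_pos) (min_le_right _ _)] with t ht
    linarith [min_le_left (c + 1) 1]

/-- a solution of the self-shrinker profile system on `(a, b)` which is a
graph over the `x`-axis (`cos θ ≠ 0`) and limits to a point `(x_b, 0)` with `x_b > 0`
on the `x`-axis satisfies `x' = cos θ → 0` and `y' = sin θ → −1` as `t → b`; in
particular it extends continuously and meets the `x`-axis orthogonally. Analogously for
the `y`-axis: if `sin θ ≠ 0` and `(x, y) → (0, y_b)` with `y_b > 0`, then `sin θ → 0`
and `cos θ → −1`. -/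
theorem profile_sol_meets_axes_orthogonally (m n : ℕ) (hm : 2 ≤ m) (hn : 2 ≤ n)
    (a b : ℝ) (hab : a < b) (x y θ : ℝ → ℝ)
    (hsol : SysSol m n x y θ (Ioo a b)) :
    ((∀ t ∈ Ioo a b, Real.cos (θ t) ≠ 0) →
      ∀ xb : ℝ, 0 < xb →
        Tendsto (fun t => (x t, y t)) (𝓝[Ioo a b] b) (𝓝 (xb, 0)) →
        Tendsto (fun t => Real.cos (θ t)) (𝓝[Ioo a b] b) (𝓝 0) ∧
        Tendsto (fun t => Real.sin (θ t)) (𝓝[Ioo a b] b) (𝓝 (-1))) ∧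
    ((∀ t ∈ Ioo a b, Real.sin (θ t) ≠ 0) →
      ∀ yb : ℝ, 0 < yb →
        Tendsto (fun t => (x t, y t)) (𝓝[Ioo a b] b) (𝓝 (0, yb)) →
        Tendsto (fun t => Real.sin (θ t)) (𝓝[Ioo a b] b) (𝓝 0) ∧
        Tendsto (fun t => Real.cos (θ t)) (𝓝[Ioo a b] b) (𝓝 (-1))) := by
  constructor
  · intro _ xb hxb hlim
    exact half_aux m n hn a b hab x y θ hsol xb hxb hlim
  · intro _ yb hyb hlim
    have hsol' : SysSol n m y x (fun t => Real.pi / 2 - θ t) (Ioo a b) := by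
      intro t ht
      obtain ⟨h1, h2, h3, h4, h5⟩ := hsol t ht
      simp only [Real.cos_pi_div_two_sub, Real.sin_pi_div_two_sub]
      refine ⟨h2, h1, h4, h3, ?_⟩
      refine (h5.const_sub (Real.pi / 2)).congr_deriv ?_
      ring
    have := half_aux n m hm a b hab y x _ hsol' yb hyb
      ((continuous_swap.tendsto ((0 : ℝ), yb)).comp hlim)
    simpa only [Real.cos_pi_div_two_sub, Real.sin_pi_div_two_sub] using this
end

section
/- Let m, n ≥ 2 be integers and let (x, y, θ) be a solution of the self-shrinker profile system on an open interval, and let t₀ be in that interval. If sin θ(t₀) = 0 and y(t₀) > √(2(n−1)), then y has a strict local maximum at t₀; if sin θ(t₀) = 0 and 0 < y(t₀) < √(2(n−1)), then y has a strict local minimum at t₀. In particular the function y − √(2(n−1)) has no positive local minima and no negative local maxima. Analogously, if cos θ(t₀) = 0 and x(t₀) > √(2(m−1)) then x has a strict local maximum at t₀, and if cos θ(t₀) = 0 and 0 < x(t₀) < √(2(m−1)) then x has a strict local minimum at t₀. -/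
open Set Filter Topology

lemma strict_min_aux (f g : ℝ → ℝ) (t₀ c : ℝ) (hf : ∀ᶠ t in 𝓝 t₀, HasDerivAt f (g t) t)
    (h0 : g t₀ = 0) (hg : HasDerivAt g c t₀) (hc : 0 < c) :
    ∀ᶠ t in 𝓝[≠] t₀, f t₀ < f t := by
  have h1 : ∀ᶠ t in 𝓝[≠] t₀, 0 < slope g t₀ t :=
    (hasDerivAt_iff_tendsto_slope.1 hg).eventually (lt_mem_nhds hc)
  rw [eventually_nhdsWithin_iff] at h1
  obtain ⟨ε, hε, hb⟩ := Metric.eventually_nhds_iff.1 (hf.and h1)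
  rw [eventually_nhdsWithin_iff]
  refine Metric.eventually_nhds_iff.2 ⟨ε, hε, fun t ht hne => ?_⟩
  rw [Real.dist_eq, abs_lt] at ht
  have hd : ∀ s, t₀ - ε < s → s < t₀ + ε → HasDerivAt f (g s) s := fun s h1 h2 =>
    (hb (by rw [Real.dist_eq, abs_lt]; constructor <;> linarith)).1
  have hs : ∀ s, t₀ - ε < s → s < t₀ + ε → s ≠ t₀ → 0 < (g s) / (s - t₀) := fun s h1 h2 h3 => by
    have := (hb (y := s) (by rw [Real.dist_eq, abs_lt]; constructor <;> linarith)).2 h3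
    rwa [slope_def_field, h0, sub_zero] at this
  rcases lt_or_gt_of_ne (show t ≠ t₀ from hne) with h | h
  · obtain ⟨s, hs1, hs2⟩ := exists_hasDerivAt_eq_slope f g h
      (fun s hs => (hd s (by linarith [hs.1]) (by linarith [hs.2])).continuousAt.continuousWithinAt)
      (fun s hs => hd s (by linarith [hs.1]) (by linarith [hs.2]))
    have h3 := hs s (by linarith [hs1.1]) (by linarith [hs1.2]) hs1.2.ne
    have h4 : g s < 0 := by
      by_contra h5
      exact absurd h3 (not_lt.2 (div_nonpos_of_nonneg_of_nonpos (not_lt.1 h5) (by linarith [hs1.2])))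
    rw [hs2, div_lt_iff₀ (by linarith)] at h4
    linarith
  · obtain ⟨s, hs1, hs2⟩ := exists_hasDerivAt_eq_slope f g h
      (fun s hs => (hd s (by linarith [hs.1]) (by linarith [hs.2])).continuousAt.continuousWithinAt)
      (fun s hs => hd s (by linarith [hs.1]) (by linarith [hs.2]))
    have h3 := hs s (by linarith [hs1.1]) (by linarith [hs1.2]) hs1.1.ne.symm
    have h4 : 0 < g s := (div_pos_iff_of_pos_right (by linarith [hs1.1])).1 h3
    rw [hs2, lt_div_iff₀ (by linarith)] at h4
    linarith

lemma strict_max_aux (f g : ℝ → ℝ) (t₀ c : ℝ) (hf : ∀ᶠ t in 𝓝 t₀, HasDerivAt f (g t) t)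
    (h0 : g t₀ = 0) (hg : HasDerivAt g c t₀) (hc : c < 0) :
    ∀ᶠ t in 𝓝[≠] t₀, f t < f t₀ := by
  have := strict_min_aux (fun t => - f t) (fun t => - g t) t₀ (-c)
    (hf.mono fun t h => h.fun_neg) (by simp [h0]) hg.fun_neg (by linarith)
  exact this.mono fun t h => neg_lt_neg_iff.1 h

lemma coef_neg (k z : ℝ) (hz : 0 < z) (h : Real.sqrt (2 * k) < z) : k / z - z / 2 < 0 := by
  have h1 := (Real.sqrt_lt' hz).1 h
  rw [sub_neg, div_lt_iff₀ hz]
  nlinarith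

lemma coef_pos (k z : ℝ) (hz : 0 < z) (h : z < Real.sqrt (2 * k)) : 0 < k / z - z / 2 := by
  have h1 := (Real.lt_sqrt hz.le).1 h
  rw [sub_pos, lt_div_iff₀ hz]
  nlinarith

/-- at a critical point `t₀` of `y` (i.e. `sin θ(t₀) = 0`), `y` has a strict
local maximum if `y(t₀) > √(2(n−1))` and a strict local minimum if `y(t₀) < √(2(n−1))`;
in particular `y − √(2(n−1))` has no positive local minima and no negative local maxima.
Analogously for `x` at critical points of `x` (where `cos θ(t₀) = 0`) with the value
`√(2(m−1))`. -/
theorem no_positive_minima_no_negative_maxima (m n : ℕ) (hm : 2 ≤ m) (hn : 2 ≤ n)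
    (a b t₀ : ℝ) (x y θ : ℝ → ℝ)
    (hsol : SysSol m n x y θ (Ioo a b)) (ht₀ : t₀ ∈ Ioo a b) :
    (Real.sin (θ t₀) = 0 → Real.sqrt (2 * ((n : ℝ) - 1)) < y t₀ →
      ∀ᶠ t in 𝓝[≠] t₀, y t < y t₀) ∧
    (Real.sin (θ t₀) = 0 → y t₀ < Real.sqrt (2 * ((n : ℝ) - 1)) →
      ∀ᶠ t in 𝓝[≠] t₀, y t₀ < y t) ∧
    (Real.cos (θ t₀) = 0 → Real.sqrt (2 * ((m : ℝ) - 1)) < x t₀ →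
      ∀ᶠ t in 𝓝[≠] t₀, x t < x t₀) ∧
    (Real.cos (θ t₀) = 0 → x t₀ < Real.sqrt (2 * ((m : ℝ) - 1)) →
      ∀ᶠ t in 𝓝[≠] t₀, x t₀ < x t) := by
  have hnh : Ioo a b ∈ 𝓝 t₀ := Ioo_mem_nhds ht₀.1 ht₀.2
  have hfx : ∀ᶠ t in 𝓝 t₀, HasDerivAt x (Real.cos (θ t)) t := by
    filter_upwards [hnh] with t ht using (hsol t ht).2.2.1
  have hfy : ∀ᶠ t in 𝓝 t₀, HasDerivAt y (Real.sin (θ t)) t := by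
    filter_upwards [hnh] with t ht using (hsol t ht).2.2.2.1
  obtain ⟨hx, hy, -, -, hθ⟩ := hsol t₀ ht₀
  have hsc := Real.sin_sq_add_cos_sq (θ t₀)
  have hy' : Real.sin (θ t₀) = 0 →
      HasDerivAt (fun t => Real.sin (θ t)) (((n : ℝ) - 1) / y t₀ - y t₀ / 2) t₀ := fun h => by
    convert hθ.sin using 1
    rw [h] at hsc ⊢
    linear_combination (-(((n : ℝ) - 1) / y t₀ - y t₀ / 2)) * hsc
  have hx' : Real.cos (θ t₀) = 0 →
      HasDerivAt (fun t => Real.cos (θ t)) (((m : ℝ) - 1) / x t₀ - x t₀ / 2) t₀ := fun h => by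
    convert hθ.cos using 1
    rw [h] at hsc ⊢
    linear_combination (-(((m : ℝ) - 1) / x t₀ - x t₀ / 2)) * hsc
  exact ⟨fun h h2 => strict_max_aux _ _ _ _ hfy h (hy' h) (coef_neg _ _ hy h2),
    fun h h2 => strict_min_aux _ _ _ _ hfy h (hy' h) (coef_pos _ _ hy h2),
    fun h h2 => strict_max_aux _ _ _ _ hfx h (hx' h) (coef_neg _ _ hx h2),
    fun h h2 => strict_min_aux _ _ _ _ hfx h (hx' h) (coef_pos _ _ hx h2)⟩
end
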